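/- (Korn–Maxwell–Sobolev of the second kind, symmetric part, 1 < p < 3) Let Q = (0,1)³ and 1 < p < 3. There is c = c(p) > 0 such that for all F ∈ C^∞(closure of Q; ℝ^{3×3}) satisfying ∫_Q ⟨F, Π⟩ dx = 0 for every skew-symmetric Π ∈ ℝ^{3×3}, one has ‖F‖_{L^{3p/(3−p)}(Q)} ≤ c(‖F^sym‖_{L^{3p/(3−p)}(Q)} + ‖curl F‖_{Lᵖ(Q)}). -/

import Mathlib

open MeasureTheory
open scoped ENNReal

noncomputable def pd (j : Fin 3) (f : (Fin 3 → ℝ) → ℝ) (x : Fin 3 → ℝ) : ℝ :=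
  fderiv ℝ f x (Pi.single j 1)

/-- The row-wise curl of a matrix field `F : ℝ³ → ℝ^{3×3}`. -/
noncomputable def mcurl (F : (Fin 3 → ℝ) → Fin 3 → Fin 3 → ℝ) (x : Fin 3 → ℝ) :
    Fin 3 → Fin 3 → ℝ :=
  fun i => ![pd 1 (fun y => F y i 2) x - pd 2 (fun y => F y i 1) x,
             pd 2 (fun y => F y i 0) x - pd 0 (fun y => F y i 2) x,
             pd 0 (fun y => F y i 1) x - pd 1 (fun y => F y i 0) x]

/-- The open unit cube `Q = (0,1)³`. -/
def Q3 : Set (Fin 3 → ℝ) := {x | ∀ j, x j ∈ Set.Ioo (0 : ℝ) 1}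

namespace KMS

/-- the truncated inverse appearing in the derivative of the Bellman function -/
noncomputable def mm (u α : ℝ) : ℝ := if |α| ≤ |u| then α else u ^ 2 / α

lemma mm_abs (u α : ℝ) : mm |u| α = mm u α := by simp [mm]

lemma mm_neg (u α : ℝ) : mm u (-α) = - mm u α := by
  unfold mm; simp only [abs_neg]; split_ifs <;> simp [div_neg]

lemma mm_lip_u (u u' α : ℝ) : |mm u α - mm u' α| ≤ 2 * |u - u'| := by
  wlog hα : 0 ≤ α generalizing α
  · have := this (-α) (by linarith)
    rw [mm_neg, mm_neg] at this
    rw [← abs_neg]; convert this using 2; ring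
  rw [← mm_abs u, ← mm_abs u']
  refine le_trans ?_ (mul_le_mul_of_nonneg_left (abs_abs_sub_abs_le_abs_sub u u') zero_le_two)
  have h1 := abs_nonneg u
  have h2 := abs_nonneg u'
  generalize |u| = s at *
  generalize |u'| = t at *
  wlog hst : t ≤ s generalizing s t
  · rw [abs_sub_comm, abs_sub_comm s t]; exact this t h2 s h1 (by linarith)
  rw [abs_of_nonneg (sub_nonneg.2 hst)]
  unfold mm
  rw [abs_of_nonneg hα, abs_of_nonneg h1, abs_of_nonneg h2]
  split_ifs with a b b
  · simp; linarith
  · have : 0 < α := by linarith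
    have e : α - t ^ 2 / α = (α - t) * ((α + t) / α) := by field_simp; ring
    have : (α + t) / α ≤ 2 := by rw [div_le_iff₀ this]; linarith
    have h3 : 0 ≤ (α + t) / α := by positivity
    rw [e, abs_of_nonneg (mul_nonneg (by linarith) h3)]
    nlinarith
  · linarith
  · have : 0 < α := by linarith
    have e : s ^ 2 / α - t ^ 2 / α = (s - t) * ((s + t) / α) := by field_simp; ring
    have : (s + t) / α ≤ 2 := by rw [div_le_iff₀ this]; linarith
    have h3 : 0 ≤ (s + t) / α := by positivity
    rw [e, abs_of_nonneg (mul_nonneg (by linarith) h3)]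
    nlinarith

lemma mm_lip_α (u α α' : ℝ) : |mm u α - mm u α'| ≤ |α - α'| := by
  rw [← mm_abs u α, ← mm_abs u α']
  have h1 := abs_nonneg u
  generalize |u| = s at *
  have key : ∀ a b : ℝ, 0 ≤ b → b ≤ a → |mm s a - mm s b| ≤ a - b := by
    intro a b hb hab
    unfold mm
    rw [abs_of_nonneg hb, abs_of_nonneg (hb.trans hab), abs_of_nonneg h1]
    split_ifs with x y y
    · rw [abs_of_nonneg]; linarith
    · linarith
    · have ha : 0 < a := by linarith
      have hs : s ^ 2 / a ≤ a := by rw [div_le_iff₀ ha]; nlinarith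
      have : 2 * s - a ≤ s ^ 2 / a := by rw [le_div_iff₀ ha]; nlinarith [sq_nonneg (s - a)]
      rw [abs_le]; constructor <;> linarith
    · have ha : 0 < a := by linarith
      have hb : 0 < b := by linarith
      have e : s ^ 2 / a - s ^ 2 / b = - ((a - b) * (s ^ 2 / (a * b))) := by field_simp; ring
      have : s ^ 2 / (a * b) ≤ 1 := by rw [div_le_one (by positivity)]; nlinarith
      have h3 : 0 ≤ s ^ 2 / (a * b) := by positivity
      rw [e, abs_neg, abs_of_nonneg (mul_nonneg (by linarith) h3)]
      nlinarith
  have key0 : ∀ a : ℝ, 0 ≤ a → |mm s a| ≤ a := by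
    intro a ha
    have := key a 0 le_rfl ha
    simpa [mm, h1] using this
  rcases le_total 0 α with ha | ha <;> rcases le_total 0 α' with hb | hb
  · rcases le_total α' α with h | h
    · rw [abs_of_nonneg (sub_nonneg.2 h)]; exact key _ _ hb h
    · rw [abs_sub_comm, abs_sub_comm α, abs_of_nonneg (sub_nonneg.2 h)]; exact key _ _ ha h
  · have := key0 α ha
    have h2 := key0 (-α') (by linarith)
    rw [mm_neg, abs_neg] at h2
    rw [abs_of_nonneg (by linarith : 0 ≤ α - α')]
    exact (abs_sub _ _).trans (by linarith)
  · have := key0 α' hb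
    have h2 := key0 (-α) (by linarith)
    rw [mm_neg, abs_neg] at h2
    rw [abs_of_nonpos (by linarith : α - α' ≤ 0)]
    exact (abs_sub _ _).trans (by linarith)
  · have e : |mm s α - mm s α'| = |mm s (-α) - mm s (-α')| := by
      rw [mm_neg, mm_neg, ← abs_neg]; congr 1; ring
    rw [e]
    rcases le_total α' α with h | h
    · rw [abs_of_nonneg (sub_nonneg.2 h), abs_sub_comm]
      refine (key _ _ ?_ ?_).trans ?_ <;> linarith
    · rw [abs_of_nonpos (sub_nonpos.2 h)]
      refine (key _ _ ?_ ?_).trans ?_ <;> linarith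

lemma spow_key {p : ℝ} (hp : 2 ≤ p) {a b : ℝ} (hb : 0 ≤ b) (hab : b ≤ a) :
    a * a ^ (p - 2) - b * b ^ (p - 2) ≤ (p - 1) * a ^ (p - 2) * (a - b) := by
  rcases hb.eq_or_lt with rfl | hb'
  · have : 0 ≤ a * a ^ (p - 2) := by positivity
    nlinarith
  have ha : 0 < a := by linarith
  have h := one_add_mul_self_le_rpow_one_add (s := b / a - 1) (p := p - 1)
    (by have : 0 ≤ b / a := by positivity
        linarith) (by linarith)
  rw [show 1 + (b / a - 1) = b / a by ring, Real.div_rpow hb ha.le] at h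
  have e1 : ∀ c : ℝ, 0 < c → c ^ (p - 1) = c * c ^ (p - 2) := by
    intro c hc
    rw [show p - 1 = 1 + (p - 2) by ring, Real.rpow_add hc, Real.rpow_one]
  rw [e1 b hb', e1 a ha, le_div_iff₀ (by positivity)] at h
  have e : (1 + (p - 1) * (b / a - 1)) * (a * a ^ (p - 2)) =
     a * a ^ (p - 2) + (p - 1) * (b - a) * a ^ (p - 2) := by field_simp
  rw [e] at h
  linarith

lemma spow_lip {p : ℝ} (hp : 2 ≤ p) (a b : ℝ) :
    |a * |a| ^ (p - 2) - b * |b| ^ (p - 2)| ≤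
      (p - 1) * (|a| ^ (p - 2) + |b| ^ (p - 2)) * |a - b| := by
  have hpos : ∀ c : ℝ, 0 ≤ |c| ^ (p - 2) := fun c => by positivity
  have key : ∀ a b : ℝ, 0 ≤ b → b ≤ a → |a * |a| ^ (p - 2) - b * |b| ^ (p - 2)| ≤
      (p - 1) * (|a| ^ (p - 2) + |b| ^ (p - 2)) * |a - b| := by
    intro a b hb hab
    have ha := hb.trans hab
    have h1 := spow_key hp hb hab
    have h2 : b * b ^ (p - 2) ≤ a * a ^ (p - 2) :=
      mul_le_mul hab (Real.rpow_le_rpow hb hab (by linarith)) (by positivity) ha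
    rw [abs_of_nonneg ha, abs_of_nonneg hb, abs_of_nonneg (sub_nonneg.2 hab), abs_of_nonneg (by linarith)]
    have h3 : 0 ≤ (p - 1) * b ^ (p - 2) * (a - b) :=
      mul_nonneg (mul_nonneg (by linarith) (by positivity)) (by linarith)
    linarith
  have key2 : ∀ a b : ℝ, 0 ≤ a → 0 ≤ b → |a * |a| ^ (p - 2) + b * |b| ^ (p - 2)| ≤
      (p - 1) * (|a| ^ (p - 2) + |b| ^ (p - 2)) * |a + b| := by
    intro a b ha hb
    rw [abs_of_nonneg ha, abs_of_nonneg hb, abs_of_nonneg (by positivity), abs_of_nonneg (by positivity)]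
    have h1 : 0 ≤ a ^ (p - 2) := by positivity
    have h2 : 0 ≤ b ^ (p - 2) := by positivity
    have h3 : 0 ≤ (p - 2) * ((a ^ (p - 2) + b ^ (p - 2)) * (a + b)) := mul_nonneg (by linarith) (by positivity)
    nlinarith [mul_nonneg h1 hb, mul_nonneg h2 ha]
  rcases le_total 0 a with ha | ha <;> rcases le_total 0 b with hb | hb
  · rcases le_total b a with h | h
    · exact key a b hb h
    · have := key b a ha h
      rwa [abs_sub_comm, add_comm, abs_sub_comm b] at this
  · have := key2 a (-b) ha (by linarith)
    simpa [abs_neg, ← sub_eq_add_neg] using this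
  · have := key2 (-a) b (by linarith) hb
    rw [← abs_neg, ← abs_neg (a - b)]
    simpa [abs_neg, sub_eq_add_neg, add_comm] using this
  · rcases le_total b a with h | h
    · have := key (-b) (-a) (by linarith) (by linarith)
      simp only [abs_neg] at this
      rw [add_comm (|a| ^ _)]
      convert this using 2 <;> [skip; congr 1] <;> ring
    · have := key (-a) (-b) (by linarith) (by linarith)
      simp only [abs_neg] at this
      rw [← abs_neg, ← abs_neg (a - b)]
      convert this using 2 <;> [skip; congr 1] <;> ring

lemma spow_same_sign {p : ℝ} (hp : 2 ≤ p) (a b : ℝ) :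
    (a * |a| ^ (p - 2) - b * |b| ^ (p - 2)) * (a - b) =
      |a * |a| ^ (p - 2) - b * |b| ^ (p - 2)| * |a - b| := by
  have mono : ∀ a b : ℝ, b ≤ a → b * |b| ^ (p - 2) ≤ a * |a| ^ (p - 2) := by
    intro a b h
    have key : ∀ a b : ℝ, 0 ≤ b → b ≤ a → b * |b| ^ (p - 2) ≤ a * |a| ^ (p - 2) := by
      intro a b hb hab
      have ha := hb.trans hab
      rw [abs_of_nonneg ha, abs_of_nonneg hb]
      exact mul_le_mul hab (Real.rpow_le_rpow hb hab (by linarith)) (by positivity) ha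
    have hpos : ∀ c : ℝ, 0 ≤ |c| ^ (p - 2) := fun c => by positivity
    rcases le_total 0 b with hb | hb
    · exact key a b hb h
    rcases le_total 0 a with ha | ha
    · nlinarith [mul_nonneg ha (hpos a), mul_nonneg (neg_nonneg.2 hb) (hpos b)]
    · have := key (-b) (-a) (by linarith) (by linarith)
      simp only [abs_neg] at this
      linarith
  symm
  rw [← abs_mul]
  apply abs_of_nonneg
  rcases le_total b a with h | h
  · exact mul_nonneg (by linarith [mono a b h]) (by linarith)
  · exact mul_nonneg_of_nonpos_of_nonpos (by linarith [mono b a h]) (by linarith)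

lemma first_term {p : ℝ} (hp : 2 ≤ p) (u u' α α' : ℝ) :
    (u ^ 2 - u' ^ 2) * ((max |u'| |α'|) ^ (p - 2) - (max |u| |α|) ^ (p - 2)) ≤
      2 * |u - u'| * |α * |α| ^ (p - 2) - α' * |α'| ^ (p - 2)| := by
  wlog h : |u'| ≤ |u| generalizing u u' α α'
  · have := this u' u α' α (by linarith)
    rw [abs_sub_comm, abs_sub_comm (α * _)]
    linarith
  have hsq : u' ^ 2 ≤ u ^ 2 := sq_le_sq.2 h
  rcases le_total ((max |u'| |α'|) ^ (p - 2)) ((max |u| |α|) ^ (p - 2)) with hN | hN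
  · exact le_trans (mul_nonpos_of_nonneg_of_nonpos (by linarith) (by linarith)) (by positivity)
  rcases hN.eq_or_lt with hN | hN
  · rw [hN]; simp; positivity
  have hM : max |u| |α| < max |u'| |α'| := by
    by_contra hc
    push Not at hc
    have := Real.rpow_le_rpow (by positivity) hc (by linarith : 0 ≤ p - 2)
    linarith
  have hM' : max |u'| |α'| = |α'| := by
    rcases max_choice |u'| |α'| with h1 | h1
    · rw [h1] at hM
      have := le_max_left |u| |α|
      linarith
    · exact h1
  rw [hM'] at hM hN ⊢
  set M := max |u| |α| with hMdef
  have hM0 : 0 ≤ M := by positivity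
  have huM : |u| ≤ M := le_max_left _ _
  have hαM : |α| ≤ M := le_max_right _ _
  have hr := abs_abs_sub_abs_le_abs_sub (α' * |α'| ^ (p - 2)) (α * |α| ^ (p - 2))
  have hr := (le_abs_self _).trans hr
  rw [abs_mul, abs_mul, abs_of_nonneg (by positivity : 0 ≤ |α'| ^ (p - 2)),
    abs_of_nonneg (by positivity : 0 ≤ |α| ^ (p - 2)), abs_sub_comm] at hr
  have e : u ^ 2 - u' ^ 2 ≤ |u - u'| * (2 * |u|) := by
    have : u ^ 2 - u' ^ 2 = (u - u') * (u + u') := by ring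
    rw [this]
    refine (le_abs_self _).trans ?_
    rw [abs_mul]
    gcongr
    exact (abs_add_le _ _).trans (by linarith)
  have h5 : |u| * (|α'| ^ (p - 2) - M ^ (p - 2)) ≤ |α * |α| ^ (p - 2) - α' * |α'| ^ (p - 2)| := by
    refine le_trans ?_ hr
    have h6 : |α| * |α| ^ (p - 2) ≤ M * M ^ (p - 2) :=
      mul_le_mul hαM (Real.rpow_le_rpow (abs_nonneg _) hαM (by linarith)) (by positivity) hM0
    have h7 : M * |α'| ^ (p - 2) ≤ |α'| * |α'| ^ (p - 2) :=
      mul_le_mul_of_nonneg_right hM.le (by positivity)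
    nlinarith
  calc _ ≤ |u - u'| * (2 * |u|) * (|α'| ^ (p - 2) - M ^ (p - 2)) :=
        mul_le_mul_of_nonneg_right e (by linarith)
    _ = 2 * |u - u'| * (|u| * (|α'| ^ (p - 2) - M ^ (p - 2))) := by ring
    _ ≤ _ := mul_le_mul_of_nonneg_left h5 (by positivity)

lemma bell_mono {p : ℝ} (hp : 2 ≤ p) {k₁ k₂ : ℝ} (h₂ : 0 ≤ k₂) (h₂' : k₂ ≤ 1)
    (h₁ : 9 * (p - 1) + k₂ ≤ k₁) (u u' α α' : ℝ) :
    2 * |u - u'| * |α * |α| ^ (p - 2) - α' * |α'| ^ (p - 2)| ≤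
    (u - u') * (2 * u * (max |u| |α|) ^ (p - 2) - 2 * u' * (max |u'| |α'|) ^ (p - 2)) +
    (α * |α| ^ (p - 2) - α' * |α'| ^ (p - 2)) *
      ((k₁ * α + k₂ * mm u α) - (k₁ * α' + k₂ * mm u' α')) := by
  have f1 := first_term hp u u' α α'
  have f2 := spow_lip hp α α'
  have f3 := spow_same_sign hp α α'
  have f4 : |mm u α - mm u' α'| ≤ 2 * |u - u'| + |α - α'| := by
    have := abs_sub_le (mm u α) (mm u' α) (mm u' α')
    linarith [mm_lip_u u u' α, mm_lip_α u' α α']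
  set v := α * |α| ^ (p - 2)
  set v' := α' * |α'| ^ (p - 2)
  have g1 : |α| ^ (p - 2) ≤ (max |u| |α|) ^ (p - 2) :=
    Real.rpow_le_rpow (abs_nonneg _) (le_max_right _ _) (by linarith)
  have g2 : |α'| ^ (p - 2) ≤ (max |u'| |α'|) ^ (p - 2) :=
    Real.rpow_le_rpow (abs_nonneg _) (le_max_right _ _) (by linarith)
  set N := (max |u| |α|) ^ (p - 2)
  set N' := (max |u'| |α'|) ^ (p - 2)
  have hN : 0 ≤ N := by positivity
  have hN' : 0 ≤ N' := by positivity
  have e1 : (u - u') * (2 * u * N - 2 * u' * N') =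
      |u - u'| ^ 2 * (N + N') - (u ^ 2 - u' ^ 2) * (N' - N) := by rw [sq_abs]; ring
  have e2 : (v - v') * ((k₁ * α + k₂ * mm u α) - (k₁ * α' + k₂ * mm u' α')) =
      k₁ * ((v - v') * (α - α')) + k₂ * ((v - v') * (mm u α - mm u' α')) := by ring
  rw [e1, e2, f3]
  have f5 : -(|v - v'| * (2 * |u - u'| + |α - α'|)) ≤ (v - v') * (mm u α - mm u' α') := by
    have h := neg_abs_le ((v - v') * (mm u α - mm u' α'))
    rw [abs_mul] at h
    have := mul_le_mul_of_nonneg_left f4 (abs_nonneg (v - v'))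
    linarith
  have hX := abs_nonneg (u - u')
  have hY := abs_nonneg (α - α')
  have hZ := abs_nonneg (v - v')
  set X := |u - u'|
  set Y := |α - α'|
  set Z := |v - v'|
  have f6 : Z ≤ (p - 1) * (N + N') * Y := by
    refine f2.trans ?_
    gcongr
    linarith
  have f7 : 6 * X * Z ≤ X ^ 2 * (N + N') + 9 * (p - 1) * (Z * Y) := by
    rcases (add_nonneg hN hN').eq_or_lt with h0 | h0
    · have : Z = 0 := by
        apply le_antisymm _ hZ
        rw [← h0] at f6; simpa using f6
      rw [this, ← h0]; simp
    · have : 6 * X * Z * (N + N') ≤ (X ^ 2 * (N + N') + 9 * (p - 1) * (Z * Y)) * (N + N') := by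
        have := mul_le_mul_of_nonneg_left f6 hZ
        nlinarith [sq_nonneg (X * (N + N') - 3 * Z)]
      exact le_of_mul_le_mul_right this h0
  have f8 := mul_le_mul_of_nonneg_left f5 h₂
  have f9 : (9 * (p - 1) + k₂) * (Z * Y) ≤ k₁ * (Z * Y) :=
    mul_le_mul_of_nonneg_right h₁ (by positivity)
  have f10 : k₂ * (Z * X) ≤ Z * X := by nlinarith [mul_nonneg hZ hX]
  nlinarith

end KMS

namespace KMS

open Filter Topology

/-- Bellman function -/
noncomputable def bell (p q K u v : ℝ) : ℝ :=
  u ^ 2 * (max |u| (|v| ^ (q - 1))) ^ (p - 2) - (1 - 2 / p) * (max |u| (|v| ^ (q - 1))) ^ p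
    + K * |v| ^ q

noncomputable def bell1 (p q u v : ℝ) : ℝ := 2 * u * (max |u| (|v| ^ (q - 1))) ^ (p - 2)

noncomputable def bell2 (q K u v : ℝ) : ℝ :=
  (K * q - (2 - q)) * (v * |v| ^ (q - 2)) + (2 - q) * mm u (v * |v| ^ (q - 2))

section
variable {p q : ℝ}

lemma sq_mul_rpow (hp : 2 ≤ p) (u : ℝ) : u ^ 2 * |u| ^ (p - 2) = |u| ^ p := by
  rcases eq_or_ne u 0 with rfl | hu
  · rw [abs_zero, Real.zero_rpow (by linarith : p ≠ 0)]; simp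
  · rw [← sq_abs, ← Real.rpow_natCast, ← Real.rpow_add (by positivity)]; congr 1; push_cast; ring

lemma mul_rpow_two (q v : ℝ) (hq : 1 < q) : |v * |v| ^ (q - 2)| = |v| ^ (q - 1) := by
  rw [abs_mul, abs_of_nonneg (by positivity : 0 ≤ |v| ^ (q-2))]
  rcases eq_or_ne v 0 with rfl | hu
  · rw [abs_zero, Real.zero_rpow (by linarith : q - 1 ≠ 0)]; simp
  · nth_rewrite 1 [← Real.rpow_one |v|]
    rw [← Real.rpow_add (by positivity)]; congr 1; ring

lemma alpha_p (hpq : p.HolderConjugate q) (v : ℝ) : (|v| ^ (q - 1)) ^ p = |v| ^ q := by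
  rw [← Real.rpow_mul (abs_nonneg _)]; congr 1
  have := hpq.symm.sub_one_mul_conj
  linarith

lemma alpha_pm2 (hpq : p.HolderConjugate q) (v : ℝ) : (|v| ^ (q - 1)) ^ (p - 2) = |v| ^ (2 - q) := by
  rw [← Real.rpow_mul (abs_nonneg _)]; congr 1
  have := hpq.symm.sub_one_mul_conj
  nlinarith

lemma alpha_inv (hpq : p.HolderConjugate q) (v : ℝ) :
    (v * |v| ^ (q - 2)) * |v * |v| ^ (q - 2)| ^ (p - 2) = v := by
  rw [mul_rpow_two q v hpq.symm.lt, alpha_pm2 hpq]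
  rcases eq_or_ne v 0 with rfl | hu
  · simp
  · rw [mul_assoc, ← Real.rpow_add (by positivity)]; simp

lemma bell_II (hp : 2 ≤ p) {K u v : ℝ} (h : |v| ^ (q - 1) ≤ |u|) :
    bell p q K u v = 2 / p * |u| ^ p + K * |v| ^ q := by
  unfold bell; rw [max_eq_left h, sq_mul_rpow hp]; ring

lemma bell_I (hpq : p.HolderConjugate q) {K u v : ℝ} (h : |u| ≤ |v| ^ (q - 1)) :
    bell p q K u v = u ^ 2 * |v| ^ (2 - q) + (K - (1 - 2 / p)) * |v| ^ q := by
  unfold bell; rw [max_eq_right h, alpha_pm2 hpq, alpha_p hpq]; ring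

lemma bell_nonneg (hp : 2 ≤ p) (hpq : p.HolderConjugate q) {K : ℝ} (hK : 1 ≤ K) (u v : ℝ) :
    0 ≤ bell p q K u v := by
  rcases le_total (|v| ^ (q - 1)) |u| with h | h
  · rw [bell_II hp h]; positivity
  · rw [bell_I hpq h]
    have : 0 ≤ 2 / p := by positivity
    have : 0 ≤ K - (1 - 2 / p) := by linarith
    positivity

lemma bell_le (hp : 2 ≤ p) (hpq : p.HolderConjugate q) {K : ℝ} (hK : 1 ≤ K) (u v : ℝ) :
    bell p q K u v ≤ (1 + K) * (|u| ^ p + |v| ^ q) := by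
  have h1 : 0 ≤ |u| ^ p := by positivity
  have h2 : 0 ≤ |v| ^ q := by positivity
  have hp2 : 2 / p ≤ 1 := by rw [div_le_one (by linarith)]; exact hp
  rcases le_total (|v| ^ (q - 1)) |u| with h | h
  · rw [bell_II hp h]; nlinarith
  · rw [bell_I hpq h]
    have : u ^ 2 * |v| ^ (2 - q) ≤ |v| ^ q := by
      rw [← alpha_pm2 hpq, ← alpha_p hpq]
      have : (|v| ^ (q - 1)) ^ p = (|v| ^ (q - 1)) ^ 2 * (|v| ^ (q - 1)) ^ (p - 2) := by
        have := sq_mul_rpow hp (|v| ^ (q - 1))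
        rw [abs_of_nonneg (by positivity : 0 ≤ |v| ^ (q - 1))] at this
        exact this.symm
      rw [this, ← sq_abs u]
      gcongr
    nlinarith

lemma bell_fderiv (hp : 2 ≤ p) (hpq : p.HolderConjugate q) {K : ℝ} (hK : 1 ≤ K) (u v : ℝ) :
    HasFDerivAt (fun z : ℝ × ℝ => bell p q K z.1 z.2)
      ((bell1 p q u v) • (ContinuousLinearMap.fst ℝ ℝ ℝ) +
        (bell2 q K u v) • (ContinuousLinearMap.snd ℝ ℝ ℝ)) (u, v) := by
  have hq1 := hpq.symm.lt
  have hp1 := hpq.lt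
  have hq2 : q ≤ 2 := by
    have := hpq.symm.sub_one_mul_conj; nlinarith
  have hqp : (1 - 2 / p) * q = 2 - q := by
    have := hpq.symm.sub_one_mul_conj
    have : p ≠ 0 := by linarith
    field_simp; nlinarith
  have dfst : ∀ {f f' : ℝ} {F : ℝ → ℝ} , HasDerivAt F f u →
      HasFDerivAt (fun z : ℝ × ℝ => F z.1) (f • (ContinuousLinearMap.fst ℝ ℝ ℝ)) (u, v) := by
    intro f _ F hF
    exact hF.comp_hasFDerivAt (u, v) (hasFDerivAt_fst (𝕜 := ℝ) (p := (u, v)))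
  have dsnd : ∀ {f f' : ℝ} {F : ℝ → ℝ} , HasDerivAt F f v →
      HasFDerivAt (fun z : ℝ × ℝ => F z.2) (f • (ContinuousLinearMap.snd ℝ ℝ ℝ)) (u, v) := by
    intro f _ F hF
    exact hF.comp_hasFDerivAt (u, v) (hasFDerivAt_snd (𝕜 := ℝ) (p := (u, v)))
  have dII : HasFDerivAt (fun z : ℝ × ℝ => 2 / p * |z.1| ^ p + K * |z.2| ^ q)
      ((2 / p * (p * |u| ^ (p - 2) * u)) • (ContinuousLinearMap.fst ℝ ℝ ℝ) +
        (K * (q * |v| ^ (q - 2) * v)) • (ContinuousLinearMap.snd ℝ ℝ ℝ)) (u, v) := by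
    exact (dfst (f' := 0) ((hasDerivAt_abs_rpow u hp1).const_mul (2 / p))).add
      (dsnd (f' := 0) ((hasDerivAt_abs_rpow v hq1).const_mul K))
  by_cases h0 : u = 0 ∧ v = 0
  · obtain ⟨rfl, rfl⟩ := h0
    have z1 : bell1 p q 0 0 = 0 := by simp [bell1]
    have z2 : bell2 q K 0 0 = 0 := by simp [bell2, mm]
    rw [z1, z2]
    have d0 := (dfst (f' := 0) ((hasDerivAt_abs_rpow 0 hp1).const_mul (1 + K))).add
      (dsnd (f' := 0) ((hasDerivAt_abs_rpow 0 hq1).const_mul (1 + K)))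
    rw [hasFDerivAt_iff_isLittleO] at d0 ⊢
    have hp0 : (0 : ℝ) ^ p = 0 := Real.zero_rpow (by linarith)
    have hq0 : (0 : ℝ) ^ q = 0 := Real.zero_rpow (by linarith)
    have b0 : bell p q K 0 0 = 0 := by
      rw [bell_II hp (by rw [abs_zero, Real.zero_rpow (by linarith)])]
      simp [hp0, hq0]
    refine Asymptotics.IsBigO.trans_isLittleO ?_ d0
    apply Asymptotics.isBigO_of_le
    intro z
    simp only [Pi.add_apply, abs_zero, hp0, hq0, b0]
    simp only [mul_zero, zero_smul, add_zero, zero_apply, sub_zero]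
    rw [Real.norm_of_nonneg (bell_nonneg hp hpq hK _ _)]
    refine (bell_le hp hpq hK _ _).trans ?_
    rw [mul_add]; exact le_abs_self _
  rw [← hasFDerivWithinAt_univ]
  have hcl1 : IsClosed {z : ℝ × ℝ | |z.2| ^ (q - 1) ≤ |z.1|} :=
    isClosed_le ((continuous_snd.abs).rpow_const (fun _ => Or.inr (by linarith))) continuous_fst.abs
  have hcl2 : IsClosed {z : ℝ × ℝ | |z.1| ≤ |z.2| ^ (q - 1)} :=
    isClosed_le continuous_fst.abs ((continuous_snd.abs).rpow_const (fun _ => Or.inr (by linarith)))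
  have huniv : (Set.univ : Set (ℝ × ℝ)) = {z : ℝ × ℝ | |z.2| ^ (q - 1) ≤ |z.1|} ∪
      {z : ℝ × ℝ | |z.1| ≤ |z.2| ^ (q - 1)} := by
    ext z; simp [le_total]
  rw [huniv]
  apply HasFDerivWithinAt.union
  · by_cases h : |v| ^ (q - 1) ≤ |u|
    · have := dII.hasFDerivWithinAt (s := {z : ℝ × ℝ | |z.2| ^ (q - 1) ≤ |z.1|})
      have e := this.congr (f₁ := fun z : ℝ × ℝ => bell p q K z.1 z.2)
        (fun z hz => bell_II hp hz) (bell_II hp h)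
      convert e using 3
      · unfold bell1; rw [max_eq_left h]; field_simp
      · unfold bell2 mm
        rw [mul_rpow_two q v hq1, if_pos h]
        ring
    · apply HasFDerivWithinAt.of_notMem_closure
      rw [hcl1.closure_eq]; exact h
  · by_cases h : |u| ≤ |v| ^ (q - 1)
    · have hv : v ≠ 0 := by
        rintro rfl
        rw [abs_zero, Real.zero_rpow (by linarith)] at h
        exact h0 ⟨abs_nonpos_iff.1 h, rfl⟩
      have hva : 0 < |v| := abs_pos.2 hv
      have dv : HasDerivAt (fun x : ℝ => |x| ^ (2 - q)) ((2 - q) * |v| ^ (-q) * v) v := by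
        have := (hasDerivAt_abs hv).rpow_const (p := 2 - q) (Or.inl hva.ne')
        convert this using 1
        have e : |v| ^ (2 - q - 1) = |v| ^ (-q) * |v| := by
          rw [show 2 - q - 1 = -q + 1 by ring, Real.rpow_add hva, Real.rpow_one]
        rw [e]
        have : v = (SignType.sign v : ℝ) * |v| := (sign_mul_abs v).symm
        nth_rewrite 2 [this]
        ring
      have dI : HasFDerivAt (fun z : ℝ × ℝ => z.1 ^ 2 * |z.2| ^ (2 - q) + (K - (1 - 2 / p)) * |z.2| ^ q)
          ((u ^ 2 • ((2 - q) * |v| ^ (-q) * v) • (ContinuousLinearMap.snd ℝ ℝ ℝ) +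
            (|v| ^ (2 - q)) • ((2 : ℕ) * u ^ (2 - 1)) • (ContinuousLinearMap.fst ℝ ℝ ℝ)) +
            ((K - (1 - 2 / p)) * (q * |v| ^ (q - 2) * v)) • (ContinuousLinearMap.snd ℝ ℝ ℝ)) (u, v) := by
        exact ((dfst (f' := 0) (hasDerivAt_pow 2 u)).mul (dsnd (f' := 0) dv)).add
          (dsnd (f' := 0) ((hasDerivAt_abs_rpow v hq1).const_mul (K - (1 - 2 / p))))
      have e := (dI.hasFDerivWithinAt (s := {z : ℝ × ℝ | |z.1| ≤ |z.2| ^ (q - 1)})).congr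
        (f₁ := fun z : ℝ × ℝ => bell p q K z.1 z.2)
        (fun z hz => bell_I hpq hz) (bell_I hpq h)
      have m1 : mm u (v * |v| ^ (q - 2)) = u ^ 2 * |v| ^ (-q) * v := by
        have hne : |v| ^ (q - 2) ≠ 0 := by positivity
        have id2 : |v| ^ (-q) * v * (v * |v| ^ (q - 2)) = 1 := by
          have : |v| ^ (-q) * v * (v * |v| ^ (q - 2)) = v ^ 2 * (|v| ^ (-q) * |v| ^ (q - 2)) := by ring
          rw [this, ← sq_abs, ← Real.rpow_add hva, ← Real.rpow_natCast, ← Real.rpow_add hva]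
          convert Real.rpow_zero _ using 2; push_cast; ring
        have hne2 : v * |v| ^ (q - 2) ≠ 0 := mul_ne_zero hv hne
        have id3 : u ^ 2 / (v * |v| ^ (q - 2)) = u ^ 2 * |v| ^ (-q) * v := by
          rw [div_eq_iff hne2]; linear_combination (-u ^ 2) * id2
        unfold mm
        rw [mul_rpow_two q v hq1]
        split_ifs with hh
        · have : u ^ 2 = (v * |v| ^ (q - 2)) ^ 2 := by
            rw [← sq_abs u, ← sq_abs (v * _), mul_rpow_two q v hq1, le_antisymm h hh]
          rw [← id3, this]; field_simp
        · exact id3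
      convert e using 1
      ext
      · simp [bell1, max_eq_right h, alpha_pm2 hpq]; ring
      · simp only [bell2, m1]
        simp
        linear_combination (v * |v| ^ (q - 2)) * hqp
    · apply HasFDerivWithinAt.of_notMem_closure
      rw [hcl2.closure_eq]; exact h

lemma bell_mono' (hp : 2 ≤ p) (hpq : p.HolderConjugate q) {K : ℝ} (hK : 9 * p ≤ K) (u v u' v' : ℝ) :
    2 * |u - u'| * |v - v'| ≤ (u - u') * (bell1 p q u v - bell1 p q u' v') +
      (v - v') * (bell2 q K u v - bell2 q K u' v') := by
  have hq1 := hpq.symm.lt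
  have hq2 : q ≤ 2 := by
    have := hpq.symm.sub_one_mul_conj; nlinarith
  have := bell_mono hp (k₁ := K * q - (2 - q)) (k₂ := 2 - q) (by linarith) (by linarith)
    (by nlinarith) u u' (v * |v| ^ (q - 2)) (v' * |v'| ^ (q - 2))
  rw [alpha_inv hpq, alpha_inv hpq, mul_rpow_two q v hq1, mul_rpow_two q v' hq1] at this
  exact this
end

/-- Existence of a Bellman function for every pair of conjugate exponents. -/
lemma exists_bellman {r s : ℝ} (h : r.HolderConjugate s) :
    ∃ (B b₁ b₂ : ℝ → ℝ → ℝ) (C : ℝ), 0 < C ∧ (∀ u v, 0 ≤ B u v) ∧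
      (∀ u v, B u v ≤ C * (|u| ^ r + |v| ^ s)) ∧
      (∀ (u v : ℝ → ℝ) (u' v' t : ℝ), HasDerivAt u u' t → HasDerivAt v v' t →
        HasDerivAt (fun t => B (u t) (v t)) (b₁ (u t) (v t) * u' + b₂ (u t) (v t) * v') t) ∧
      (∀ u v u' v', 2 * |u - u'| * |v - v'| ≤ (u - u') * (b₁ u v - b₁ u' v') +
        (v - v') * (b₂ u v - b₂ u' v')) := by
  have main : ∀ {p q : ℝ}, 2 ≤ p → p.HolderConjugate q → ∀ (u v : ℝ → ℝ) (u' v' t : ℝ),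
      HasDerivAt u u' t → HasDerivAt v v' t →
        HasDerivAt (fun t => bell p q (9 * p) (u t) (v t))
          (bell1 p q (u t) (v t) * u' + bell2 q (9 * p) (u t) (v t) * v') t := by
    intro p q hp hpq u v u' v' t hu hv
    have h1 := (bell_fderiv hp hpq (K := 9 * p) (by linarith) (u t) (v t)).comp_hasDerivAt t (hu.prodMk hv)
    exact h1.congr_deriv (by simp)
  rcases le_total 2 r with hr | hr
  · exact ⟨bell r s (9 * r), bell1 r s, bell2 s (9 * r), 1 + 9 * r, by linarith,
      bell_nonneg hr h (by linarith), bell_le hr h (by linarith), main hr h,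
      bell_mono' hr h le_rfl⟩
  · have hs : 2 ≤ s := by
      have := h.sub_one_mul_conj
      have := h.lt
      have := h.symm.lt
      nlinarith
    refine ⟨fun u v => bell s r (9 * s) v u, fun u v => bell2 r (9 * s) v u,
      fun u v => bell1 s r v u, 1 + 9 * s, by linarith, fun u v => bell_nonneg hs h.symm (by linarith) _ _,
      fun u v => ?_, fun u v u' v' t hu hv => ?_, fun u v u' v' => ?_⟩
    · rw [add_comm (|u| ^ r)]; exact bell_le hs h.symm (by linarith) _ _
    · rw [add_comm]; exact main hs h.symm v u v' u' t hv hu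
    · have := bell_mono' hs h.symm le_rfl v u v' u'
      linarith

end KMS

namespace KMS

section Discrete
variable {G : Type*} [AddCommGroup G]

/-- second difference in direction e -/
def lap1 (e : G) (f : G → ℝ) (x : G) : ℝ := f (x + e) + f (x - e) - 2 * f x

variable {ι : Type*} [Fintype ι]

/-- sum of second differences -/
def lapS (e : ι → G) (f : G → ℝ) (x : G) : ℝ := ∑ d, lap1 (e d) f x

lemma lap1_comm (e e' : G) (f : G → ℝ) : lap1 e (lap1 e' f) = lap1 e' (lap1 e f) := by
  funext x
  simp only [lap1]
  have h1 : x + e + e' = x + e' + e := by abel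
  have h2 : x + e - e' = x - e' + e := by abel
  have h3 : x - e + e' = x + e' - e := by abel
  have h4 : x - e - e' = x - e' - e := by abel
  rw [h1, h2, h3, h4]; ring

lemma lap1_lapS (e' : G) (e : ι → G) (f : G → ℝ) : lap1 e' (lapS e f) = lapS e (lap1 e' f) := by
  funext x
  have : lap1 e' (lapS e f) x = ∑ d, lap1 e' (lap1 (e d) f) x := by
    simp only [lap1, lapS, Finset.mul_sum, ← Finset.sum_add_distrib, ← Finset.sum_sub_distrib]
  rw [this]
  unfold lapS
  exact Finset.sum_congr rfl fun d _ => by rw [lap1_comm]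

variable [Fintype G]

lemma sbp1 (e : G) (β f : G → ℝ) :
    ∑ x, β x * lap1 e f x = - ∑ x, (f (x + e) - f x) * (β (x + e) - β x) := by
  have h1 : ∑ x, β x * (f x - f (x - e)) = ∑ x, β (x + e) * (f (x + e) - f x) := by
    rw [← Equiv.sum_comp (Equiv.addRight e)]
    simp
  have h2 : ∀ x, β x * lap1 e f x = β x * (f (x + e) - f x) - β x * (f x - f (x - e)) := by
    intro x; simp only [lap1]; ring
  rw [Finset.sum_congr rfl fun x _ => h2 x, Finset.sum_sub_distrib, h1, ← Finset.sum_sub_distrib,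
    ← Finset.sum_neg_distrib]
  exact Finset.sum_congr rfl fun x _ => by ring

lemma sbp1_symm (e : G) (β f : G → ℝ) :
    ∑ x, β x * lap1 e f x = ∑ x, lap1 e β x * f x := by
  rw [sbp1, Finset.sum_congr rfl fun x _ => mul_comm (lap1 e β x) (f x), sbp1]
  exact congrArg _ (Finset.sum_congr rfl fun x _ => mul_comm _ _)

lemma sbpS (e : ι → G) (β f : G → ℝ) :
    ∑ x, β x * lapS e f x = - ∑ d, ∑ x, (f (x + e d) - f x) * (β (x + e d) - β x) := by
  simp only [lapS, Finset.mul_sum]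
  rw [Finset.sum_comm, ← Finset.sum_neg_distrib]
  exact Finset.sum_congr rfl fun d _ => sbp1 _ _ _

lemma sbpS_symm (e : ι → G) (β f : G → ℝ) :
    ∑ x, β x * lapS e f x = ∑ x, lapS e β x * f x := by
  simp only [lapS, Finset.mul_sum, Finset.sum_mul]
  rw [Finset.sum_comm, Finset.sum_congr rfl fun d _ => sbp1_symm (e d) β f, Finset.sum_comm]

/-- heat flow -/
def IsFlow (e : ι → G) (U : ℝ → G → ℝ) : Prop :=
  ∀ s x, HasDerivAt (fun s => U s x) (lapS e (U s) x) s

lemma exists_flow (e : ι → G) (φ : G → ℝ) : ∃ U, IsFlow e U ∧ U 0 = φ := by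
  classical
  let L : (G → ℝ) →ₗ[ℝ] (G → ℝ) :=
    { toFun := lapS e
      map_add' := by
        intro f g; funext x
        simp only [lapS, lap1, Pi.add_apply, ← Finset.sum_add_distrib]
        exact Finset.sum_congr rfl fun d _ => by ring
      map_smul' := by
        intro c f; funext x
        simp only [lapS, lap1, Pi.smul_apply, smul_eq_mul, RingHom.id_apply, Finset.mul_sum]
        exact Finset.sum_congr rfl fun d _ => by ring }
  let L' : (G → ℝ) →L[ℝ] (G → ℝ) := LinearMap.toContinuousLinearMap L
  refine ⟨fun s => NormedSpace.exp (s • L') φ, ?_, ?_⟩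
  · intro s x
    have h := hasDerivAt_exp_smul_const' (𝕂 := ℝ) L' s
    have h2 := ((ContinuousLinearMap.proj (R := ℝ) (φ := fun _ : G => ℝ) x).comp
      (ContinuousLinearMap.apply ℝ (G → ℝ) φ)).hasFDerivAt.comp_hasDerivAt s h
    exact h2
  · simp

lemma flow_lin1 {e : ι → G} {U : ℝ → G → ℝ} (hU : IsFlow e U) (e' : G) (s : ℝ) (x : G) :
    HasDerivAt (fun s => lap1 e' (U s) x) (lapS e (lap1 e' (U s)) x) s := by
  rw [← lap1_lapS]
  unfold lap1
  exact ((hU s (x + e')).add (hU s (x - e'))).sub ((hU s x).const_mul 2)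

lemma flow_lin {e : ι → G} {U : ℝ → G → ℝ} (hU : IsFlow e U) :
    IsFlow e (fun s => lapS e (U s)) := by
  intro s x
  have : HasDerivAt (fun s => ∑ d, lap1 (e d) (U s) x) (∑ d, lap1 (e d) (lapS e (U s)) x) s := by
    refine HasDerivAt.fun_sum fun d _ => ?_
    rw [lap1_lapS]
    exact flow_lin1 hU _ _ _
  exact this

/-- Dirichlet energy -/
def ener (e : ι → G) (f : G → ℝ) : ℝ := ∑ d, ∑ x, (f (x + e d) - f x) ^ 2

lemma ener_eq (e : ι → G) (f : G → ℝ) : ∑ x, f x * lapS e f x = - ener e f := by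
  rw [sbpS, ener]; simp only [sq]

lemma ener_decay {e : ι → G} {U : ℝ → G → ℝ} (hU : IsFlow e U) {S : ℝ} (hS : 0 < S) :
    ener e (U S) ≤ (∑ x, U 0 x ^ 2) / (2 * S) := by
  have hE : ∀ s, HasDerivAt (fun s => ener e (U s)) (-(2 * ∑ x, lapS e (U s) x ^ 2)) s := by
    intro s
    have h1 : (fun s => ener e (U s)) = fun s => - ∑ x, U s x * lapS e (U s) x := by
      funext s; rw [ener_eq]; ring
    rw [h1]
    have h2 := (HasDerivAt.fun_sum (u := Finset.univ) fun x _ => (hU s x).mul (flow_lin hU s x)).fun_neg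
    refine h2.congr_deriv ?_
    rw [Finset.sum_add_distrib, sbpS_symm e (U s) (lapS e (U s)), Finset.mul_sum,
      ← Finset.sum_add_distrib]
    congr 1
    exact Finset.sum_congr rfl fun x _ => by ring
  have hN : ∀ s, HasDerivAt (fun s => ∑ x, U s x ^ 2) (-(2 * ener e (U s))) s := by
    intro s
    have h2 := HasDerivAt.fun_sum (u := Finset.univ) fun x _ => (hU s x).fun_pow 2
    refine h2.congr_deriv ?_
    have := ener_eq e (U s)
    calc _ = 2 * ∑ x, U s x * lapS e (U s) x := by
          rw [Finset.mul_sum]; exact Finset.sum_congr rfl fun x _ => by norm_num; ring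
      _ = _ := by rw [this]; ring
  have hA : AntitoneOn (fun s => (∑ x, U s x ^ 2) + 2 * s * ener e (U s)) (Set.Ici 0) := by
    have hd : ∀ s, HasDerivAt (fun s => (∑ x, U s x ^ 2) + 2 * s * ener e (U s))
        (-(4 * s * ∑ x, lapS e (U s) x ^ 2)) s := by
      intro s
      have := (hN s).fun_add ((((hasDerivAt_id' s).const_mul 2).fun_mul (hE s)))
      exact this.congr_deriv (by ring)
    refine antitoneOn_of_deriv_nonpos (convex_Ici 0)
      (fun s _ => (hd s).continuousAt.continuousWithinAt)
      (fun s _ => (hd s).differentiableAt.differentiableWithinAt) fun s hs => ?_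
    rw [(hd s).deriv]
    rw [interior_Ici] at hs
    have h0 : (0:ℝ) < s := hs
    have : 0 ≤ ∑ x, lapS e (U s) x ^ 2 := Finset.sum_nonneg fun _ _ => sq_nonneg _
    have := mul_nonneg h0.le this
    linarith
  have := hA (Set.mem_Ici.2 le_rfl) (Set.mem_Ici.2 hS.le) hS.le
  have h0 : 0 ≤ ∑ x, U S x ^ 2 := Finset.sum_nonneg fun _ _ => sq_nonneg _
  rw [le_div_iff₀ (by positivity)]
  simp only at this
  linarith

lemma bilinear {r s C : ℝ} {B b₁ b₂ : ℝ → ℝ → ℝ}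
    (hB0 : ∀ u v, 0 ≤ B u v) (hBC : ∀ u v, B u v ≤ C * (|u| ^ r + |v| ^ s))
    (hBd : ∀ (u v : ℝ → ℝ) (u' v' t : ℝ), HasDerivAt u u' t → HasDerivAt v v' t →
        HasDerivAt (fun t => B (u t) (v t)) (b₁ (u t) (v t) * u' + b₂ (u t) (v t) * v') t)
    (hBm : ∀ u v u' v', 2 * |u - u'| * |v - v'| ≤ (u - u') * (b₁ u v - b₁ u' v') +
        (v - v') * (b₂ u v - b₂ u' v'))
    (e : ι → G) (d : ι) (φ ψ : G → ℝ) :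
    |∑ x, lap1 (e d) φ x * ψ x| ≤ C * ((∑ x, |lapS e φ x| ^ r) + ∑ x, |ψ x| ^ s) := by
  obtain ⟨U, hU, hU0⟩ := exists_flow e φ
  obtain ⟨V, hV, hV0⟩ := exists_flow e ψ
  have hW := flow_lin hU
  set K : ℝ → ℝ := fun t => ∑ x, lap1 (e d) (U t) x * V t x with hK
  set R : ℝ → ℝ := fun t => ∑ x, B (lapS e (U t) x) (V t x) with hR
  have hKd : ∀ t, HasDerivAt K (-(2 * ∑ x, (lapS e (U t) (x + e d) - lapS e (U t) x) *
      (V t (x + e d) - V t x))) t := by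
    intro t
    have h2 := HasDerivAt.fun_sum (u := Finset.univ) fun x _ =>
      (flow_lin1 hU (e d) t x).fun_mul (hV t x)
    refine h2.congr_deriv ?_
    rw [Finset.sum_add_distrib, sbpS_symm, ← lap1_lapS]
    have := sbp1 (e d) (V t) (lapS e (U t))
    rw [Finset.sum_congr rfl fun x _ => mul_comm (V t x) _] at this
    rw [this]; ring
  have hRd : ∀ t, HasDerivAt R (∑ x, (b₁ (lapS e (U t) x) (V t x) * lapS e (lapS e (U t)) x
      + b₂ (lapS e (U t) x) (V t x) * lapS e (V t) x)) t := by
    intro t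
    exact HasDerivAt.fun_sum (u := Finset.univ) fun x _ => hBd _ _ _ _ _ (hW t x) (hV t x)
  have hRle : ∀ t, (∑ x, (b₁ (lapS e (U t) x) (V t x) * lapS e (lapS e (U t)) x
      + b₂ (lapS e (U t) x) (V t x) * lapS e (V t) x)) ≤
      -(2 * |∑ x, (lapS e (U t) (x + e d) - lapS e (U t) x) * (V t (x + e d) - V t x)|) := by
    intro t
    rw [Finset.sum_add_distrib, sbpS, sbpS, ← neg_add, neg_le_neg_iff, ← Finset.sum_add_distrib]
    simp only [← Finset.sum_add_distrib]
    have hnn : ∀ (d : ι) (x : G), 2 * |lapS e (U t) (x + e d) - lapS e (U t) x| *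
        |V t (x + e d) - V t x| ≤ _ := fun d x => hBm (lapS e (U t) (x + e d))
      (V t (x + e d)) (lapS e (U t) x) (V t x)
    calc _ ≤ ∑ x, 2 * |lapS e (U t) (x + e d) - lapS e (U t) x| * |V t (x + e d) - V t x| := by
          calc _ ≤ 2 * ∑ x, |(lapS e (U t) (x + e d) - lapS e (U t) x) * (V t (x + e d) - V t x)| :=
                mul_le_mul_of_nonneg_left (Finset.abs_sum_le_sum_abs _ _) zero_le_two
            _ = _ := by rw [Finset.mul_sum]; exact Finset.sum_congr rfl fun x _ => by
                          rw [abs_mul]; ring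
      _ ≤ _ := Finset.sum_le_sum fun x _ => hnn d x
      _ ≤ _ := Finset.single_le_sum (f := fun d => ∑ x, _) (fun d _ => Finset.sum_nonneg fun x _ =>
          le_trans (by positivity) (hnn d x)) (Finset.mem_univ d)
  have hant : ∀ σ : ℝ, |σ| = 1 → ∀ S, 0 ≤ S → σ * K 0 ≤ R 0 + σ * K S := by
    intro σ hσ S hS
    have hd : ∀ t, HasDerivAt (fun t => R t - σ * K t) _ t := fun t =>
      (hRd t).fun_sub ((hKd t).const_mul σ)
    have hA : Antitone (fun t => R t - σ * K t) := by
      refine antitone_of_deriv_nonpos (fun t => (hd t).differentiableAt) fun t => ?_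
      rw [(hd t).deriv]
      have h1 := hRle t
      set z := ∑ x, (lapS e (U t) (x + e d) - lapS e (U t) x) * (V t (x + e d) - V t x)
      have h2 : σ * z ≤ |z| := by
        calc _ ≤ |σ * z| := le_abs_self _
          _ = |z| := by rw [abs_mul, hσ, one_mul]
      nlinarith
    have h3 := hA hS
    have h4 : 0 ≤ R S := Finset.sum_nonneg fun _ _ => hB0 _ _
    simp only at h3
    linarith
  have hKS : ∀ S, 0 < S → |K S| ≤ ((∑ x, φ x ^ 2) + ∑ x, ψ x ^ 2) / (4 * S) := by
    intro S hS
    have h1 := ener_decay hU hS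
    have h2 := ener_decay hV hS
    rw [hU0] at h1; rw [hV0] at h2
    have h3 : K S = - ∑ x, (U S (x + e d) - U S x) * (V S (x + e d) - V S x) := by
      have := sbp1 (e d) (V S) (U S)
      rw [← this]
      exact Finset.sum_congr rfl fun x _ => mul_comm _ _
    have h4 : |K S| ≤ (ener e (U S) + ener e (V S)) / 2 := by
      have h5 : ∀ f : G → ℝ, ∑ x, (f (x + e d) - f x) ^ 2 ≤ ener e f := fun f =>
        Finset.single_le_sum (f := fun d => ∑ x, (f (x + e d) - f x) ^ 2)
          (fun d _ => Finset.sum_nonneg fun x _ => sq_nonneg _) (Finset.mem_univ d)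
      rw [h3, abs_neg]
      calc _ ≤ ∑ x, |(U S (x + e d) - U S x) * (V S (x + e d) - V S x)| :=
            Finset.abs_sum_le_sum_abs _ _
        _ ≤ ∑ x, ((U S (x + e d) - U S x) ^ 2 / 2 + (V S (x + e d) - V S x) ^ 2 / 2) :=
            Finset.sum_le_sum fun x _ => by
              rw [abs_mul, ← sq_abs (U S (x + e d) - U S x), ← sq_abs (V S (x + e d) - V S x)]
              nlinarith [sq_nonneg (|U S (x + e d) - U S x| - |V S (x + e d) - V S x|)]
        _ ≤ _ := by
            rw [Finset.sum_add_distrib, ← Finset.sum_div, ← Finset.sum_div]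
            have := h5 (U S); have := h5 (V S)
            linarith
    calc _ ≤ _ := h4
      _ ≤ ((∑ x, φ x ^ 2) / (2 * S) + (∑ x, ψ x ^ 2) / (2 * S)) / 2 := by gcongr
      _ = _ := by field_simp; ring
  have hlim : Filter.Tendsto (fun S : ℝ => R 0 + ((∑ x, φ x ^ 2) + ∑ x, ψ x ^ 2) / (4 * S))
      Filter.atTop (nhds (R 0 + 0)) :=
    tendsto_const_nhds.add (Filter.Tendsto.const_div_atTop
      (Filter.Tendsto.const_mul_atTop (by norm_num) Filter.tendsto_id) _)
  have hfin : |K 0| ≤ R 0 := by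
    rw [add_zero] at hlim
    refine ge_of_tendsto hlim ?_
    filter_upwards [Filter.eventually_gt_atTop 0] with S hS
    have h1 := hant 1 (by simp) S hS.le
    have h2 := hant (-1) (by simp) S hS.le
    have h3 := abs_le.1 (hKS S hS)
    rw [abs_le]; constructor <;> linarith
  have e1 : K 0 = ∑ x, lap1 (e d) φ x * ψ x := by simp only [hK, hU0, hV0]
  rw [← e1]
  refine hfin.trans ?_
  simp only [hR, hU0, hV0]
  rw [← Finset.sum_add_distrib, Finset.mul_sum]
  exact Finset.sum_le_sum fun x _ => hBC _ _

end Discrete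

/-- The discrete Hessian estimate, constant depending on the exponent only -/
lemma exists_discrete {r s : ℝ} (h : r.HolderConjugate s) :
    ∃ C : ℝ, 0 < C ∧ ∀ (G ι : Type) [AddCommGroup G] [Fintype G] [Fintype ι] (e : ι → G) (d : ι)
      (φ : G → ℝ), ∑ x, |lap1 (e d) φ x| ^ r ≤ C * ∑ x, |lapS e φ x| ^ r := by
  obtain ⟨B, b₁, b₂, C, hC, h0, h1, h2, h3⟩ := exists_bellman h
  have hr := h.lt
  have hs := h.symm.lt
  -- choose t with C t^s = t/2
  set t : ℝ := (1 / (2 * C)) ^ (1 / (s - 1)) with ht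
  have ht0 : 0 < t := by positivity
  have hts : t ^ (s - 1) = 1 / (2 * C) := by
    rw [ht, ← Real.rpow_mul (by positivity), one_div_mul_cancel (by linarith), Real.rpow_one]
  have hts' : C * t ^ s = t / 2 := by
    have : t ^ s = t ^ (s - 1) * t := by
      rw [← Real.rpow_add_one ht0.ne']; congr 1; ring
    rw [this, hts]; field_simp
  refine ⟨2 * C / t, by positivity, fun G ι _ _ _ e d φ => ?_⟩
  have hb := bilinear h0 h1 h2 h3 e d φ
    (fun x => t * (SignType.sign (lap1 (e d) φ x) * |lap1 (e d) φ x| ^ (r - 1)))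
  have e1 : ∀ x, lap1 (e d) φ x * (t * (SignType.sign (lap1 (e d) φ x) * |lap1 (e d) φ x| ^ (r - 1)))
      = t * |lap1 (e d) φ x| ^ r := by
    intro x
    set a := lap1 (e d) φ x
    calc _ = t * (SignType.sign a * a * |a| ^ (r - 1)) := by ring
      _ = _ := by
        rw [sign_mul_self]
        rcases eq_or_ne a 0 with h | h
        · rw [h, abs_zero, zero_mul, Real.zero_rpow (ne_of_gt (by linarith) : r ≠ 0)]
        · rw [mul_comm |a|, ← Real.rpow_add_one (abs_ne_zero.2 h)]; congr 2; ring
  have e2 : ∀ x, |t * (SignType.sign (lap1 (e d) φ x) * |lap1 (e d) φ x| ^ (r - 1))| ^ s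
      ≤ t ^ s * |lap1 (e d) φ x| ^ r := by
    intro x
    set a := lap1 (e d) φ x
    rcases eq_or_ne a 0 with h' | h'
    · rw [h']; simp [Real.zero_rpow (by linarith : s ≠ 0), Real.zero_rpow (by linarith : r ≠ 0)]
    · have : |((SignType.sign a : SignType) : ℝ)| = 1 := by
        rcases lt_or_gt_of_ne h' with h | h <;> simp [h]
      rw [abs_mul, abs_mul, this, one_mul, abs_of_pos ht0, Real.mul_rpow ht0.le (by positivity),
        abs_of_nonneg (by positivity : (0:ℝ) ≤ |a| ^ (r - 1)), ← Real.rpow_mul (abs_nonneg a),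
        h.sub_one_mul_conj]
  simp only [e1] at hb
  rw [← Finset.mul_sum] at hb
  have h5 := le_trans (le_abs_self _) hb
  have h6 := Finset.sum_le_sum fun x (_ : x ∈ Finset.univ) => e2 x
  rw [← Finset.mul_sum] at h6
  set X := ∑ x, |lap1 (e d) φ x| ^ r
  set Y := ∑ x, |lapS e φ x| ^ r
  have h7 : t * X ≤ C * Y + t / 2 * X := by
    rw [← hts']
    calc _ ≤ _ := h5
      _ ≤ C * (Y + t ^ s * X) := by gcongr
      _ = _ := by ring
  rw [div_mul_eq_mul_div, le_div_iff₀ ht0]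
  linarith

end KMS

namespace KMS

lemma per_aux {M N : ℕ} (hM : 2 * N < M) {h : (Fin 3 → ℤ) → ℝ}
    (hh : ∀ k, h k ≠ 0 → ∀ j, |k j| ≤ N) (m : Fin 3 → ℤ) (hm : ∀ j, |m j| + N < M) :
    h (fun j => ((m j : ZMod M)).valMinAbs) = h m := by
  have : NeZero M := ⟨by omega⟩
  have key : ∀ j, |((m j : ZMod M)).valMinAbs| ≤ N ∨ |m j| ≤ N → ((m j : ZMod M)).valMinAbs = m j := by
    intro j hj
    have h1 := hm j
    rcases hj with hj | hj
    · have h2 : ((((m j : ZMod M)).valMinAbs : ℤ) : ZMod M) = (m j : ZMod M) := ZMod.coe_valMinAbs _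
      rw [ZMod.intCast_eq_intCast_iff_dvd_sub] at h2
      have h3 : m j - (m j : ZMod M).valMinAbs = 0 := by
        refine Int.eq_zero_of_abs_lt_dvd h2 ?_
        have := abs_sub (m j) (m j : ZMod M).valMinAbs
        omega
      omega
    · rw [ZMod.valMinAbs_spec]
      refine ⟨rfl, ?_, ?_⟩ <;> have := abs_le.1 hj <;> omega
  by_cases h1 : h m = 0
  · by_cases h2 : h (fun j => ((m j : ZMod M)).valMinAbs) = 0
    · rw [h1, h2]
    · congr 1; funext j; exact key j (Or.inl (hh _ h2 j))
  · congr 1; funext j; exact key j (Or.inr (hh _ h1 j))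

lemma lattice_tsum (M N : ℕ) (hM : 2 * N < M) (g : (Fin 3 → ℤ) → ℝ≥0∞)
    (hg : ∀ k, g k ≠ 0 → ∀ j, |k j| ≤ N) [NeZero M] :
    ∑ z : Fin 3 → ZMod M, g (fun j => (z j).valMinAbs) = ∑' k, g k := by
  rw [← tsum_fintype (L := .unconditional _)]
  refine Function.Injective.tsum_eq (g := fun (z : Fin 3 → ZMod M) j => (z j).valMinAbs) ?_ ?_
  · intro z z' hz
    funext j
    exact ZMod.valMinAbs_inj.1 (congrFun hz j)
  · intro k hk
    refine ⟨fun j => (k j : ZMod M), ?_⟩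
    funext j
    have := abs_le.1 (hg k hk j)
    simp only
    rw [ZMod.valMinAbs_spec]
    refine ⟨rfl, ?_, ?_⟩ <;> omega

lemma lattice_est {r C : ℝ} (hr : 0 < r) (hC0 : 0 < C)
    (hC : ∀ (G ι : Type) [AddCommGroup G] [Fintype G] [Fintype ι] (e : ι → G) (d : ι)
      (φ : G → ℝ), ∑ x, |lap1 (e d) φ x| ^ r ≤ C * ∑ x, |lapS e φ x| ^ r)
    {ι : Type} [Fintype ι] (e : ι → Fin 3 → ℤ) (d : ι) (h : (Fin 3 → ℤ) → ℝ)
    (N : ℕ) (hN : ∀ k, h k ≠ 0 → ∀ j, |k j| ≤ N) :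
    ∑' k, ENNReal.ofReal (|lap1 (e d) h k| ^ r) ≤
      ENNReal.ofReal C * ∑' k, ENNReal.ofReal (|lapS e h k| ^ r) := by
  classical
  obtain ⟨R, hR⟩ : ∃ R : ℕ, ∀ d j, |e d j| ≤ R := by
    refine ⟨∑ d, ∑ j, (e d j).natAbs, fun d j => ?_⟩
    have h1 : (e d j).natAbs ≤ ∑ j, (e d j).natAbs :=
      Finset.single_le_sum (f := fun j => (e d j).natAbs) (fun _ _ => Nat.zero_le _) (Finset.mem_univ j)
    have h2 : ∑ j, (e d j).natAbs ≤ ∑ d, ∑ j, (e d j).natAbs :=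
      Finset.single_le_sum (f := fun d => ∑ j, (e d j).natAbs) (fun _ _ => Nat.zero_le _) (Finset.mem_univ d)
    rw [Int.abs_eq_natAbs]; exact_mod_cast h1.trans h2
  set M : ℕ := 2 * (2 * N + 2 * R) + 2 with hM
  have : NeZero M := ⟨by omega⟩
  set vm : (Fin 3 → ZMod M) → Fin 3 → ℤ := fun z j => (z j).valMinAbs with hvm
  set e' : ι → Fin 3 → ZMod M := fun d j => (e d j : ZMod M) with he'
  have hshift : ∀ (z : Fin 3 → ZMod M) (m : Fin 3 → ℤ), (∀ j, |m j| ≤ R) →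
      h (vm (z + fun j => (m j : ZMod M))) = h (vm z + m) := by
    intro z m hm
    have h1 := per_aux (M := M) (N := N) (by omega) hN (vm z + m) (by
      intro j
      have h2 := ZMod.valMinAbs_mem_Ioc (z j)
      simp only [Set.mem_Ioc] at h2
      have h3 := abs_le.1 (hm j)
      have h4 : |(vm z + m) j| ≤ M / 2 + R := by
        simp only [Pi.add_apply, hvm]; rw [abs_le]; constructor <;> omega
      omega)
    rw [← h1]
    congr 1
    funext j
    simp [hvm, Pi.add_apply]
  have hl1 : ∀ d z, lap1 (e' d) (fun z => h (vm z)) z = lap1 (e d) h (vm z) := by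
    intro d z
    have h2 := hshift z (-(e d)) (fun j => by simpa using hR d j)
    have h3 : (z + fun j => (((-(e d)) j : ℤ) : ZMod M)) = z - e' d := by
      funext j; simp [he', sub_eq_add_neg]
    rw [h3, ← sub_eq_add_neg] at h2
    simp only [lap1, h2]
    rw [← hshift z (e d) (hR d)]
  have hlS : ∀ z, lapS e' (fun z => h (vm z)) z = lapS e h (vm z) := by
    intro z; unfold lapS; exact Finset.sum_congr rfl fun d _ => hl1 d z
  have hsup1 : ∀ d k, lap1 (e d) h k ≠ 0 → ∀ j, |k j| ≤ (N + R : ℕ) := by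
    intro d k hk j
    by_contra hcon
    push Not at hcon
    refine hk ?_
    have hz : ∀ m : Fin 3 → ℤ, |m j - k j| ≤ R → h m = 0 := by
      intro m hm
      by_contra hm0
      have h1 := hN m hm0 j
      have h2 := abs_sub (m j) (m j - k j)
      rw [sub_sub_cancel] at h2
      push_cast at hcon
      omega
    have := hR d j
    simp only [lap1]
    rw [hz (k + e d) (by simpa using this), hz (k - e d) (by simpa [abs_sub_comm] using this),
      hz k (by simp)]
    simp
  have hsupS : ∀ k, lapS e h k ≠ 0 → ∀ j, |k j| ≤ (N + R : ℕ) := by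
    intro k hk
    obtain ⟨d, _, hd⟩ := Finset.exists_ne_zero_of_sum_ne_zero hk
    exact hsup1 d k hd
  have hz : ∀ a : ℝ, ENNReal.ofReal (|a| ^ r) ≠ 0 → a ≠ 0 := by
    rintro a ha rfl
    simp [Real.zero_rpow hr.ne'] at ha
  rw [← lattice_tsum M (N + R) (by omega) _ (fun k hk => hsup1 d k (hz _ hk)),
    ← lattice_tsum M (N + R) (by omega) _ (fun k hk => hsupS k (hz _ hk)),
    ← ENNReal.ofReal_sum_of_nonneg (fun _ _ => by positivity),
    ← ENNReal.ofReal_sum_of_nonneg (fun _ _ => by positivity), ← ENNReal.ofReal_mul hC0.le]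
  refine ENNReal.ofReal_le_ofReal ?_
  have := hC (Fin 3 → ZMod M) ι e' d (fun z => h (vm z))
  simpa only [hl1, hlS] using this

lemma lintegral_est {r C : ℝ} (hr : 0 < r) (hC0 : 0 < C)
    (hC : ∀ (G ι : Type) [AddCommGroup G] [Fintype G] [Fintype ι] (e : ι → G) (d : ι)
      (φ : G → ℝ), ∑ x, |lap1 (e d) φ x| ^ r ≤ C * ∑ x, |lapS e φ x| ^ r)
    {ι : Type} [Fintype ι] (e : ι → Fin 3 → ℤ) (d : ι) (φ : (Fin 3 → ℝ) → ℝ)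
    (hφ : Continuous φ) (hφ' : HasCompactSupport φ) (ε : ℝ) (hε : 0 < ε) :
    ∫⁻ x, ENNReal.ofReal (|lap1 (fun j => ε * (e d j : ℝ)) φ x| ^ r) ≤
      ENNReal.ofReal C * ∫⁻ x, ENNReal.ofReal (|lapS (fun d j => ε * (e d j : ℝ)) φ x| ^ r) := by
  set b := (Pi.basisFun ℝ (Fin 3)).unitsSMul (fun _ => Units.mk0 ε hε.ne') with hb
  have hF := ZSpan.isAddFundamentalDomain b (volume : Measure (Fin 3 → ℝ))
  have : Countable (Submodule.span ℤ (Set.range b)) :=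
    ((b.restrictScalars ℤ).equivFun.toEquiv).countable_iff.2 inferInstance
  let E : (Fin 3 → ℤ) ≃ Submodule.span ℤ (Set.range b) :=
    (b.restrictScalars ℤ).equivFun.symm.toEquiv
  have hE : ∀ k, ((E k : Submodule.span ℤ (Set.range b)) : Fin 3 → ℝ) = fun j => ε * (k j : ℝ) := by
    intro k
    simp only [E, LinearEquiv.coe_toEquiv, Module.Basis.equivFun_symm_apply]
    push_cast
    simp only [Module.Basis.restrictScalars_apply, hb, Module.Basis.unitsSMul_apply]
    funext j
    simp [Pi.single_apply, Finset.sum_apply, Units.smul_def]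
  have : VAddInvariantMeasure (Submodule.span ℤ (Set.range b)) (Fin 3 → ℝ) volume :=
    ⟨fun c s _ => measure_preimage_add volume (c : Fin 3 → ℝ) s⟩
  have key : ∀ f : (Fin 3 → ℝ) → ℝ≥0∞, Measurable f → ∫⁻ x, f x =
      ∫⁻ x in ZSpan.fundamentalDomain b, ∑' k : Fin 3 → ℤ, f (x + fun j => ε * (k j : ℝ)) := by
    intro f hf
    rw [hF.lintegral_eq_tsum', lintegral_tsum]
    · rw [← (Equiv.neg _).tsum_eq, ← E.tsum_eq]
      refine tsum_congr fun k => lintegral_congr fun x => ?_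
      congr 1
      simp only [Equiv.neg_apply, neg_neg]
      rw [Submodule.vadd_def, hE, vadd_eq_add, add_comm]
    · intro k; exact (hf.comp (measurable_id.add_const _)).aemeasurable
  have hc1 : ∀ v : Fin 3 → ℝ, Continuous (lap1 v φ) := by
    intro v; unfold lap1; fun_prop
  have hcS : Continuous (lapS (fun d j => ε * (e d j : ℝ)) φ) :=
    continuous_finsetSum _ fun d _ => hc1 _
  have hm : ∀ f : (Fin 3 → ℝ) → ℝ, Continuous f → Measurable fun x => ENNReal.ofReal (|f x| ^ r) := by
    intro f hf
    exact (ENNReal.continuous_ofReal.comp (hf.abs.rpow_const fun _ => Or.inr hr.le)).measurable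
  rw [key _ (hm _ (hc1 _)), key _ (hm _ hcS), ← lintegral_const_mul']
  swap
  · exact ENNReal.ofReal_ne_top
  refine lintegral_mono fun x => ?_
  obtain ⟨T, hT⟩ := hφ'.isCompact.isBounded.exists_norm_le
  have hN : ∃ N : ℕ, (T + ‖x‖) / ε ≤ N := exists_nat_ge _
  obtain ⟨N, hN⟩ := hN
  have := lattice_est hr hC0 hC e d (fun k => φ (x + fun j => ε * (k j : ℝ))) N (by
    intro k hk j
    have h1 := hT _ (subset_tsupport _ hk)
    have h2 : ‖(fun j => ε * (k j : ℝ))‖ ≤ T + ‖x‖ := by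
      calc _ = ‖(x + fun j => ε * (k j : ℝ)) - x‖ := by simp
        _ ≤ _ := norm_sub_le _ _
        _ ≤ _ := by gcongr
    have h3 := (norm_le_pi_norm (fun j => ε * (k j : ℝ)) j).trans h2
    rw [Real.norm_eq_abs, abs_mul, abs_of_pos hε] at h3
    have h4 : |(k j : ℝ)| ≤ N := by
      refine le_trans ?_ hN
      rw [le_div_iff₀ hε]; linarith
    exact_mod_cast h4)
  have hs : ∀ d k, lap1 (e d) (fun k : Fin 3 → ℤ => φ (x + fun j => ε * (k j : ℝ))) k =
      lap1 (fun j => ε * (e d j : ℝ)) φ (x + fun j => ε * (k j : ℝ)) := by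
    intro d k
    have a1 : (x + fun j => ε * ((k + e d) j : ℝ)) =
        (x + fun j => ε * (k j : ℝ)) + fun j => ε * (e d j : ℝ) := by
      funext j; simp; ring
    have a2 : (x + fun j => ε * ((k - e d) j : ℝ)) =
        (x + fun j => ε * (k j : ℝ)) - fun j => ε * (e d j : ℝ) := by
      funext j; simp; ring
    simp only [lap1]
    rw [a1, a2]
  simp only [lapS, hs] at this
  exact this

end KMS

namespace KMS

/-- directional derivative -/
noncomputable def dd (v : Fin 3 → ℝ) (f : (Fin 3 → ℝ) → ℝ) (x : Fin 3 → ℝ) : ℝ := fderiv ℝ f x v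

lemma dd_smooth {f : (Fin 3 → ℝ) → ℝ} (hf : ContDiff ℝ (⊤ : ℕ∞) f) (v : Fin 3 → ℝ) :
    ContDiff ℝ (⊤ : ℕ∞) (dd v f) :=
  (hf.fderiv_right (m := (⊤ : ℕ∞)) (by simp)).clm_apply contDiff_const

lemma dd_cs {f : (Fin 3 → ℝ) → ℝ} (hf : HasCompactSupport f) (v : Fin 3 → ℝ) :
    HasCompactSupport (dd v f) := hf.fderiv_apply ℝ v

lemma dd_line {f : (Fin 3 → ℝ) → ℝ} (hf : Differentiable ℝ f) (x v : Fin 3 → ℝ) (t : ℝ) :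
    HasDerivAt (fun t : ℝ => f (x + t • v)) (dd v f (x + t • v)) t := by
  have h1 : HasDerivAt (fun t : ℝ => x + t • v) v t := by
    simpa using ((hasDerivAt_id t).smul_const v).const_add x
  exact (hf _).hasFDerivAt.comp_hasDerivAt t h1

lemma sd_aux {f f' f'' : ℝ → ℝ} (h1 : ∀ t, HasDerivAt f (f' t) t)
    (h2 : ∀ t, HasDerivAt f' (f'' t) t) {A η t : ℝ} (ht : 0 ≤ t)
    (h : ∀ τ, |τ| ≤ t → |f'' τ - A| ≤ η) :
    |f t + f (-t) - 2 * f 0 - A * t ^ 2| ≤ η * t ^ 2 := by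
  have h3 : ∀ τ, 0 ≤ τ → τ ≤ t → |f' τ - f' (-τ) - 2 * A * τ| ≤ 2 * η * τ := by
    intro τ h0 hτ
    have hd : ∀ x ∈ Set.Icc (-t) t, HasDerivWithinAt (fun x => f' x - A * x) (f'' x - A) (Set.Icc (-t) t) x := by
      intro x _
      have := (h2 x).fun_sub ((hasDerivAt_id' x).const_mul A)
      simpa using this.hasDerivWithinAt
    have := (convex_Icc (-t) t).norm_image_sub_le_of_norm_hasDerivWithin_le (C := η) hd
      (fun x hx => h x (abs_le.2 hx)) (x := -τ) (y := τ) ⟨by linarith, by linarith⟩ ⟨by linarith, hτ⟩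
    rw [Real.norm_eq_abs, Real.norm_eq_abs, sub_neg_eq_add, abs_of_nonneg (by linarith : 0 ≤ τ + τ)] at this
    calc _ = |f' τ - A * τ - (f' (-τ) - A * -τ)| := by congr 1; ring
      _ ≤ _ := this
      _ = _ := by ring
  set g : ℝ → ℝ := fun t => f t + f (-t) - 2 * f 0 - A * t ^ 2
  have hg : ∀ s, HasDerivAt g (f' s - f' (-s) - 2 * A * s) s := by
    intro s
    have e1 : HasDerivAt (fun s => f (-s)) (- f' (-s)) s := by
      have := (h1 (-s)).comp s (hasDerivAt_neg' s)
      exact this.congr_deriv (by ring)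
    have := (((h1 s).fun_add e1).sub_const (2 * f 0)).fun_sub ((hasDerivAt_pow 2 s).const_mul A)
    exact this.congr_deriv (by norm_num; ring)
  have hmono : ∀ σ : ℝ, |σ| = 1 → σ * g t ≤ η * t ^ 2 := by
    intro σ hσ
    have hd : ∀ s, HasDerivAt (fun s => η * s ^ 2 - σ * g s)
        (η * (2 * s) - σ * (f' s - f' (-s) - 2 * A * s)) s := by
      intro s
      have := ((hasDerivAt_pow 2 s).const_mul η).fun_sub ((hg s).const_mul σ)
      exact this.congr_deriv (by norm_num)
    have hm : MonotoneOn (fun s => η * s ^ 2 - σ * g s) (Set.Icc 0 t) := by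
      refine monotoneOn_of_deriv_nonneg (convex_Icc _ _)
        (fun s _ => (hd s).continuousAt.continuousWithinAt)
        (fun s _ => (hd s).differentiableAt.differentiableWithinAt) fun s hs => ?_
      rw [(hd s).deriv]
      have hs' := interior_subset hs
      have h4 := h3 s hs'.1 hs'.2
      have h5 : σ * (f' s - f' (-s) - 2 * A * s) ≤ |f' s - f' (-s) - 2 * A * s| := by
        calc _ ≤ |σ * (f' s - f' (-s) - 2 * A * s)| := le_abs_self _
          _ = _ := by rw [abs_mul, hσ, one_mul]
      linarith
    have := hm ⟨le_rfl, ht⟩ ⟨ht, le_rfl⟩ ht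
    simp only [g] at this ⊢
    simp at this
    ring_nf at this ⊢
    linarith
  have h4 := hmono 1 (by simp)
  have h5 := hmono (-1) (by simp)
  rw [abs_le]; constructor <;> linarith

lemma lap1_bound {φ : (Fin 3 → ℝ) → ℝ} (hφ : ContDiff ℝ (⊤ : ℕ∞) φ) (v x : Fin 3 → ℝ) {A η t : ℝ}
    (ht : 0 ≤ t) (h : ∀ τ, |τ| ≤ t → |dd v (dd v φ) (x + τ • v) - A| ≤ η) :
    |lap1 (t • v) φ x - A * t ^ 2| ≤ η * t ^ 2 := by
  have := sd_aux (fun t => dd_line (hφ.differentiable (by simp)) x v t)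
    (fun t => dd_line ((dd_smooth hφ v).differentiable (by simp)) x v t) ht h
  simpa [lap1, sub_eq_add_neg] using this

/-- sup bound for continuous compactly supported -/
lemma cs_bound {f : (Fin 3 → ℝ) → ℝ} (hf : Continuous f) (hc : HasCompactSupport f) :
    ∃ M, 0 ≤ M ∧ ∀ x, |f x| ≤ M := by
  obtain ⟨M, hM⟩ := hf.bounded_above_of_compact_support hc
  exact ⟨M, (norm_nonneg _).trans (hM 0), hM⟩

lemma lap1_lim {φ : (Fin 3 → ℝ) → ℝ} (hφ : ContDiff ℝ (⊤ : ℕ∞) φ) (v x : Fin 3 → ℝ) :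
    Filter.Tendsto (fun n : ℕ => ((n : ℝ) + 1) ^ 2 * lap1 ((1 / ((n : ℝ) + 1)) • v) φ x) Filter.atTop
      (nhds (dd v (dd v φ) x)) := by
  rw [Metric.tendsto_atTop]
  intro η hη
  have hc : Continuous fun τ : ℝ => dd v (dd v φ) (x + τ • v) := by
    have := (dd_smooth (dd_smooth hφ v) v).continuous
    fun_prop
  have := Metric.continuousAt_iff.1 (hc.continuousAt (x := (0:ℝ))) (η / 2) (by linarith)
  obtain ⟨δ, hδ, hd⟩ := this
  obtain ⟨N, hN⟩ := exists_nat_one_div_lt hδ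
  refine ⟨N, fun n hn => ?_⟩
  have hpos : (0:ℝ) < (n:ℝ) + 1 := by positivity
  have hlt : 1 / ((n:ℝ) + 1) < δ := lt_of_le_of_lt (by gcongr) hN
  have := lap1_bound hφ v x (A := dd v (dd v φ) x) (η := η / 2) (t := 1 / ((n:ℝ) + 1)) (by positivity)
    (fun τ hτ => by
      have := hd (x := τ) (by rw [Real.dist_eq, sub_zero]; linarith)
      rw [Real.dist_eq] at this
      simp at this ⊢
      exact this.le)
  rw [Real.dist_eq]
  have e : ((n : ℝ) + 1) ^ 2 * lap1 ((1 / ((n : ℝ) + 1)) • v) φ x - dd v (dd v φ) x =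
    ((n : ℝ) + 1) ^ 2 * (lap1 ((1 / ((n : ℝ) + 1)) • v) φ x - dd v (dd v φ) x * (1 / ((n:ℝ) + 1)) ^ 2) := by
    field_simp
  rw [e, abs_mul, abs_of_pos (by positivity)]
  calc _ ≤ ((n : ℝ) + 1) ^ 2 * (η / 2 * (1 / ((n:ℝ) + 1)) ^ 2) := by gcongr
    _ = η / 2 := by field_simp
    _ < η := by linarith

lemma hess_lim_aux {r : ℝ} (hr : 0 < r) {ι : Type} [Fintype ι] (v : ι → Fin 3 → ℝ)
    (φ : (Fin 3 → ℝ) → ℝ) (hφ : ContDiff ℝ (⊤ : ℕ∞) φ) (hφ' : HasCompactSupport φ) :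
    Filter.Tendsto (fun n : ℕ => ENNReal.ofReal ((((n:ℝ) + 1) ^ 2) ^ r) *
        ∫⁻ x, ENNReal.ofReal (|lapS (fun d => (1 / ((n : ℝ) + 1)) • v d) φ x| ^ r)) Filter.atTop
      (nhds (∫⁻ x, ENNReal.ofReal (|∑ d, dd (v d) (dd (v d) φ) x| ^ r))) := by
  have hb : ∀ d, ∃ M, 0 ≤ M ∧ ∀ x, |dd (v d) (dd (v d) φ) x| ≤ M := fun d =>
    cs_bound (dd_smooth (dd_smooth hφ _) _).continuous (dd_cs (dd_cs hφ' _) _)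
  choose M hM0 hM using hb
  obtain ⟨T, hT⟩ := hφ'.isCompact.isBounded.exists_norm_le
  set T' := T + ∑ d, ‖v d‖ with hT'
  have hzero : ∀ (n : ℕ) (x : Fin 3 → ℝ), T' < ‖x‖ → lapS (fun d => (1 / ((n : ℝ) + 1)) • v d) φ x = 0 := by
    intro n x hx
    unfold lapS
    refine Finset.sum_eq_zero fun d _ => ?_
    have hz : ∀ y : Fin 3 → ℝ, ‖y - x‖ ≤ ‖v d‖ → φ y = 0 := by
      intro y hy
      by_contra hne
      have h1 := hT y (subset_tsupport _ hne)
      have h2 : ‖v d‖ ≤ ∑ d, ‖v d‖ :=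
        Finset.single_le_sum (f := fun d => ‖v d‖) (fun _ _ => norm_nonneg _) (Finset.mem_univ d)
      have h3 : ‖x‖ ≤ ‖y‖ + ‖y - x‖ := by
        calc _ = ‖y - (y - x)‖ := by simp
          _ ≤ _ := norm_sub_le _ _
      linarith
    have h1 : ‖(1 / ((n:ℝ) + 1)) • v d‖ ≤ ‖v d‖ := by
      rw [norm_smul, Real.norm_eq_abs, abs_of_pos (by positivity)]
      refine mul_le_of_le_one_left (norm_nonneg _) ?_
      rw [div_le_one (by positivity)]; linarith [Nat.cast_nonneg (α := ℝ) n]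
    simp only [lap1]
    rw [hz _ (by simpa using h1), hz _ (by simpa using h1), hz _ (by simp)]; simp
  have hbd : ∀ (n : ℕ) (x : Fin 3 → ℝ), ((n:ℝ) + 1) ^ 2 * |lapS (fun d => (1 / ((n : ℝ) + 1)) • v d) φ x|
      ≤ ∑ d, M d := by
    intro n x
    calc _ ≤ ((n:ℝ) + 1) ^ 2 * ∑ d, |lap1 ((1 / ((n : ℝ) + 1)) • v d) φ x| := by
          gcongr; exact Finset.abs_sum_le_sum_abs _ _
      _ ≤ ((n:ℝ) + 1) ^ 2 * ∑ d, M d * (1 / ((n:ℝ) + 1)) ^ 2 := by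
          gcongr with d
          have := lap1_bound hφ (v d) x (A := 0) (η := M d) (t := 1 / ((n:ℝ) + 1)) (by positivity)
            (fun τ _ => by rw [sub_zero]; exact hM d _)
          simpa using this
      _ = _ := by rw [← Finset.sum_mul]; field_simp
  have hcont : ∀ n : ℕ, Continuous fun x => lapS (fun d => (1 / ((n : ℝ) + 1)) • v d) φ x := by
    intro n
    have := hφ.continuous
    unfold lapS lap1
    fun_prop
  have hlim := tendsto_lintegral_of_dominated_convergence (μ := (volume : Measure (Fin 3 → ℝ)))
    (F := fun (n : ℕ) x => ENNReal.ofReal ((((n:ℝ) + 1) ^ 2 * |lapS (fun d => (1 / ((n : ℝ) + 1)) • v d) φ x|) ^ r))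
    (f := fun x => ENNReal.ofReal (|∑ d, dd (v d) (dd (v d) φ) x| ^ r))
    (Set.indicator (Metric.closedBall 0 T') (fun _ => ENNReal.ofReal ((∑ d, M d) ^ r)))
    (fun n => by
      refine (ENNReal.continuous_ofReal.comp ?_).measurable
      exact ((hcont n).abs.const_mul _).rpow_const fun _ => Or.inr hr.le)
    (fun n => Filter.Eventually.of_forall fun x => by
      simp only
      by_cases hx : x ∈ Metric.closedBall (0 : Fin 3 → ℝ) T'
      · rw [Set.indicator_of_mem hx]
        exact ENNReal.ofReal_le_ofReal (Real.rpow_le_rpow (by positivity) (hbd n x) hr.le)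
      · rw [hzero n x (by simpa using hx)]
        simp [Real.zero_rpow hr.ne'])
    (by
      rw [lintegral_indicator Metric.isClosed_closedBall.measurableSet, setLIntegral_const]
      exact ENNReal.mul_ne_top ENNReal.ofReal_ne_top measure_closedBall_lt_top.ne)
    (Filter.Eventually.of_forall fun x => by
      have h1 : Filter.Tendsto (fun n : ℕ => ((n:ℝ) + 1) ^ 2 * lapS (fun d => (1 / ((n : ℝ) + 1)) • v d) φ x)
          Filter.atTop (nhds (∑ d, dd (v d) (dd (v d) φ) x)) := by
        simp only [lapS, Finset.mul_sum]
        exact tendsto_finsetSum _ fun d _ => lap1_lim hφ (v d) x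
      have h2 := (ENNReal.continuous_ofReal.tendsto _).comp (h1.abs.rpow_const (p := r) (Or.inr hr.le))
      refine h2.congr fun n => ?_
      simp only [Function.comp]
      rw [abs_mul, abs_of_pos (by positivity : (0:ℝ) < ((n:ℝ) + 1) ^ 2)])
  refine hlim.congr fun n => ?_
  rw [← lintegral_const_mul' _ _ ENNReal.ofReal_ne_top]
  refine lintegral_congr fun x => ?_
  rw [← ENNReal.ofReal_mul (by positivity), Real.mul_rpow (by positivity) (by positivity)]

lemma exists_hess {r s : ℝ} (h : r.HolderConjugate s) :
    ∃ C : ℝ, 0 < C ∧ ∀ (ι : Type) [Fintype ι] (e : ι → Fin 3 → ℤ) (d : ι) (φ : (Fin 3 → ℝ) → ℝ),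
      ContDiff ℝ (⊤ : ℕ∞) φ → HasCompactSupport φ →
      ∫⁻ x, ENNReal.ofReal (|dd (fun j => (e d j : ℝ)) (dd (fun j => (e d j : ℝ)) φ) x| ^ r) ≤
      ENNReal.ofReal C * ∫⁻ x, ENNReal.ofReal
        (|∑ d, dd (fun j => (e d j : ℝ)) (dd (fun j => (e d j : ℝ)) φ) x| ^ r) := by
  obtain ⟨C, hC0, hC⟩ := exists_discrete h
  refine ⟨C, hC0, fun ι _ e d φ hφ hφ' => ?_⟩
  have hr : 0 < r := by linarith [h.lt]
  have h1 := hess_lim_aux hr (fun (_ : Unit) j => (e d j : ℝ)) φ hφ hφ'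
  have h2 := ENNReal.Tendsto.const_mul (a := ENNReal.ofReal C)
    (hess_lim_aux hr (fun d j => (e d j : ℝ)) φ hφ hφ') (Or.inr ENNReal.ofReal_ne_top)
  simp only [Finset.univ_unique, Finset.sum_singleton, lapS] at h1
  refine le_of_tendsto_of_tendsto' h1 h2 fun n => ?_
  rw [← mul_assoc, mul_comm (ENNReal.ofReal C), mul_assoc]
  gcongr
  exact lintegral_est hr hC0 hC e d φ hφ.continuous hφ' (1 / ((n:ℝ) + 1)) (by positivity)

end KMS

namespace KMS

/-- coordinate derivative -/
noncomputable def dj (i : Fin 3) (f : (Fin 3 → ℝ) → ℝ) : (Fin 3 → ℝ) → ℝ := dd (Pi.single i 1) f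

/-- Laplacian -/
noncomputable def lapl (f : (Fin 3 → ℝ) → ℝ) (x : Fin 3 → ℝ) : ℝ := ∑ i, dj i (dj i f) x

lemma two_le_top : (2 : WithTop ℕ∞) ≤ ((⊤ : ℕ∞) : WithTop ℕ∞) := by
  exact WithTop.coe_le_coe.2 (le_top : (2 : ℕ∞) ≤ ⊤)

lemma dd_dd {φ : (Fin 3 → ℝ) → ℝ} (hφ : ContDiff ℝ (⊤ : ℕ∞) φ) (u v x : Fin 3 → ℝ) :
    dd u (dd v φ) x = fderiv ℝ (fderiv ℝ φ) x u v := by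
  have h1 : DifferentiableAt ℝ (fderiv ℝ φ) x :=
    (hφ.fderiv_right (m := (⊤ : ℕ∞)) (by simp)).differentiable (by simp) x
  unfold dd
  rw [fderiv_clm_apply h1 (differentiableAt_const v)]
  simp

lemma dd_symm {φ : (Fin 3 → ℝ) → ℝ} (hφ : ContDiff ℝ (⊤ : ℕ∞) φ) (u v x : Fin 3 → ℝ) :
    dd u (dd v φ) x = dd v (dd u φ) x := by
  rw [dd_dd hφ, dd_dd hφ]
  exact (hφ.contDiffAt.isSymmSndFDerivAt (by simp only [minSmoothness_of_isRCLikeNormedField]; exact two_le_top)) u v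

/-- the six diagonal directions -/
def diag6 : Fin 6 → Fin 3 → ℤ :=
  ![![1,1,0],![1,-1,0],![1,0,1],![1,0,-1],![0,1,1],![0,1,-1]]

lemma vec_eq (v : Fin 3 → ℝ) : v = v 0 • Pi.single 0 1 + v 1 • Pi.single 1 1 + v 2 • Pi.single 2 1 := by
  funext j; fin_cases j <;> simp

lemma bil_expand (B : (Fin 3 → ℝ) →L[ℝ] (Fin 3 → ℝ) →L[ℝ] ℝ) (hs : ∀ u v, B u v = B v u)
    (v : Fin 3 → ℝ) : B v v = v 0 ^ 2 * B (Pi.single 0 1) (Pi.single 0 1) +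
      v 1 ^ 2 * B (Pi.single 1 1) (Pi.single 1 1) + v 2 ^ 2 * B (Pi.single 2 1) (Pi.single 2 1) +
      2 * v 0 * v 1 * B (Pi.single 0 1) (Pi.single 1 1) +
      2 * v 0 * v 2 * B (Pi.single 0 1) (Pi.single 2 1) +
      2 * v 1 * v 2 * B (Pi.single 1 1) (Pi.single 2 1) := by
  have hb : B v v = B (v 0 • Pi.single 0 1 + v 1 • Pi.single 1 1 + v 2 • Pi.single 2 1)
    (v 0 • Pi.single 0 1 + v 1 • Pi.single 1 1 + v 2 • Pi.single 2 1) := by rw [← vec_eq]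
  rw [hb]
  simp only [map_add, map_smul, add_apply, smul_apply, smul_eq_mul]
  rw [hs (Pi.single 1 1) (Pi.single 0 1), hs (Pi.single 2 1) (Pi.single 0 1),
    hs (Pi.single 2 1) (Pi.single 1 1)]
  ring

lemma sum6 (B : (Fin 3 → ℝ) →L[ℝ] (Fin 3 → ℝ) →L[ℝ] ℝ) (hs : ∀ u v, B u v = B v u) :
    ∑ d, B (fun j => (diag6 d j : ℝ)) (fun j => (diag6 d j : ℝ)) =
      4 * ∑ i, B (Pi.single i 1) (Pi.single i 1) := by
  rw [Finset.sum_congr rfl fun d _ => bil_expand B hs _]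
  simp [Fin.sum_univ_succ, diag6]
  ring

lemma coef6 (i k : Fin 3) : ∃ c : Fin 6 → ℝ, (∀ d, |c d| ≤ 1) ∧
    ∀ (B : (Fin 3 → ℝ) →L[ℝ] (Fin 3 → ℝ) →L[ℝ] ℝ) (_ : ∀ u v, B u v = B v u),
      B (Pi.single i 1) (Pi.single k 1) =
        ∑ d, c d * B (fun j => (diag6 d j : ℝ)) (fun j => (diag6 d j : ℝ)) := by
  have aux : ∀ (i k : Fin 3) (c : Fin 6 → ℝ),
    (∀ b : Fin 3 → Fin 3 → ℝ, (∀ i j, b i j = b j i) → b i k = ∑ d, c d *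
      ((diag6 d 0 : ℝ) ^ 2 * b 0 0 + (diag6 d 1 : ℝ) ^ 2 * b 1 1 + (diag6 d 2 : ℝ) ^ 2 * b 2 2 +
        2 * (diag6 d 0 : ℝ) * (diag6 d 1 : ℝ) * b 0 1 + 2 * (diag6 d 0 : ℝ) * (diag6 d 2 : ℝ) * b 0 2 +
        2 * (diag6 d 1 : ℝ) * (diag6 d 2 : ℝ) * b 1 2)) →
    ∀ (B : (Fin 3 → ℝ) →L[ℝ] (Fin 3 → ℝ) →L[ℝ] ℝ) (_ : ∀ u v, B u v = B v u),
      B (Pi.single i 1) (Pi.single k 1) =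
        ∑ d, c d * B (fun j => (diag6 d j : ℝ)) (fun j => (diag6 d j : ℝ)) := by
    intro i k c h B hs
    rw [Finset.sum_congr rfl fun d _ => by rw [bil_expand B hs]]
    exact h (fun i j => B (Pi.single i 1) (Pi.single j 1)) fun i j => hs _ _
  have bd : ∀ c : Fin 6 → ℝ, |c 0| ≤ 1 → |c 1| ≤ 1 → |c 2| ≤ 1 → |c 3| ≤ 1 → |c 4| ≤ 1 → |c 5| ≤ 1 →
      ∀ d, |c d| ≤ 1 := by
    intro c _ _ _ _ _ _ d; fin_cases d <;> assumption
  have h3 : ∀ i : Fin 3, i = 0 ∨ i = 1 ∨ i = 2 := by decide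
  obtain rfl | rfl | rfl := h3 i <;> obtain rfl | rfl | rfl := h3 k
  · refine ⟨![1/4,1/4,1/4,1/4,-1/4,-1/4], ?_, aux 0 0 _ ?_⟩
    · apply bd <;> simp <;> norm_num [abs_le]
    · intro b hb; simp [Fin.sum_univ_succ, diag6]; ring
  · refine ⟨![1/4,-1/4,0,0,0,0], ?_, aux 0 1 _ ?_⟩
    · apply bd <;> simp <;> norm_num [abs_le]
    · intro b hb; simp [Fin.sum_univ_succ, diag6]; ring
  · refine ⟨![0,0,1/4,-1/4,0,0], ?_, aux 0 2 _ ?_⟩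
    · apply bd <;> simp <;> norm_num [abs_le]
    · intro b hb; simp [Fin.sum_univ_succ, diag6]; ring
  · refine ⟨![1/4,-1/4,0,0,0,0], ?_, aux 1 0 _ ?_⟩
    · apply bd <;> simp <;> norm_num [abs_le]
    · intro b hb; rw [hb 1 0]; simp [Fin.sum_univ_succ, diag6]; ring
  · refine ⟨![1/4,1/4,-1/4,-1/4,1/4,1/4], ?_, aux 1 1 _ ?_⟩
    · apply bd <;> simp <;> norm_num [abs_le]
    · intro b hb; simp [Fin.sum_univ_succ, diag6]; ring
  · refine ⟨![0,0,0,0,1/4,-1/4], ?_, aux 1 2 _ ?_⟩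
    · apply bd <;> simp <;> norm_num [abs_le]
    · intro b hb; simp [Fin.sum_univ_succ, diag6]; ring
  · refine ⟨![0,0,1/4,-1/4,0,0], ?_, aux 2 0 _ ?_⟩
    · apply bd <;> simp <;> norm_num [abs_le]
    · intro b hb; rw [hb 2 0]; simp [Fin.sum_univ_succ, diag6]; ring
  · refine ⟨![0,0,0,0,1/4,-1/4], ?_, aux 2 1 _ ?_⟩
    · apply bd <;> simp <;> norm_num [abs_le]
    · intro b hb; rw [hb 2 1]; simp [Fin.sum_univ_succ, diag6]; ring
  · refine ⟨![-1/4,-1/4,1/4,1/4,1/4,1/4], ?_, aux 2 2 _ ?_⟩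
    · apply bd <;> simp <;> norm_num [abs_le]
    · intro b hb; simp [Fin.sum_univ_succ, diag6]; ring

lemma eLp_eq {α : Type*} [MeasurableSpace α] {μ : Measure α} {r : ℝ} (hr : 0 < r) (f : α → ℝ) :
    eLpNorm f (ENNReal.ofReal r) μ = (∫⁻ x, ENNReal.ofReal (|f x| ^ r) ∂μ) ^ (1 / r) := by
  rw [eLpNorm_eq_lintegral_rpow_enorm_toReal (by simpa using hr) ENNReal.ofReal_ne_top,
    ENNReal.toReal_ofReal hr.le]
  congr 1
  refine lintegral_congr fun x => ?_
  rw [← Real.enorm_abs, Real.enorm_of_nonneg (abs_nonneg _), ENNReal.ofReal_rpow_of_nonneg (abs_nonneg _) hr.le]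

/-- Calderon-Zygmund estimate for smooth compactly supported functions -/
lemma exists_CZ {r s : ℝ} (h : r.HolderConjugate s) :
    ∃ C : ℝ, 0 < C ∧ ∀ (i k : Fin 3) (φ : (Fin 3 → ℝ) → ℝ),
      ContDiff ℝ (⊤ : ℕ∞) φ → HasCompactSupport φ →
      eLpNorm (dj i (dj k φ)) (ENNReal.ofReal r) volume ≤
        ENNReal.ofReal C * eLpNorm (lapl φ) (ENNReal.ofReal r) volume := by
  obtain ⟨C, hC0, hC⟩ := exists_hess h
  have hr : 0 < r := by linarith [h.lt]
  have hr1 : 1 ≤ ENNReal.ofReal r := by rw [ENNReal.one_le_ofReal]; exact h.lt.le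
  refine ⟨6 * C ^ (1 / r) * 4, by positivity, fun i k φ hφ hφ' => ?_⟩
  have hsy : ∀ x u v, fderiv ℝ (fderiv ℝ φ) x u v = fderiv ℝ (fderiv ℝ φ) x v u := fun x =>
    hφ.contDiffAt.isSymmSndFDerivAt (by simp only [minSmoothness_of_isRCLikeNormedField]; exact two_le_top)
  obtain ⟨c, hc1, hc2⟩ := coef6 i k
  set D : Fin 6 → (Fin 3 → ℝ) → ℝ := fun d => dd (fun j => (diag6 d j : ℝ)) (dd (fun j => (diag6 d j : ℝ)) φ)
  have e1 : dj i (dj k φ) = ∑ d, c d • D d := by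
    funext x
    simp only [dj, Finset.sum_apply, Pi.smul_apply, smul_eq_mul, D, dd_dd hφ]
    exact hc2 _ (hsy x)
  have e2 : ∀ x, ∑ d, D d x = 4 * lapl φ x := by
    intro x
    simp only [D, lapl, dj, dd_dd hφ]
    exact sum6 _ (hsy x)
  have e3 : ∀ d, eLpNorm (D d) (ENNReal.ofReal r) volume ≤
      ENNReal.ofReal (C ^ (1 / r) * 4) * eLpNorm (lapl φ) (ENNReal.ofReal r) volume := by
    intro d
    have e4 : eLpNorm (fun x => ∑ d, D d x) (ENNReal.ofReal r) volume =
        ENNReal.ofReal 4 * eLpNorm (lapl φ) (ENNReal.ofReal r) volume := by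
      simp only [e2]
      have := eLpNorm_const_smul (4:ℝ) (lapl φ) (ENNReal.ofReal r) volume
      rw [Real.enorm_of_nonneg (by norm_num)] at this
      exact this
    rw [ENNReal.ofReal_mul (by positivity), mul_assoc, ← e4, eLp_eq hr, eLp_eq hr,
      ← ENNReal.ofReal_rpow_of_pos hC0, ← ENNReal.mul_rpow_of_nonneg _ _ (by positivity)]
    exact ENNReal.rpow_le_rpow (hC (Fin 6) diag6 d φ hφ hφ') (by positivity)
  rw [e1]
  calc _ ≤ ∑ d, eLpNorm (c d • D d) (ENNReal.ofReal r) volume :=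
        eLpNorm_sum_le (fun d _ => ((dd_smooth (dd_smooth hφ _) _).continuous.const_smul _).aestronglyMeasurable) hr1
    _ ≤ ∑ d : Fin 6, ENNReal.ofReal (C ^ (1 / r) * 4) * eLpNorm (lapl φ) (ENNReal.ofReal r) volume := by
        refine Finset.sum_le_sum fun d _ => ?_
        rw [eLpNorm_const_smul]
        refine le_trans ?_ (e3 d)
        refine mul_le_of_le_one_left zero_le ?_
        rw [← Real.enorm_abs, Real.enorm_of_nonneg (abs_nonneg _)]
        exact ENNReal.ofReal_le_one.2 (hc1 d)
    _ = _ := by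
        rw [Finset.sum_const, mul_assoc 6, ENNReal.ofReal_mul (by norm_num : (0:ℝ) ≤ 6)]
        simp [mul_assoc]

end KMS

namespace KMS

/-- cutoff -/
noncomputable def mcut (s : ℝ) : ℝ := Real.smoothTransition (16 * s - 1)

lemma mcut_smooth : ContDiff ℝ (⊤ : ℕ∞) mcut :=
  Real.smoothTransition.contDiff.comp (by fun_prop)

/-- radial derivative profile -/
noncomputable def fcut (s : ℝ) : ℝ := 1 / 2 * (mcut s * s ^ (-(3:ℝ) / 2))

lemma fcut_zero {s : ℝ} (hs : s ≤ 1 / 16) : fcut s = 0 := by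
  unfold fcut mcut; rw [Real.smoothTransition.zero_of_nonpos (by linarith)]; simp

lemma fcut_smooth : ContDiff ℝ (⊤ : ℕ∞) fcut := by
  rw [contDiff_iff_contDiffAt]
  intro s
  rcases lt_or_ge s (1 / 16) with h | h
  · have : fcut =ᶠ[nhds s] fun _ => 0 := by
      filter_upwards [gt_mem_nhds h] with t ht
      exact fcut_zero (le_of_lt ht)
    exact contDiffAt_const.congr_of_eventuallyEq this
  · have h0 : s ≠ 0 := by linarith
    exact contDiffAt_const.mul (mcut_smooth.contDiffAt.mul (contDiffAt_id.rpow_const_of_ne h0))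

lemma fcut_deriv {s : ℝ} (hs : 0 < s) :
    6 * fcut s + 4 * s * deriv fcut s = 2 * deriv mcut s * s ^ (-(1:ℝ) / 2) := by
  have h1 : HasDerivAt mcut (deriv mcut s) s :=
    (mcut_smooth.differentiable (by simp) s).hasDerivAt
  have h2 := ((h1.fun_mul (Real.hasDerivAt_rpow_const (p := -(3:ℝ) / 2) (Or.inl hs.ne'))).const_mul (1 / 2 : ℝ))
  have h3 : HasDerivAt fcut _ s := h2
  rw [h3.deriv]
  unfold fcut
  have e1 : s ^ (-(3:ℝ) / 2 - 1) * s = s ^ (-(3:ℝ) / 2) := by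
    rw [← Real.rpow_add_one hs.ne']; congr 1; ring
  have e2 : s ^ (-(3:ℝ) / 2) * s = s ^ (-(1:ℝ) / 2) := by
    rw [← Real.rpow_add_one hs.ne']; congr 1; ring
  rw [← e2, ← e1]; ring

/-- radial profile -/
noncomputable def Fcut (s : ℝ) : ℝ := -1 + ∫ t in (1:ℝ)..s, fcut t

lemma Fcut_deriv (s : ℝ) : HasDerivAt Fcut (fcut s) s := by
  have := intervalIntegral.integral_hasDerivAt_right (fcut_smooth.continuous.intervalIntegrable 1 s)
    (fcut_smooth.continuous.stronglyMeasurableAtFilter _ _) fcut_smooth.continuous.continuousAt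
  exact this.const_add (-1)

lemma Fcut_smooth : ContDiff ℝ (⊤ : ℕ∞) Fcut := by
  rw [contDiff_infty_iff_deriv]
  refine ⟨fun s => (Fcut_deriv s).differentiableAt, ?_⟩
  have : deriv Fcut = fcut := by funext s; exact (Fcut_deriv s).deriv
  rw [this]; exact fcut_smooth

lemma Fcut_eq {s : ℝ} (hs : 1 / 8 ≤ s) : Fcut s = - s ^ (-(1:ℝ) / 2) := by
  unfold Fcut
  have h1 : ∀ t ∈ Set.uIcc 1 s, 1 / 8 ≤ t := by
    intro t ht
    rw [Set.mem_uIcc] at ht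
    rcases ht with h | h <;> linarith [h.1]
  have h2 : ∫ t in (1:ℝ)..s, fcut t = (- s ^ (-(1:ℝ) / 2)) - (- (1:ℝ) ^ (-(1:ℝ) / 2)) := by
    refine intervalIntegral.integral_eq_sub_of_hasDerivAt (f := fun s => - s ^ (-(1:ℝ) / 2)) ?_ (fcut_smooth.continuous.intervalIntegrable 1 s)
    intro t ht
    have ht' := h1 t ht
    have := (Real.hasDerivAt_rpow_const (x := t) (p := -(1:ℝ) / 2) (Or.inl (by linarith))).fun_neg
    refine this.congr_deriv ?_
    unfold fcut mcut
    rw [Real.smoothTransition.one_of_one_le (by linarith)]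
    have : -(1:ℝ) / 2 - 1 = -3 / 2 := by ring
    rw [this]; ring
  rw [h2]; simp

lemma mcut_mono : Monotone mcut := by
  intro a b h; exact Real.smoothTransition.monotone (by linarith)

lemma mcut_deriv_nonneg (s : ℝ) : 0 ≤ deriv mcut s := mcut_mono.deriv_nonneg

lemma mcut_deriv_zero {s : ℝ} (hs : 1 / 8 < s) : deriv mcut s = 0 := by
  have : mcut =ᶠ[nhds s] fun _ => 1 := by
    filter_upwards [lt_mem_nhds hs] with t ht
    exact Real.smoothTransition.one_of_one_le (by linarith)
  rw [this.deriv_eq]; simp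

lemma mcut_deriv_ne : ∃ s, 0 < s ∧ deriv mcut s ≠ 0 := by
  obtain ⟨c, hc, hc'⟩ := exists_deriv_eq_slope mcut (a := 1 / 16) (b := 1 / 8) (by norm_num)
    mcut_smooth.continuous.continuousOn (fun x _ => (mcut_smooth.differentiable (by simp) x).differentiableWithinAt)
  refine ⟨c, by linarith [hc.1], ?_⟩
  rw [hc']
  have h1 : mcut (1 / 8) = 1 := Real.smoothTransition.one_of_one_le (by norm_num)
  have h2 : mcut (1 / 16) = 0 := Real.smoothTransition.zero_of_nonpos (by norm_num)
  rw [h1, h2]; norm_num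

/-- squared euclidean length -/
noncomputable def sqn (x : Fin 3 → ℝ) : ℝ := ∑ j, x j ^ 2

lemma sqn_smooth : ContDiff ℝ (⊤ : ℕ∞) sqn := by unfold sqn; fun_prop

lemma sqn_nonneg (x : Fin 3 → ℝ) : 0 ≤ sqn x := Finset.sum_nonneg fun _ _ => sq_nonneg _

lemma sqn_smul (c : ℝ) (x : Fin 3 → ℝ) : sqn (c • x) = c ^ 2 * sqn x := by
  simp [sqn, mul_pow, Finset.mul_sum]

lemma sqn_dj (i : Fin 3) (x : Fin 3 → ℝ) : dj i sqn x = 2 * x i := by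
  have h : HasFDerivAt sqn (∑ j, (2 * x j) • (ContinuousLinearMap.proj (R := ℝ) (φ := fun _ : Fin 3 => ℝ) j)) x := by
    unfold sqn
    refine HasFDerivAt.fun_sum fun j _ => ?_
    have := ((ContinuousLinearMap.proj (R := ℝ) (φ := fun _ : Fin 3 => ℝ) j).hasFDerivAt (x := x)).pow 2
    simpa using this
  unfold dj dd
  rw [h.fderiv]
  simp [Pi.single_apply]

lemma dj_comp {F : ℝ → ℝ} (hF : Differentiable ℝ F) {g : (Fin 3 → ℝ) → ℝ} (hg : Differentiable ℝ g)
    (i : Fin 3) (x : Fin 3 → ℝ) : dj i (fun x => F (g x)) x = deriv F (g x) * dj i g x := by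
  have h := (hF (g x)).hasDerivAt.comp_hasFDerivAt x (hg x).hasFDerivAt
  unfold dj dd
  have : HasFDerivAt (fun x => F (g x)) _ x := h
  rw [this.fderiv]; simp

lemma dj_mul {f g : (Fin 3 → ℝ) → ℝ} (hf : Differentiable ℝ f) (hg : Differentiable ℝ g)
    (i : Fin 3) (x : Fin 3 → ℝ) : dj i (fun x => f x * g x) x = f x * dj i g x + g x * dj i f x := by
  unfold dj dd
  rw [((hf x).hasFDerivAt.fun_mul (hg x).hasFDerivAt).fderiv]; simp

lemma dj_smulArg {f : (Fin 3 → ℝ) → ℝ} (hf : Differentiable ℝ f) (c b : ℝ)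
    (i : Fin 3) (x : Fin 3 → ℝ) : dj i (fun x => b * f (c • x)) x = b * c * dj i f (c • x) := by
  unfold dj dd
  have h : HasFDerivAt (fun x : Fin 3 → ℝ => c • x) (c • ContinuousLinearMap.id ℝ (Fin 3 → ℝ)) x :=
    (hasFDerivAt_id x).const_smul c
  have h2 := ((hf (c • x)).hasFDerivAt.comp x h).const_mul b
  have h3 : HasFDerivAt (fun x => b * f (c • x)) _ x := h2
  rw [h3.fderiv]
  simp; ring

/-- the fundamental profile -/
noncomputable def Phi (x : Fin 3 → ℝ) : ℝ := Fcut (sqn x)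

lemma Phi_smooth : ContDiff ℝ (⊤ : ℕ∞) Phi := Fcut_smooth.comp sqn_smooth

/-- its Laplacian -/
noncomputable def kap : (Fin 3 → ℝ) → ℝ := lapl Phi

lemma lapl_smooth {f : (Fin 3 → ℝ) → ℝ} (hf : ContDiff ℝ (⊤ : ℕ∞) f) : ContDiff ℝ (⊤ : ℕ∞) (lapl f) := by
  unfold lapl; exact ContDiff.sum fun i _ => dd_smooth (dd_smooth hf _) _

lemma kap_eq (x : Fin 3 → ℝ) : kap x = 6 * fcut (sqn x) + 4 * sqn x * deriv fcut (sqn x) := by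
  have hs := sqn_smooth.differentiable (by simp)
  have hdF : deriv Fcut = fcut := by funext s; exact (Fcut_deriv s).deriv
  have h1 : ∀ i, dj i Phi = fun x => fcut (sqn x) * (2 * x i) := by
    intro i; funext x
    have := dj_comp (fun s => (Fcut_deriv s).differentiableAt) hs i x
    rw [hdF, sqn_dj] at this
    exact this
  have hp : ∀ i (x : Fin 3 → ℝ), dj i (fun x : Fin 3 → ℝ => 2 * x i) x = 2 := by
    intro i x
    have h : HasFDerivAt (fun x : Fin 3 → ℝ => 2 * x i)
      ((2:ℝ) • (ContinuousLinearMap.proj (R := ℝ) (φ := fun _ : Fin 3 => ℝ) i)) x :=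
      ((ContinuousLinearMap.proj (R := ℝ) (φ := fun _ : Fin 3 => ℝ) i).hasFDerivAt (x := x)).const_mul 2
    unfold dj dd
    rw [h.fderiv]; simp
  have h2 : ∀ i, dj i (dj i Phi) x = 2 * fcut (sqn x) + 4 * x i ^ 2 * deriv fcut (sqn x) := by
    intro i
    rw [h1 i]
    rw [dj_mul (f := fun x => fcut (sqn x)) (g := fun x : Fin 3 → ℝ => 2 * x i)
      ((fcut_smooth.comp sqn_smooth).differentiable (by simp)) (by fun_prop) i x, hp,
      dj_comp (fcut_smooth.differentiable (by simp)) hs, sqn_dj]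
    ring
  unfold kap lapl
  simp only [h2]
  have hq : sqn x = x 0 ^ 2 + x 1 ^ 2 + x 2 ^ 2 := by simp [sqn, Fin.sum_univ_three]
  rw [Fin.sum_univ_three]
  linear_combination (-4 * deriv fcut (sqn x)) * hq

lemma kap_eq' (x : Fin 3 → ℝ) (hx : 0 < sqn x) :
    kap x = 2 * deriv mcut (sqn x) * sqn x ^ (-(1:ℝ) / 2) := by rw [kap_eq, fcut_deriv hx]

lemma kap_nonneg (x : Fin 3 → ℝ) : 0 ≤ kap x := by
  rcases (sqn_nonneg x).eq_or_lt with h | h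
  · rw [kap_eq, ← h, fcut_zero (by norm_num)]; simp
  · rw [kap_eq' x h]; have := mcut_deriv_nonneg (sqn x); positivity

lemma sqn_coord {x : Fin 3 → ℝ} (h : sqn x ≤ 1 / 8) (j : Fin 3) : |x j| ≤ 1 / 2 := by
  have h1 : x j ^ 2 ≤ sqn x :=
    Finset.single_le_sum (f := fun j => x j ^ 2) (fun _ _ => sq_nonneg _) (Finset.mem_univ j)
  rw [abs_le]; constructor <;> nlinarith

lemma kap_supp (x : Fin 3 → ℝ) (hx : kap x ≠ 0) : sqn x ≤ 1 / 8 := by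
  by_contra h
  push Not at h
  apply hx
  rw [kap_eq' x (by linarith), mcut_deriv_zero h]; simp

lemma cs_of_box {f : (Fin 3 → ℝ) → ℝ} {T : ℝ} (h : ∀ x, f x ≠ 0 → ∀ j, |x j| ≤ T) :
    HasCompactSupport f := by
  refine HasCompactSupport.intro (isCompact_closedBall (0 : Fin 3 → ℝ) (max T 0)) fun x hx => ?_
  by_contra hne
  apply hx
  rw [mem_closedBall_zero_iff, pi_norm_le_iff_of_nonneg (le_max_right _ _)]
  intro j
  exact (h x hne j).trans (le_max_left _ _)

lemma kap_smooth : ContDiff ℝ (⊤ : ℕ∞) kap := lapl_smooth Phi_smooth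

lemma kap_cs : HasCompactSupport kap := cs_of_box fun x hx => sqn_coord (kap_supp x hx)

lemma kap_int_pos : 0 < ∫ x, kap x := by
  obtain ⟨s, hs, hs'⟩ := mcut_deriv_ne
  have hq : sqn (Pi.single 0 (Real.sqrt s)) = s := by
    simp [sqn, Fin.sum_univ_succ, Real.sq_sqrt hs.le]
  refine kap_smooth.continuous.integral_pos_of_hasCompactSupport_nonneg_nonzero (x := Pi.single 0 (Real.sqrt s))
    kap_cs kap_nonneg ?_
  rw [kap_eq' _ (by rw [hq]; exact hs), hq]
  have := Real.rpow_pos_of_pos hs (-(1:ℝ) / 2)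
  positivity

lemma lapl_smulArg {f : (Fin 3 → ℝ) → ℝ} (hf : ContDiff ℝ (⊤ : ℕ∞) f) (c b : ℝ) (x : Fin 3 → ℝ) :
    lapl (fun x => b * f (c • x)) x = b * c ^ 2 * lapl f (c • x) := by
  unfold lapl
  rw [Finset.mul_sum]
  refine Finset.sum_congr rfl fun i _ => ?_
  have h1 : dj i (fun x => b * f (c • x)) = fun x => (b * c) * dj i f (c • x) := by
    funext x; exact dj_smulArg (hf.differentiable (by simp)) c b i x
  rw [h1, dj_smulArg (f := dj i f) ((dd_smooth hf _).differentiable (by simp))]; ring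

lemma dj_sub {f g : (Fin 3 → ℝ) → ℝ} (hf : Differentiable ℝ f) (hg : Differentiable ℝ g)
    (i : Fin 3) (x : Fin 3 → ℝ) : dj i (fun x => f x - g x) x = dj i f x - dj i g x := by
  unfold dj dd
  rw [((hf x).hasFDerivAt.fun_sub (hg x).hasFDerivAt).fderiv]; simp

lemma lapl_sub {f g : (Fin 3 → ℝ) → ℝ} (hf : ContDiff ℝ (⊤ : ℕ∞) f) (hg : ContDiff ℝ (⊤ : ℕ∞) g)
    (x : Fin 3 → ℝ) : lapl (fun x => f x - g x) x = lapl f x - lapl g x := by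
  unfold lapl
  rw [← Finset.sum_sub_distrib]
  refine Finset.sum_congr rfl fun i _ => ?_
  have h1 : dj i (fun x => f x - g x) = fun x => dj i f x - dj i g x := by
    funext x; exact dj_sub (hf.differentiable (by simp)) (hg.differentiable (by simp)) i x
  rw [h1]
  exact dj_sub ((dd_smooth hf _).differentiable (by simp)) ((dd_smooth hg _).differentiable (by simp)) i x

/-- parametrix -/
lemma exists_param (ε : ℝ) (hε : 0 < ε) (hε1 : ε ≤ 1) : ∃ Γ : (Fin 3 → ℝ) → ℝ,
    ContDiff ℝ (⊤ : ℕ∞) Γ ∧ (∀ x, Γ x ≠ 0 → ∀ j, |x j| ≤ 1 / 2) ∧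
    ∀ x, lapl Γ x = ε⁻¹ ^ 3 * kap (ε⁻¹ • x) - kap x := by
  have hs : ContDiff ℝ (⊤ : ℕ∞) fun x : Fin 3 → ℝ => ε⁻¹ * Phi (ε⁻¹ • x) :=
    contDiff_const.mul (Phi_smooth.comp (contDiff_const_smul _))
  refine ⟨fun x => ε⁻¹ * Phi (ε⁻¹ • x) - Phi x, hs.sub Phi_smooth, ?_, ?_⟩
  · intro x hx
    refine sqn_coord ?_
    by_contra h
    push Not at h
    apply hx
    have h0 : 0 < sqn x := by linarith
    have h1 : 1 ≤ ε⁻¹ := (one_le_inv₀ hε).2 hε1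
    have h2 : 1 / 8 ≤ sqn (ε⁻¹ • x) := by rw [sqn_smul]; nlinarith
    simp only [Phi]
    rw [Fcut_eq h2, Fcut_eq h.le, sqn_smul, Real.mul_rpow (by positivity) h0.le]
    have : (ε⁻¹ ^ 2) ^ (-(1:ℝ) / 2) = ε := by
      rw [← Real.rpow_natCast, ← Real.rpow_mul (by positivity)]
      norm_num
      rw [Real.rpow_neg_one, inv_inv]
    rw [this]; field_simp; ring
  · intro x
    rw [lapl_sub hs Phi_smooth, lapl_smulArg Phi_smooth]
    unfold kap; ring

end KMS

namespace KMS

lemma Q3_eq : Q3 = Set.univ.pi fun _ => Set.Ioo (0:ℝ) 1 := by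
  ext x; simp [Q3]

lemma Q3_open : IsOpen Q3 := by
  rw [Q3_eq]; exact isOpen_set_pi Set.finite_univ fun _ _ => isOpen_Ioo

lemma Q3_meas : MeasurableSet Q3 := Q3_open.measurableSet

lemma Q3_vol : volume Q3 = 1 := by
  rw [Q3_eq, Real.volume_pi_Ioo]; simp

lemma Q3_sub : Q3 ⊆ Set.Icc 0 1 := by
  intro x hx
  exact ⟨fun j => (hx j).1.le, fun j => (hx j).2.le⟩

lemma Q3_closure : closure Q3 = Set.Icc 0 1 := by
  rw [Q3_eq, closure_pi_set]
  simp only [closure_Ioo (zero_ne_one (α := ℝ))]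
  rw [Set.pi_univ_Icc]; rfl

lemma Q3_ae : (Q3 : Set (Fin 3 → ℝ)) =ᵐ[volume] Set.Icc 0 1 := by
  rw [Q3_eq]
  exact Measure.univ_pi_Ioo_ae_eq_Icc

instance Q3_prob : IsProbabilityMeasure (volume.restrict Q3) := ⟨by simp [Q3_vol]⟩

lemma intQ {f : (Fin 3 → ℝ) → ℝ} (hf : Continuous f) : IntegrableOn f Q3 :=
  (hf.integrableOn_Icc).mono_set Q3_sub

/-- the box -/
def bx : Set (Fin 3 → ℝ) := Set.Icc (fun _ => -1/2) (fun _ => 3/2)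

lemma bx_mem {x : Fin 3 → ℝ} : x ∈ bx ↔ ∀ j, -1/2 ≤ x j ∧ x j ≤ 3/2 := by
  unfold bx; rw [Set.mem_Icc, Pi.le_def, Pi.le_def, forall_and]

lemma bx_vol : volume bx = 8 := by
  unfold bx; rw [Real.volume_Icc_pi]; norm_num [Fin.prod_univ_three, ← ENNReal.ofReal_mul]

lemma Q3_bx : Q3 ⊆ bx := fun x hx => bx_mem.2 fun j => ⟨by linarith [(hx j).1], by linarith [(hx j).2]⟩

lemma cs_of_bx {f : (Fin 3 → ℝ) → ℝ} (h : ∀ x, f x ≠ 0 → x ∈ bx) : HasCompactSupport f :=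
  HasCompactSupport.intro (K := bx) isCompact_Icc fun x hx => by
    by_contra hne; exact hx (h x hne)

/-- L^r norm -/
noncomputable def N (r : ℝ) (f : (Fin 3 → ℝ) → ℝ) : ℝ := (eLpNorm f (ENNReal.ofReal r) volume).toReal

lemma N_nonneg (r : ℝ) (f) : 0 ≤ N r f := ENNReal.toReal_nonneg

lemma memN {r : ℝ} {f : (Fin 3 → ℝ) → ℝ} (hf : Continuous f) (h : HasCompactSupport f) :
    MemLp f (ENNReal.ofReal r) volume := hf.memLp_of_hasCompactSupport h

lemma N_add {r : ℝ} (hr : 1 ≤ r) {f g : (Fin 3 → ℝ) → ℝ} (hf : MemLp f (ENNReal.ofReal r) volume)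
    (hg : MemLp g (ENNReal.ofReal r) volume) : N r (fun x => f x + g x) ≤ N r f + N r g := by
  unfold N
  rw [← ENNReal.toReal_add hf.2.ne hg.2.ne]
  refine ENNReal.toReal_mono (ENNReal.add_ne_top.2 ⟨hf.2.ne, hg.2.ne⟩) ?_
  exact eLpNorm_add_le hf.1 hg.1 (by simpa using ENNReal.ofReal_le_ofReal hr)

lemma N_sub {r : ℝ} (hr : 1 ≤ r) {f g : (Fin 3 → ℝ) → ℝ} (hf : MemLp f (ENNReal.ofReal r) volume)
    (hg : MemLp g (ENNReal.ofReal r) volume) : N r (fun x => f x - g x) ≤ N r f + N r g := by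
  unfold N
  rw [← ENNReal.toReal_add hf.2.ne hg.2.ne]
  refine ENNReal.toReal_mono (ENNReal.add_ne_top.2 ⟨hf.2.ne, hg.2.ne⟩) ?_
  exact eLpNorm_sub_le hf.1 hg.1 (by simpa using ENNReal.ofReal_le_ofReal hr)

lemma N_mul {r : ℝ} (c : ℝ) (f : (Fin 3 → ℝ) → ℝ) : N r (fun x => c * f x) = |c| * N r f := by
  unfold N
  have := eLpNorm_const_smul (p := ENNReal.ofReal r) (μ := volume) c f
  have h2 : (fun x => c * f x) = c • f := by funext x; simp
  rw [h2, this, ENNReal.toReal_mul]; simp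

lemma N_bound {r : ℝ} (hr : 1 ≤ r) {f : (Fin 3 → ℝ) → ℝ} {B : ℝ} (hB : 0 ≤ B)
    (h : ∀ x, |f x| ≤ B) (hs : ∀ x, f x ≠ 0 → x ∈ bx) : N r f ≤ 8 * B := by
  unfold N
  rw [← eLpNorm_restrict_eq_of_support_subset (s := bx) (fun x hx => hs x hx)]
  have h1 := eLpNorm_le_of_ae_bound (μ := volume.restrict bx) (p := ENNReal.ofReal r) (f := f) (C := B)
    (Filter.Eventually.of_forall h)
  refine ENNReal.toReal_le_of_le_ofReal (by positivity) (h1.trans ?_)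
  rw [Measure.restrict_apply_univ, bx_vol, ENNReal.ofReal_mul (by norm_num),
    ENNReal.toReal_ofReal (by linarith)]
  gcongr
  rw [show ENNReal.ofReal 8 = 8 by norm_num]
  calc (8:ℝ≥0∞) ^ r⁻¹ ≤ 8 ^ (1:ℝ) := ENNReal.rpow_le_rpow_of_exponent_le (by norm_num) (inv_le_one_of_one_le₀ hr)
    _ = 8 := ENNReal.rpow_one _

lemma L1_le {r : ℝ} (hr : 1 ≤ r) {g : (Fin 3 → ℝ) → ℝ} (hg : Continuous g)
    (hs : ∀ x, g x ≠ 0 → x ∈ Q3) : ∫ x, |g x| ≤ N r g := by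
  have hcs : HasCompactSupport g := cs_of_bx fun x hx => Q3_bx (hs x hx)
  have h1 : eLpNorm g 1 volume ≤ eLpNorm g (ENNReal.ofReal r) volume := by
    rw [← eLpNorm_restrict_eq_of_support_subset (s := Q3) (fun x hx => hs x hx),
      ← eLpNorm_restrict_eq_of_support_subset (s := Q3) (p := ENNReal.ofReal r) (fun x hx => hs x hx)]
    exact eLpNorm_le_eLpNorm_of_exponent_le (by simpa using ENNReal.ofReal_le_ofReal hr)
      hg.aestronglyMeasurable
  have h2 := ENNReal.toReal_mono (memN (r := r) hg hcs).2.ne h1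
  rw [eLpNorm_one_eq_lintegral_enorm] at h2
  refine le_trans (le_of_eq ?_) h2
  exact integral_norm_eq_lintegral_enorm hg.aestronglyMeasurable

/-- slopes, offsets, weights -/
noncomputable def sl : Fin 5 → ℝ := ![1, -1, -2, -1, -2]
/-- offsets -/
noncomputable def off : Fin 5 → ℝ := ![0, 0, 0, 2, 3]
/-- weights -/
noncomputable def al : Fin 5 → ℝ := ![1, 3, -4, 3, -4]

/-- affine reflections -/
noncomputable def rho (m : Fin 3 → Fin 5) (x : Fin 3 → ℝ) : Fin 3 → ℝ := fun j => sl (m j) * x j + off (m j)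

lemma rho_cont (m) : Continuous (rho m) := by unfold rho; fun_prop

/-- reflection operator -/
noncomputable def TT (β : Fin 3 → Fin 5 → ℝ) (f : (Fin 3 → ℝ) → ℝ) (x : Fin 3 → ℝ) : ℝ :=
  ∑ m : Fin 3 → Fin 5, (∏ j, β j (m j)) * f (rho m x)

lemma TT_cont (β) {f : (Fin 3 → ℝ) → ℝ} (hf : Continuous f) : Continuous (TT β f) := by
  unfold TT
  exact continuous_finsetSum _ fun m _ => continuous_const.mul (hf.comp (rho_cont m))

lemma rho_off {m : Fin 5} (hm : m ≠ 0) {t : ℝ} (ht : t ∈ Set.Ioo (0:ℝ) 1) :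
    sl m * t + off m ∉ Set.Ioo (0:ℝ) 1 := by
  obtain ⟨h1, h2⟩ := ht
  have h5 : m = 0 ∨ m = 1 ∨ m = 2 ∨ m = 3 ∨ m = 4 := by revert m; decide
  rintro ⟨h3, h4⟩
  rcases h5 with rfl | rfl | rfl | rfl | rfl
  · exact hm rfl
  all_goals (simp [sl, off] at h3 h4; linarith)

lemma rho_zero (x) : rho 0 x = x := by funext j; simp [rho, sl, off]

lemma TT_id {g : (Fin 3 → ℝ) → ℝ} (hs : ∀ x, g x ≠ 0 → x ∈ Q3) {x : Fin 3 → ℝ} (hx : x ∈ Q3) :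
    TT (fun _ => al) g x = g x := by
  unfold TT
  rw [Finset.sum_eq_single 0]
  · rw [rho_zero]; simp [al]
  · intro m _ hm
    have : ∃ j, m j ≠ 0 := by
      by_contra h; push Not at h; exact hm (funext h)
    obtain ⟨j, hj⟩ := this
    have h0 : g (rho m x) = 0 := by
      by_contra hne
      exact rho_off hj (hx j) (hs _ hne j)
    rw [h0, mul_zero]
  · intro h; exact absurd (Finset.mem_univ _) h

/-- total weight -/
noncomputable def Kt : ℝ := ∑ m : Fin 3 → Fin 5, |∏ j, al (m j)|

lemma TT_bound {f : (Fin 3 → ℝ) → ℝ} {B : ℝ} (h : ∀ x, |f x| ≤ B) (x) :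
    |TT (fun _ => al) f x| ≤ Kt * B := by
  unfold TT Kt
  rw [Finset.sum_mul]
  refine (Finset.abs_sum_le_sum_abs _ _).trans (Finset.sum_le_sum fun m _ => ?_)
  rw [abs_mul]
  exact mul_le_mul_of_nonneg_left (h _) (abs_nonneg _)

lemma Kt_nonneg : 0 ≤ Kt := Finset.sum_nonneg fun _ _ => abs_nonneg _

/-- the functional -/
noncomputable def LL (a f : (Fin 3 → ℝ) → ℝ) : ℝ := ∫ x in Q3, a x * TT (fun _ => al) f x

lemma LL_bound {a f : (Fin 3 → ℝ) → ℝ} {M B : ℝ} (ha : ∀ x ∈ Q3, |a x| ≤ M) (hM : 0 ≤ M) (h : ∀ x, |f x| ≤ B) :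
    |LL a f| ≤ M * (Kt * B) := by
  unfold LL
  have := norm_setIntegral_le_of_norm_le_const (μ := volume) (s := Q3) (C := M * (Kt * B))
    (f := fun x => a x * TT (fun _ => al) f x) (by rw [Q3_vol]; simp) (fun x hx => by
      rw [Real.norm_eq_abs, abs_mul]
      exact mul_le_mul (ha x hx) (TT_bound h x) (abs_nonneg _) hM)
  simpa [Measure.real, Q3_vol] using this

lemma LL_sub {a f g : (Fin 3 → ℝ) → ℝ} (ha : Continuous a) (hf : Continuous f) (hg : Continuous g) :
    LL a (fun x => f x - g x) = LL a f - LL a g := by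
  unfold LL
  rw [← integral_sub (intQ (f := fun x => a x * TT (fun _ => al) f x) (ha.mul (TT_cont _ hf)))
    (intQ (f := fun x => a x * TT (fun _ => al) g x) (ha.mul (TT_cont _ hg)))]
  congr 1; funext x
  simp only [TT, mul_sub, Finset.sum_sub_distrib]

lemma LL_sum {ι : Type*} (s : Finset ι) {a : (Fin 3 → ℝ) → ℝ} {f : ι → (Fin 3 → ℝ) → ℝ} (ha : Continuous a)
    (hf : ∀ i ∈ s, Continuous (f i)) :
    LL a (fun x => ∑ i ∈ s, f i x) = ∑ i ∈ s, LL a (f i) := by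
  unfold LL
  rw [← integral_finsetSum s fun i hi => intQ (f := fun x => a x * TT (fun _ => al) (f i) x) (ha.mul (TT_cont _ (hf i hi)))]
  congr 1; funext x
  simp only [TT, Finset.mul_sum]
  rw [Finset.sum_comm]

lemma LL_smul {a f : (Fin 3 → ℝ) → ℝ} (c : ℝ) :
    LL a (fun x => c * f x) = c * LL a f := by
  unfold LL
  rw [← integral_const_mul]
  congr 1; funext x
  simp only [TT, Finset.mul_sum]
  refine Finset.sum_congr rfl fun i _ => by ring

lemma LL_id {a g : (Fin 3 → ℝ) → ℝ} (hs : ∀ x, g x ≠ 0 → x ∈ Q3) : LL a g = ∫ x in Q3, a x * g x := by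
  unfold LL
  refine setIntegral_congr_fun Q3_meas fun x hx => ?_
  simp only [TT_id hs hx]

end KMS

namespace KMS

/-- convolution -/
noncomputable def cv (g k : (Fin 3 → ℝ) → ℝ) (x : Fin 3 → ℝ) : ℝ := ∫ t, g t * k (x - t)

lemma cv_eq (g k : (Fin 3 → ℝ) → ℝ) :
    cv g k = convolution g k (ContinuousLinearMap.mul ℝ ℝ) volume := by
  funext x; rw [convolution_mul]; rfl

lemma cv_smooth {g k : (Fin 3 → ℝ) → ℝ} (hg : Continuous g) (hk : ContDiff ℝ (⊤ : ℕ∞) k)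
    (hc : HasCompactSupport k) : ContDiff ℝ (⊤ : ℕ∞) (cv g k) := by
  rw [cv_eq]
  exact hc.contDiff_convolution_right _ hg.locallyIntegrable hk

lemma cv_dj {g k : (Fin 3 → ℝ) → ℝ} (hg : Continuous g) (hk : ContDiff ℝ (⊤ : ℕ∞) k)
    (hc : HasCompactSupport k) (i : Fin 3) : dj i (cv g k) = cv g (dj i k) := by
  funext x
  have h := hc.hasFDerivAt_convolution_right (ContinuousLinearMap.mul ℝ ℝ) hg.locallyIntegrable
    (hk.of_le (by simp)) x (μ := volume)
  unfold dj dd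
  rw [cv_eq, h.fderiv, cv_eq]
  exact convolution_precompR_apply (ContinuousLinearMap.mul ℝ ℝ) hg.locallyIntegrable
    (hc.fderiv ℝ) (hk.continuous_fderiv (by simp)) x (Pi.single i 1)

lemma cv_int {g k : (Fin 3 → ℝ) → ℝ} (hg : Continuous g) (hgc : HasCompactSupport g) (hk : Continuous k)
    (x) : Integrable fun t => g t * k (x - t) :=
  (hg.mul (hk.comp (by fun_prop))).integrable_of_hasCompactSupport hgc.mul_right

lemma lapl_cv {g k : (Fin 3 → ℝ) → ℝ} (hg : Continuous g) (hgc : HasCompactSupport g)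
    (hk : ContDiff ℝ (⊤ : ℕ∞) k)
    (hc : HasCompactSupport k) (x) : lapl (cv g k) x = cv g (lapl k) x := by
  unfold lapl
  have h : ∀ i, dj i (dj i (cv g k)) = cv g (dj i (dj i k)) := by
    intro i
    rw [cv_dj hg hk hc, cv_dj (k := dj i k) hg (dd_smooth hk _) (dd_cs hc _)]
  simp only [h]
  unfold cv
  rw [← integral_finsetSum _ fun i _ => cv_int (k := dj i (dj i k)) hg hgc (dd_smooth (dd_smooth hk _) _).continuous x]
  congr 1; funext t
  rw [Finset.mul_sum]

lemma cv_supp {g k : (Fin 3 → ℝ) → ℝ} (hg : ∀ x, g x ≠ 0 → x ∈ Q3)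
    (hk : ∀ x, k x ≠ 0 → ∀ j, |x j| ≤ 1 / 2) (x) (hx : cv g k x ≠ 0) : x ∈ bx := by
  by_contra hb
  apply hx
  unfold cv
  have : ∀ t, g t * k (x - t) = 0 := by
    intro t
    by_contra hne
    have h1 := hg t (left_ne_zero_of_mul hne)
    have h2 := hk _ (right_ne_zero_of_mul hne)
    apply hb
    rw [bx_mem]; intro j
    have h3 := h1 j
    have h4 := abs_le.1 (h2 j)
    rw [Pi.sub_apply] at h4
    exact ⟨by linarith [h3.1], by linarith [h3.2]⟩
  simp [this]

lemma cv_bound {g k : (Fin 3 → ℝ) → ℝ} {B : ℝ} (hg : Continuous g) (hgc : HasCompactSupport g)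
    (hk : ∀ x, |k x| ≤ B) (x) : |cv g k x| ≤ B * ∫ t, |g t| := by
  unfold cv
  rw [← integral_const_mul]
  refine norm_integral_le_of_norm_le (f := fun t => g t * k (x - t)) ?_ (Filter.Eventually.of_forall fun t => ?_)
  · exact (hg.abs.integrable_of_hasCompactSupport hgc.abs).const_mul B
  · rw [Real.norm_eq_abs, abs_mul, mul_comm]
    exact mul_le_mul_of_nonneg_right (hk _) (abs_nonneg _)

/-- rescaled kernel -/
noncomputable def kape (ε : ℝ) (x : Fin 3 → ℝ) : ℝ := ε⁻¹ ^ 3 * kap (ε⁻¹ • x)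

lemma cv_kape {g : (Fin 3 → ℝ) → ℝ} {ε : ℝ} (hε : 0 < ε) (x) :
    cv g (kape ε) x = ∫ z, g (x - ε • z) * kap z := by
  unfold cv
  rw [← integral_sub_left_eq_self (fun t => g t * kape ε (x - t)) volume x]
  have := Measure.integral_comp_smul (μ := (volume : Measure (Fin 3 → ℝ))) (fun t => g (x - t) * kape ε t) ε
  simp only [sub_sub_cancel]
  have h0 := hε.ne'
  have h2 : (∫ t, g (x - t) * kape ε t) = ε ^ 3 * ∫ z, g (x - ε • z) * kape ε (ε • z) := by
    rw [this]
    simp only [Module.finrank_fin_fun, smul_eq_mul]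
    rw [abs_of_pos (by positivity)]
    field_simp
  rw [h2, ← integral_const_mul]
  congr 1; funext z
  unfold kape
  rw [smul_smul, inv_mul_cancel₀ h0, one_smul]
  field_simp

lemma cv_approx {g : (Fin 3 → ℝ) → ℝ} (hg : Continuous g) (hgc : HasCompactSupport g) {δ : ℝ} (hδ : 0 < δ) :
    ∃ ε, 0 < ε ∧ ε ≤ 1 ∧ ∀ x, |cv g (kape ε) x - (∫ z, kap z) * g x| ≤ δ * ∫ z, kap z := by
  have hu := hgc.uniformContinuous_of_continuous hg
  rw [Metric.uniformContinuous_iff] at hu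
  obtain ⟨η, hη, h⟩ := hu δ hδ
  refine ⟨min η 1, by positivity, min_le_right _ _, fun x => ?_⟩
  set ε := min η 1
  have hε : 0 < ε := by positivity
  have hki := kap_smooth.continuous.integrable_of_hasCompactSupport kap_cs (μ := volume)
  have hi : Integrable fun z => g (x - ε • z) * kap z :=
    ((hg.comp (by fun_prop)).mul kap_smooth.continuous).integrable_of_hasCompactSupport kap_cs.mul_left
  rw [cv_kape hε, ← integral_mul_const, ← integral_sub hi (hki.mul_const _), ← integral_const_mul]
  refine norm_integral_le_of_norm_le (f := fun z => g (x - ε • z) * kap z - kap z * g x) (hki.const_mul δ) (Filter.Eventually.of_forall fun z => ?_)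
  have e : g (x - ε • z) * kap z - kap z * g x = (g (x - ε • z) - g x) * kap z := by ring
  rw [e, Real.norm_eq_abs, abs_mul, abs_of_nonneg (kap_nonneg z)]
  by_cases hz : kap z = 0
  · rw [hz]; simp
  · refine mul_le_mul_of_nonneg_right ?_ (kap_nonneg z)
    have h1 := sqn_coord (kap_supp z hz)
    have h2 : ‖z‖ ≤ 1 / 2 := (pi_norm_le_iff_of_nonneg (by norm_num)).2 h1
    have := h (a := x - ε • z) (b := x) (by
      rw [dist_eq_norm, sub_sub_cancel_left, norm_neg, norm_smul, Real.norm_eq_abs, abs_of_pos hε]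
      have : ε ≤ η := min_le_left _ _
      nlinarith)
    rw [Real.dist_eq] at this
    exact this.le

/-- the a priori property -/
def XP (r : ℝ) (a : (Fin 3 → ℝ) → ℝ) (D : ℝ) : Prop :=
  ∀ (i : Fin 3) (w : (Fin 3 → ℝ) → ℝ), ContDiff ℝ (⊤ : ℕ∞) w → (∀ x, w x ≠ 0 → x ∈ bx) →
    |LL a (dj i w)| ≤ D * ∑ k, N r (dj k w)

lemma bddQ {a : (Fin 3 → ℝ) → ℝ} (ha : Continuous a) : ∃ M, 0 ≤ M ∧ ∀ x ∈ Q3, |a x| ≤ M := by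
  obtain ⟨M, hM⟩ := (isCompact_Icc (a := (0 : Fin 3 → ℝ)) (b := 1)).exists_bound_of_continuousOn ha.continuousOn
  refine ⟨max M 0, le_max_right _ _, fun x hx => (hM x (Q3_sub hx)).trans (le_max_left _ _)⟩

lemma dj_bx {w : (Fin 3 → ℝ) → ℝ} (hw : ∀ x, w x ≠ 0 → x ∈ bx) (i : Fin 3) (x) (hx : dj i w x ≠ 0) : x ∈ bx := by
  have h1 : x ∈ tsupport w := by
    refine support_fderiv_subset ℝ (f := w) ?_
    intro h
    apply hx; unfold dj dd; rw [h]; rfl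
  exact closure_minimal (fun x hx => hw x hx) (isClosed_Icc) h1

lemma stepB {r s : ℝ} (h : r.HolderConjugate s) : ∃ C, 0 < C ∧ ∀ a D, Continuous a → 0 ≤ D → XP r a D →
    ∀ g, Continuous g → (∀ x, g x ≠ 0 → x ∈ Q3) →
      (∫ z, kap z) * |∫ x in Q3, a x * g x| ≤ |LL a (cv g kap)| +
        C * D * ((∫ z, kap z) * N r g + N r (cv g kap)) := by
  obtain ⟨C, hC, hCZ⟩ := exists_CZ h
  have hr := h.lt.le
  refine ⟨9 * C, by positivity, fun a D ha hD hX g hg hgs => ?_⟩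
  obtain ⟨M, hM, haM⟩ := bddQ ha
  have hK := kap_int_pos
  set K := ∫ z, kap z
  have hgb : ∀ x, g x ≠ 0 → x ∈ bx := fun x hx => Q3_bx (hgs x hx)
  have hgc := cs_of_bx hgb
  have hkb : ∀ x, kap x ≠ 0 → ∀ j, |x j| ≤ 1 / 2 := fun x hx => sqn_coord (kap_supp x hx)
  have c1 : Continuous (cv g kap) := (cv_smooth hg kap_smooth kap_cs).continuous
  have s1 := cv_supp hgs hkb
  refine le_of_forall_pos_le_add fun δ' hδ' => ?_
  obtain ⟨δ, hδ, hδδ⟩ : ∃ δ, 0 < δ ∧ (M * Kt + 9 * C * D * 8) * (δ * K) ≤ δ' := by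
    have hp : 0 ≤ M * Kt + 9 * C * D * 8 := by have := Kt_nonneg; positivity
    refine ⟨δ' / ((M * Kt + 9 * C * D * 8) * K + 1), by positivity, ?_⟩
    have : 0 < (M * Kt + 9 * C * D * 8) * K + 1 := by positivity
    rw [div_mul_eq_mul_div, mul_div_assoc', div_le_iff₀ this]
    nlinarith
  obtain ⟨ε, hε, hε1, hap⟩ := cv_approx hg hgc hδ
  obtain ⟨Γ, hΓ, hΓs, hΓl⟩ := exists_param ε hε hε1
  have hΓc := cs_of_box hΓs
  have hu := cv_smooth hg hΓ hΓc
  have hus := cv_supp hgs hΓs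
  have huc := cs_of_bx hus
  set u := cv g Γ
  have ske : ContDiff ℝ (⊤ : ℕ∞) (kape ε) :=
    contDiff_const.mul (kap_smooth.comp (contDiff_const_smul _))
  have hkeb : ∀ x, kape ε x ≠ 0 → ∀ j, |x j| ≤ 1 / 2 := by
    intro x hx j
    have h1 := hkb _ (right_ne_zero_of_mul hx) j
    rw [Pi.smul_apply, smul_eq_mul, abs_mul, abs_of_pos (inv_pos.2 hε)] at h1
    have h2 : 1 ≤ ε⁻¹ := (one_le_inv₀ hε).2 hε1
    nlinarith [abs_nonneg (x j)]
  have hkec := cs_of_box hkeb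
  have c2 : Continuous (cv g (kape ε)) := (cv_smooth hg ske hkec).continuous
  have s2 := cv_supp hgs hkeb
  have hlap : ∀ x, lapl u x = cv g (kape ε) x - cv g kap x := by
    intro x
    rw [lapl_cv hg hgc hΓ hΓc]
    have : lapl Γ = fun x => kape ε x - kap x := funext hΓl
    rw [this]
    unfold cv
    rw [← integral_sub (cv_int hg hgc ske.continuous x) (cv_int hg hgc kap_smooth.continuous x)]
    congr 1; funext t; ring
  have hmem1 := memN (r := r) c1 (cs_of_bx s1)
  have hmem2 := memN (r := r) c2 (cs_of_bx s2)
  have hmemg := memN (r := r) hg hgc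
  have hmemKg : MemLp (fun x => K * g x) (ENNReal.ofReal r) volume := hmemg.const_mul K
  -- bound of L(lap u)
  have hb1 : |LL a (lapl u)| ≤ 9 * C * D * N r (lapl u) := by
    have e : LL a (lapl u) = ∑ i, LL a (dj i (dj i u)) :=
      LL_sum Finset.univ ha fun i _ => (dd_smooth (dd_smooth hu _) _).continuous
    rw [e]
    have hki : ∀ i k, N r (dj k (dj i u)) ≤ C * N r (lapl u) := by
      intro i k
      have h1 := hCZ k i u hu huc
      have h2 := ENNReal.toReal_mono (ENNReal.mul_ne_top ENNReal.ofReal_ne_top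
        (memN (r := r) (lapl_smooth hu).continuous ?_).2.ne) h1
      · rwa [ENNReal.toReal_mul, ENNReal.toReal_ofReal hC.le] at h2
      · have : lapl u = fun x => cv g (kape ε) x - cv g kap x := funext hlap
        rw [this]; exact (cs_of_bx s2).sub (cs_of_bx s1)
    calc |∑ i, LL a (dj i (dj i u))| ≤ ∑ i, |LL a (dj i (dj i u))| := Finset.abs_sum_le_sum_abs _ _
      _ ≤ ∑ i : Fin 3, D * ∑ k : Fin 3, C * N r (lapl u) := by
        refine Finset.sum_le_sum fun i _ => (hX i _ (dd_smooth hu _) (dj_bx hus i)).trans ?_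
        exact mul_le_mul_of_nonneg_left (Finset.sum_le_sum fun k _ => hki i k) hD
      _ = _ := by simp [Fin.sum_univ_three]; ring
  have hb2 : N r (lapl u) ≤ 8 * (δ * K) + (K * N r g + N r (cv g kap)) := by
    have e : lapl u = fun x => (cv g (kape ε) x - K * g x) + (K * g x - cv g kap x) := by
      funext x; rw [hlap]; ring
    rw [e]
    refine (N_add hr (f := fun x => cv g (kape ε) x - K * g x) (g := fun x => K * g x - cv g kap x)
      (hmem2.sub hmemKg) (hmemKg.sub hmem1)).trans (add_le_add ?_ ?_)
    · refine N_bound hr (by positivity) hap fun x hx => ?_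
      by_contra hb
      apply hx
      have h1 : cv g (kape ε) x = 0 := by by_contra hne; exact hb (s2 x hne)
      have h2 : g x = 0 := by by_contra hne; exact hb (hgb x hne)
      simp [h1, h2]
    · refine (N_sub hr hmemKg hmem1).trans (le_of_eq ?_)
      rw [N_mul, abs_of_pos hK]
  have e1 : K * ∫ x in Q3, a x * g x = LL a (cv g kap) + LL a (lapl u) -
      LL a (fun x => cv g (kape ε) x - K * g x) := by
    have : lapl u = fun x => cv g (kape ε) x - cv g kap x := funext hlap
    rw [this, LL_sub ha c2 c1, LL_sub (g := fun x => K * g x) ha c2 (continuous_const.mul hg), LL_smul, LL_id hgs]; ring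
  have hb3 := LL_bound haM hM hap
  have : K * |∫ x in Q3, a x * g x| = |K * ∫ x in Q3, a x * g x| := by rw [abs_mul, abs_of_pos hK]
  rw [this, e1]
  refine (abs_sub _ _).trans ?_
  have h4 := abs_add_le (LL a (cv g kap)) (LL a (lapl u))
  have h5 : 9 * C * D * N r (lapl u) ≤ 9 * C * D * (8 * (δ * K) + (K * N r g + N r (cv g kap))) :=
    mul_le_mul_of_nonneg_left hb2 (by positivity)
  nlinarith

end KMS

namespace KMS

lemma dj_shift (f : (Fin 3 → ℝ) → ℝ) (i : Fin 3) (b : Fin 3 → ℝ) :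
    dj i (fun x => f (x + b)) = fun x => dj i f (x + b) := by
  funext x
  unfold dj dd
  rw [fderiv_comp_add_right b]

lemma N_shift (r : ℝ) {f : (Fin 3 → ℝ) → ℝ} (hf : Continuous f) (b : Fin 3 → ℝ) :
    N r (fun x => f (x + b)) = N r f := by
  unfold N
  congr 1
  exact eLpNorm_comp_measurePreserving hf.aestronglyMeasurable
    (measurePreserving_add_right volume b)

lemma dd_sum (v : Fin 3 → ℝ) (f : (Fin 3 → ℝ) → ℝ) (x) : dd v f x = ∑ i, v i * dj i f x := by
  unfold dj dd
  conv_lhs => rw [vec_eq v]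
  simp [Fin.sum_univ_three, map_add, map_smul]

lemma stepC (r : ℝ) : ∃ C, 0 ≤ C ∧ ∀ a D, Continuous a → 0 ≤ D → XP r a D →
    ∀ y ∈ Q3, ∀ y' ∈ Q3, |LL a (fun x => kap (x - y')) - LL a (fun x => kap (x - y))| ≤ C * D := by
  refine ⟨3 * ∑ k, N r (dj k kap), ?_, fun a D ha hD hX y hy y' hy' => ?_⟩
  · have : 0 ≤ ∑ k, N r (dj k kap) := Finset.sum_nonneg fun k _ => N_nonneg _ _
    positivity
  set v : Fin 3 → ℝ := y - y' with hv
  obtain ⟨M, hM, haM⟩ := bddQ ha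
  have hdk := dd_smooth kap_smooth v
  obtain ⟨B, hB, hB'⟩ := cs_bound hdk.continuous (dd_cs kap_cs v)
  have hder : ∀ t : ℝ, HasDerivAt (fun t : ℝ => LL a (fun x => kap (x + (-y + t • v))))
      (LL a (fun x => dd v kap (x + (-y + t • v)))) t := by
    intro t
    have := hasDerivAt_integral_of_dominated_loc_of_deriv_le (μ := volume.restrict Q3) (x₀ := t)
      (s := Set.univ) (bound := fun _ => M * (Kt * B))
      (F := fun t x => a x * TT (fun _ => al) (fun x => kap (x + (-y + t • v))) x)
      (F' := fun t x => a x * TT (fun _ => al) (fun x => dd v kap (x + (-y + t • v))) x)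
      Filter.univ_mem ?_ ?_ ?_ ?_ ?_ ?_
    · exact this.2
    · exact Filter.Eventually.of_forall fun t => (ha.mul (TT_cont _ (kap_smooth.continuous.comp
        (by fun_prop)))).aestronglyMeasurable
    · exact intQ (ha.mul (TT_cont _ (kap_smooth.continuous.comp (by fun_prop))))
    · exact (ha.mul (TT_cont _ (hdk.continuous.comp (by fun_prop)))).aestronglyMeasurable
    · filter_upwards [ae_restrict_mem Q3_meas] with x hx t _
      rw [Real.norm_eq_abs, abs_mul]
      exact mul_le_mul (haM x hx) (TT_bound (fun x => hB' _) x) (abs_nonneg _) hM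
    · exact integrable_const _
    · refine Filter.Eventually.of_forall fun x t _ => HasDerivAt.const_mul _ ?_
      unfold TT
      refine HasDerivAt.fun_sum fun m _ => HasDerivAt.const_mul _ ?_
      have := dd_line (kap_smooth.differentiable (by simp)) (rho m x + -y) v t
      simpa only [add_assoc] using this
  have hbd : ∀ t ∈ Set.Ico (0:ℝ) 1, ‖LL a (fun x => dd v kap (x + (-y + t • v)))‖ ≤
      (3 * ∑ k, N r (dj k kap)) * D := by
    intro t ht
    have e : (fun x => dd v kap (x + (-y + t • v))) =
        fun x => ∑ i, v i * dj i kap (x + (-y + t • v)) := by funext x; exact dd_sum _ _ _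
    rw [e, LL_sum (f := fun i x => v i * dj i kap (x + (-y + t • v))) _ ha (fun i _ => continuous_const.mul ((dd_smooth kap_smooth _).continuous.comp (by fun_prop)))]
    refine (Finset.abs_sum_le_sum_abs _ _).trans ?_
    have : ∀ i, |LL a (fun x => v i * dj i kap (x + (-y + t • v)))| ≤ D * ∑ k, N r (dj k kap) := by
      intro i
      rw [LL_smul, abs_mul]
      have h1 := hX i (fun x => kap (x + (-y + t • v))) (kap_smooth.comp (by fun_prop)) ?_
      · rw [dj_shift] at h1
        have e2 : ∀ k, N r (dj k fun x => kap (x + (-y + t • v))) = N r (dj k kap) := by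
          intro k
          rw [dj_shift]
          exact N_shift r (f := dj k kap) (dd_smooth kap_smooth _).continuous _
        simp only [e2] at h1
        have h2 : |v i| ≤ 1 := by
          rw [hv, Pi.sub_apply, abs_le]
          have := hy i; have := hy' i
          simp only [Set.mem_Ioo] at *
          constructor <;> linarith
        nlinarith [abs_nonneg (v i), abs_nonneg (LL a fun x => dj i kap (x + (-y + t • v)))]
      · intro x hx
        have h3 := sqn_coord (kap_supp _ hx)
        rw [bx_mem]; intro j
        have h4 := abs_le.1 (h3 j)
        simp only [Pi.add_apply, Pi.neg_apply, Pi.smul_apply, smul_eq_mul, hv, Pi.sub_apply] at h4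
        obtain ⟨a1, a2⟩ := hy j; obtain ⟨b1, b2⟩ := hy' j
        obtain ⟨t1, t2⟩ := ht
        constructor <;> nlinarith
    refine (Finset.sum_le_sum fun i _ => this i).trans (le_of_eq ?_)
    simp; ring
  have := norm_image_sub_le_of_norm_deriv_le_segment_01' (fun t _ => (hder t).hasDerivWithinAt) hbd
  simp only [zero_smul, one_smul, add_zero, Real.norm_eq_abs] at this
  have e1 : (fun x => kap (x - y')) = fun x => kap (x + (-y + v)) := by
    funext x; congr 1; rw [hv]; abel
  rw [e1]
  simp only [sub_eq_add_neg] at this ⊢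
  exact this

lemma stepD {a g : (Fin 3 → ℝ) → ℝ} (ha : Continuous a) (hg : Continuous g) (hs : ∀ x, g x ≠ 0 → x ∈ Q3) :
    IntegrableOn (fun t => g t * LL a (fun x => kap (x - t))) Q3 ∧
    LL a (cv g kap) = ∫ t in Q3, g t * LL a (fun x => kap (x - t)) := by
  have hK := kap_smooth.continuous
  have hgc : HasCompactSupport g := cs_of_bx fun x hx => Q3_bx (hs x hx)
  have hcont : Continuous (Function.uncurry fun x t : Fin 3 → ℝ => a x * (g t * TT (fun _ => al) (fun z => kap (z - t)) x)) := by
    unfold TT Function.uncurry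
    simp only
    refine (ha.comp continuous_fst).mul ((hg.comp continuous_snd).mul (continuous_finsetSum _ fun m _ => ?_))
    exact continuous_const.mul (hK.comp (((rho_cont m).comp continuous_fst).sub continuous_snd))
  have hIntg : Integrable (Function.uncurry fun x t : Fin 3 → ℝ => a x * (g t * TT (fun _ => al) (fun z => kap (z - t)) x))
      ((volume.restrict Q3).prod (volume.restrict Q3)) := by
    rw [Measure.prod_restrict]
    refine IntegrableOn.mono_set ?_ (Set.prod_mono Q3_sub Q3_sub)
    exact hcont.continuousOn.integrableOn_compact (isCompact_Icc.prod isCompact_Icc)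
  have e2 : ∀ t, (∫ x in Q3, a x * (g t * TT (fun _ => al) (fun z => kap (z - t)) x)) =
      g t * LL a (fun x => kap (x - t)) := by
    intro t
    unfold LL
    rw [← integral_const_mul]
    congr 1; funext x; ring
  constructor
  · have := hIntg.integral_prod_right
    refine this.congr (Filter.Eventually.of_forall fun t => ?_)
    exact e2 t
  · have e1 : ∀ x, a x * TT (fun _ => al) (cv g kap) x =
        ∫ t in Q3, a x * (g t * TT (fun _ => al) (fun z => kap (z - t)) x) := by
      intro x
      rw [integral_const_mul]
      congr 1
      unfold TT
      have h3 : ∀ t, g t * ∑ m : Fin 3 → Fin 5, (∏ j, al (m j)) * kap (rho m x - t) =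
        ∑ m : Fin 3 → Fin 5, (∏ j, al (m j)) * (g t * kap (rho m x - t)) := by
        intro t; rw [Finset.mul_sum]; exact Finset.sum_congr rfl fun m _ => by ring
      simp only [h3]
      rw [integral_finsetSum]
      · refine Finset.sum_congr rfl fun m _ => ?_
        rw [integral_const_mul]
        congr 1
        unfold cv
        rw [setIntegral_eq_integral_of_forall_compl_eq_zero]
        intro t ht
        have : g t = 0 := by by_contra hne; exact ht (hs t hne)
        rw [this, zero_mul]
      · intro m _
        exact ((cv_int hg hgc hK (rho m x)).const_mul _).integrableOn
    have : LL a (cv g kap) = ∫ x in Q3, ∫ t in Q3, a x * (g t * TT (fun _ => al) (fun z => kap (z - t)) x) := by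
      unfold LL
      simp only [e1]
    rw [this, integral_integral_swap hIntg]
    simp only [e2]

lemma stepE {r s : ℝ} (h : r.HolderConjugate s) : ∃ C, 0 < C ∧ ∀ a D, Continuous a → 0 ≤ D → XP r a D →
    ∀ g, Continuous g → (∀ x, g x ≠ 0 → x ∈ Q3) → ∫ x in Q3, g x = 0 →
      |∫ x in Q3, a x * g x| ≤ C * D * N r g := by
  obtain ⟨C1, hC1, h1⟩ := stepB h
  obtain ⟨C2, hC2, h2⟩ := stepC r
  obtain ⟨B, hB, hB'⟩ := cs_bound kap_smooth.continuous kap_cs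
  have hr := h.lt.le
  have hK := kap_int_pos
  set K := ∫ z, kap z
  refine ⟨(C2 + C1 * (K + 8 * B)) / K, by positivity, fun a D ha hD hX g hg hs hg0 => ?_⟩
  have hgc : HasCompactSupport g := cs_of_bx fun x hx => Q3_bx (hs x hx)
  have b1 := h1 a D ha hD hX g hg hs
  have b2 := L1_le hr hg hs
  have b3 : N r (cv g kap) ≤ 8 * (B * N r g) := by
    refine N_bound hr (mul_nonneg hB (N_nonneg _ _)) (fun x => ?_) (cv_supp hs fun x hx => sqn_coord (kap_supp x hx))
    exact (cv_bound hg hgc hB' x).trans (mul_le_mul_of_nonneg_left b2 hB)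
  have b4 : |LL a (cv g kap)| ≤ C2 * D * N r g := by
    obtain ⟨i1, i2⟩ := stepD ha hg hs
    set y0 : Fin 3 → ℝ := fun _ => 1 / 2
    have hy0 : y0 ∈ Q3 := fun j => by simp [y0]; norm_num
    have e : LL a (cv g kap) = ∫ t in Q3, g t * (LL a (fun x => kap (x - t)) - LL a (fun x => kap (x - y0))) := by
      rw [i2]
      simp only [mul_sub]
      rw [integral_sub i1 ((intQ hg).mul_const _), integral_mul_const, hg0]; simp
    rw [e]
    have : |∫ t in Q3, g t * (LL a (fun x => kap (x - t)) - LL a (fun x => kap (x - y0)))| ≤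
        ∫ t in Q3, |g t| * (C2 * D) := by
      refine norm_integral_le_of_norm_le (f := fun t => g t * (LL a (fun x => kap (x - t)) - LL a (fun x => kap (x - y0))))
        (((intQ hg).abs).mul_const _) ?_
      filter_upwards [ae_restrict_mem Q3_meas] with t ht
      rw [Real.norm_eq_abs, abs_mul]
      exact mul_le_mul_of_nonneg_left (h2 a D ha hD hX y0 hy0 t ht) (abs_nonneg _)
    refine this.trans ?_
    rw [integral_mul_const, mul_comm]
    refine mul_le_mul_of_nonneg_left (le_trans ?_ b2) (by positivity)
    exact setIntegral_le_integral (hg.abs.integrable_of_hasCompactSupport hgc.abs)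
      (Filter.Eventually.of_forall fun _ => abs_nonneg _)
  rw [div_mul_eq_mul_div, div_mul_eq_mul_div, le_div_iff₀ hK, mul_comm]
  have : C1 * D * (K * N r g + N r (cv g kap)) ≤ C1 * D * (K * N r g + 8 * (B * N r g)) := by gcongr
  nlinarith

end KMS

namespace KMS

lemma stepF {r s : ℝ} (h : r.HolderConjugate s) : ∃ C, 0 < C ∧ ∀ a D, Continuous a → 0 ≤ D → XP r a D →
    ∃ c : ℝ, ∀ g, Continuous g → (∀ x, g x ≠ 0 → x ∈ Q3) →
      |∫ x in Q3, (a x - c) * g x| ≤ C * D * N r g := by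
  obtain ⟨C, hC, h1⟩ := stepE h
  have hr := h.lt.le
  have hK := kap_int_pos
  set y0 : Fin 3 → ℝ := fun _ => 1 / 2 with hy0
  set θ : (Fin 3 → ℝ) → ℝ := fun x => kap (x + (-y0)) / ∫ z, kap z with hθ
  have hθc : Continuous θ := (kap_smooth.continuous.comp (by fun_prop)).div_const _
  have hθs : ∀ x, θ x ≠ 0 → x ∈ Q3 := by
    intro x hx j
    have h2 : kap (x + -y0) ≠ 0 := by intro h0; apply hx; simp [hθ, h0]
    have h3 := kap_supp _ h2
    have h4 : (x + -y0) j ^ 2 ≤ sqn (x + -y0) :=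
      Finset.single_le_sum (f := fun j => (x + -y0) j ^ 2) (fun _ _ => sq_nonneg _) (Finset.mem_univ j)
    simp only [Pi.add_apply, Pi.neg_apply, hy0] at h4
    constructor <;> nlinarith
  have hθi : ∫ x in Q3, θ x = 1 := by
    rw [setIntegral_eq_integral_of_forall_compl_eq_zero
      (fun x hx => by by_contra hne; exact hx (hθs x hne)), hθ, integral_div,
      integral_add_right_eq_self kap (-y0), div_self hK.ne']
  have hθcs : HasCompactSupport θ := cs_of_bx fun x hx => Q3_bx (hθs x hx)
  refine ⟨C * (1 + N r θ), by have := N_nonneg r θ; positivity, fun a D ha hD hX => ?_⟩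
  refine ⟨∫ x in Q3, a x * θ x, fun g hg hs => ?_⟩
  have hgc : HasCompactSupport g := cs_of_bx fun x hx => Q3_bx (hs x hx)
  set I := ∫ x in Q3, g x with hI
  have hI1 : |I| ≤ N r g := by
    refine le_trans ?_ (L1_le hr hg hs)
    refine (abs_integral_le_integral_abs).trans ?_
    exact setIntegral_le_integral (hg.abs.integrable_of_hasCompactSupport hgc.abs)
      (Filter.Eventually.of_forall fun _ => abs_nonneg _)
  have h2 := h1 a D ha hD hX (fun x => g x - I * θ x) (by fun_prop) ?_ ?_
  · have e : ∫ x in Q3, a x * (g x - I * θ x) = ∫ x in Q3, (a x - ∫ x in Q3, a x * θ x) * g x := by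
      have i1 := intQ (f := fun x => a x * g x) (ha.mul hg)
      have i2 := intQ (f := fun x => a x * θ x) (ha.mul hθc)
      have l : ∫ x in Q3, a x * (g x - I * θ x) = (∫ x in Q3, a x * g x) - I * ∫ x in Q3, a x * θ x := by
        rw [← integral_const_mul, ← integral_sub i1 (i2.const_mul I)]
        congr 1; funext x; ring
      have l2 : ∀ c : ℝ, ∫ x in Q3, (a x - c) * g x = (∫ x in Q3, a x * g x) - c * I := by
        intro c
        rw [hI, ← integral_const_mul, ← integral_sub i1 ((intQ hg).const_mul c)]
        congr 1; funext x; ring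
      rw [l, l2]; ring
    rw [← e]
    refine h2.trans ?_
    have h3 := N_sub hr (memN (r := r) hg hgc) ((memN (r := r) hθc hθcs).const_mul I)
    rw [N_mul] at h3
    have h4 : |I| * N r θ ≤ N r g * N r θ := mul_le_mul_of_nonneg_right hI1 (N_nonneg _ _)
    calc C * D * N r (fun x => g x - I * θ x) ≤ C * D * (N r g + N r g * N r θ) := by
          refine mul_le_mul_of_nonneg_left (h3.trans (by linarith)) (by positivity)
      _ = _ := by ring
  · intro x hx
    by_contra hn
    apply hx
    have h1 : g x = 0 := by by_contra hne; exact hn (hs x hne)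
    have h2 : θ x = 0 := by by_contra hne; exact hn (hθs x hne)
    simp [h1, h2]
  · rw [integral_sub (intQ hg) ((intQ hθc).const_mul I), integral_const_mul, hθi]; simp [hI]

/-- signed power -/
noncomputable def sp (q t : ℝ) : ℝ := (max t 0) ^ (q - 1) - (max (-t) 0) ^ (q - 1)

lemma sp_cont {q : ℝ} (hq : 1 < q) : Continuous (sp q) := by
  unfold sp
  exact ((continuous_id.max continuous_const).rpow_const fun x => Or.inr (by linarith)).sub
    ((continuous_neg.max continuous_const).rpow_const fun x => Or.inr (by linarith))

lemma sp_abs {q : ℝ} (hq : 1 < q) (t : ℝ) : |sp q t| = |t| ^ (q - 1) := by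
  unfold sp
  rcases le_total 0 t with h | h
  · rw [max_eq_left h, max_eq_right (by linarith), Real.zero_rpow (by linarith), sub_zero, abs_of_nonneg h,
      abs_of_nonneg (by positivity)]
  · rw [max_eq_right h, max_eq_left (by linarith), Real.zero_rpow (by linarith), zero_sub, abs_neg, abs_of_nonpos h,
      abs_of_nonneg (Real.rpow_nonneg (by linarith) _)]

lemma rpow_sub_one_mul {q t : ℝ} (hq : 1 < q) (ht : 0 ≤ t) : t * t ^ (q - 1) = t ^ q := by
  rcases ht.eq_or_lt with h | h
  · rw [← h, Real.zero_rpow (by linarith), Real.zero_rpow (by linarith), mul_zero]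
  · rw [Real.rpow_sub_one h.ne']; field_simp

lemma sp_mul {q : ℝ} (hq : 1 < q) (t : ℝ) : t * sp q t = |t| ^ q := by
  unfold sp
  rcases le_total 0 t with h | h
  · rw [max_eq_left h, max_eq_right (by linarith), Real.zero_rpow (by linarith), sub_zero, abs_of_nonneg h,
      rpow_sub_one_mul hq h]
  · rw [max_eq_right h, max_eq_left (by linarith), Real.zero_rpow (by linarith), zero_sub, abs_of_nonpos h,
      ← rpow_sub_one_mul hq (by linarith : 0 ≤ -t)]; ring

/-- cutoffs -/
noncomputable def th (n : ℕ) (x : Fin 3 → ℝ) : ℝ := min 1 (n * Metric.infDist x Q3ᶜ)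

lemma th_cont (n) : Continuous (th n) :=
  continuous_const.min (continuous_const.mul (Metric.continuous_infDist_pt _))

lemma th_nonneg (n x) : 0 ≤ th n x := le_min zero_le_one (mul_nonneg (Nat.cast_nonneg _) Metric.infDist_nonneg)

lemma th_le (n x) : th n x ≤ 1 := min_le_left _ _

lemma th_supp (n x) (h : th n x ≠ 0) : x ∈ Q3 := by
  by_contra hx
  apply h
  unfold th
  rw [Metric.infDist_zero_of_mem hx]; simp

lemma th_tendsto {x} (hx : x ∈ Q3) : Filter.Tendsto (fun n => th n x) Filter.atTop (nhds 1) := by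
  have hne : (Q3ᶜ).Nonempty := ⟨0, fun h => by simpa using h 0⟩
  have hpos : 0 < Metric.infDist x Q3ᶜ :=
    (Q3_open.isClosed_compl.notMem_iff_infDist_pos hne).1 (by simpa using hx)
  obtain ⟨n0, hn0⟩ := exists_nat_gt (1 / Metric.infDist x Q3ᶜ)
  refine tendsto_const_nhds.congr' ?_
  filter_upwards [Filter.eventually_ge_atTop n0] with n hn
  unfold th
  rw [min_eq_left]
  rw [div_lt_iff₀ hpos] at hn0
  have : (n0 : ℝ) ≤ n := by exact_mod_cast hn
  nlinarith

lemma dual_bound {r q : ℝ} (h : r.HolderConjugate q) {b : (Fin 3 → ℝ) → ℝ} (hb : Continuous b) {D : ℝ} (hD : 0 ≤ D)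
    (hd : ∀ g, Continuous g → (∀ x, g x ≠ 0 → x ∈ Q3) → |∫ x in Q3, b x * g x| ≤ D * N r g) :
    eLpNorm b (ENNReal.ofReal q) (volume.restrict Q3) ≤ ENNReal.ofReal D := by
  have hq := h.symm.lt
  have hr := h.lt
  have hbq : Continuous fun x => |b x| ^ q := hb.abs.rpow_const fun _ => Or.inr (by linarith)
  set X := ∫ x in Q3, |b x| ^ q with hX
  have hX0 : 0 ≤ X := integral_nonneg fun x => by positivity
  have hlX : ∫⁻ x in Q3, ENNReal.ofReal (|b x| ^ q) = ENNReal.ofReal X :=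
    (ofReal_integral_eq_lintegral_ofReal (intQ hbq) (Filter.Eventually.of_forall fun x => by positivity)).symm
  have hn : ∀ n, ∫ x in Q3, th n x * |b x| ^ q ≤ D * X ^ (1 / r) := by
    intro n
    have h1 := hd (fun x => th n x * sp q (b x)) ((th_cont n).mul ((sp_cont hq).comp hb))
      (fun x hx => th_supp n x (left_ne_zero_of_mul hx))
    have e : ∀ x, b x * (th n x * sp q (b x)) = th n x * |b x| ^ q := by
      intro x; rw [← sp_mul hq]; ring
    simp only [e] at h1
    refine (le_abs_self _).trans (h1.trans (mul_le_mul_of_nonneg_left ?_ hD))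
    unfold N
    rw [eLp_eq h.pos]
    refine ENNReal.toReal_le_of_le_ofReal (by positivity) ?_
    rw [← ENNReal.ofReal_rpow_of_nonneg hX0 (by have := h.pos; positivity), ← hlX, ← lintegral_indicator Q3_meas]
    refine ENNReal.rpow_le_rpow (lintegral_mono fun x => ?_) (by have := h.pos; positivity)
    by_cases hx : x ∈ Q3
    · rw [Set.indicator_of_mem hx]
      refine ENNReal.ofReal_le_ofReal ?_
      rw [abs_mul, sp_abs hq, abs_of_nonneg (th_nonneg n x)]
      calc (th n x * |b x| ^ (q - 1)) ^ r ≤ (1 * |b x| ^ (q - 1)) ^ r := by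
            have := th_le n x; have := th_nonneg n x; have := h.pos; gcongr
        _ = |b x| ^ q := by
            rw [one_mul, ← Real.rpow_mul (abs_nonneg _)]
            congr 1
            exact h.symm.sub_one_mul_conj
    · have : th n x = 0 := by by_contra hne; exact hx (th_supp n x hne)
      rw [this, zero_mul, abs_zero, Real.zero_rpow h.pos.ne']; simp
  have hXle : X ≤ D * X ^ (1 / r) := by
    refine le_of_tendsto' (x := Filter.atTop) (f := fun n => ∫ x in Q3, th n x * |b x| ^ q) ?_ hn
    refine tendsto_integral_of_dominated_convergence (fun x => |b x| ^ q) ?_ (intQ hbq) ?_ ?_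
    · intro n; exact ((th_cont n).mul hbq).aestronglyMeasurable
    · intro n
      refine Filter.Eventually.of_forall fun x => ?_
      rw [Real.norm_eq_abs, abs_of_nonneg (mul_nonneg (th_nonneg n x) (by positivity))]
      exact mul_le_of_le_one_left (by positivity) (th_le n x)
    · filter_upwards [ae_restrict_mem Q3_meas] with x hx
      simpa using (th_tendsto hx).mul_const (|b x| ^ q)
  rw [eLp_eq h.symm.pos, hlX, ENNReal.ofReal_rpow_of_nonneg hX0 (by have := h.symm.pos; positivity)]
  refine ENNReal.ofReal_le_ofReal ?_
  rcases hX0.eq_or_lt with h0 | h0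
  · rw [← h0, Real.zero_rpow (by have := h.symm.pos; positivity)]; exact hD
  · have e : X ^ (1 / q) * X ^ (1 / r) = X := by
      rw [← Real.rpow_add h0, one_div, one_div, h.symm.inv_add_inv_eq_one, Real.rpow_one]
    have hp : 0 < X ^ (1 / r) := by positivity
    refine le_of_mul_le_mul_right ?_ hp
    rw [e]; exact hXle

theorem thmY {r q : ℝ} (h : r.HolderConjugate q) : ∃ C, 0 < C ∧ ∀ a D, Continuous a → 0 ≤ D → XP r a D →
    ∫ x in Q3, a x = 0 → eLpNorm a (ENNReal.ofReal q) (volume.restrict Q3) ≤ ENNReal.ofReal (C * D) := by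
  obtain ⟨C, hC, h1⟩ := stepF h
  refine ⟨2 * C, by positivity, fun a D ha hD hX h0 => ?_⟩
  obtain ⟨c, hc⟩ := h1 a D ha hD hX
  have hb : Continuous fun x => a x - c := by fun_prop
  have h2 := dual_bound h hb (D := C * D) (by positivity) hc
  have hq1 : (1 : ℝ≥0∞) ≤ ENNReal.ofReal q := by simpa using ENNReal.ofReal_le_ofReal h.symm.lt.le
  have h3 : ‖c‖ₑ ≤ ENNReal.ofReal (C * D) := by
    have e : ∫ x in Q3, (a x - c) = -c := by
      rw [integral_sub (intQ ha) (integrable_const _), h0]; simp [Measure.real, Q3_vol]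
    calc ‖c‖ₑ = ‖∫ x in Q3, (a x - c)‖ₑ := by rw [e, enorm_neg]
      _ ≤ ∫⁻ x in Q3, ‖a x - c‖ₑ := enorm_integral_le_lintegral_enorm _
      _ = eLpNorm (fun x => a x - c) 1 (volume.restrict Q3) := eLpNorm_one_eq_lintegral_enorm.symm
      _ ≤ _ := eLpNorm_le_eLpNorm_of_exponent_le hq1 hb.aestronglyMeasurable
      _ ≤ _ := h2
  have e : a = (fun x => a x - c) + fun _ => c := by funext x; simp
  rw [e]
  refine (eLpNorm_add_le hb.aestronglyMeasurable aestronglyMeasurable_const hq1).trans ?_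
  rw [eLpNorm_const _ (by intro h; simp [h] at hq1) (IsProbabilityMeasure.ne_zero _)]
  simp only [measure_univ, ENNReal.one_rpow, mul_one]
  rw [show 2 * C * D = C * D + C * D by ring, ENNReal.ofReal_add (by positivity) (by positivity)]
  exact add_le_add h2 h3

end KMS

namespace KMS

lemma rho_map_le (m : Fin 3 → Fin 5) : Measure.map (rho m) volume ≤ volume := by
  have hsl : ∀ c, 1 ≤ |sl c| := by
    intro c
    have h5 : c = 0 ∨ c = 1 ∨ c = 2 ∨ c = 3 ∨ c = 4 := by revert c; decide
    rcases h5 with rfl | rfl | rfl | rfl | rfl <;> simp [sl]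
  set D : Fin 3 → ℝ := fun j => sl (m j) with hD
  have hd : 1 ≤ |(Matrix.diagonal D).det| := by
    rw [Matrix.det_diagonal, Finset.abs_prod]
    rw [Fin.prod_univ_three]
    exact one_le_mul_of_one_le_of_one_le (one_le_mul_of_one_le_of_one_le (hsl _) (hsl _)) (hsl _)
  have hd0 : (Matrix.diagonal D).det ≠ 0 := by
    intro h; rw [h] at hd; simp at hd; linarith
  have h1 := Real.smul_map_diagonal_volume_pi hd0
  have hc : Measurable (Matrix.toLin' (Matrix.diagonal D)) :=
    (LinearMap.continuous_of_finiteDimensional _).measurable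
  have e : rho m = (fun x => x + fun j => off (m j)) ∘ (Matrix.toLin' (Matrix.diagonal D)) := by
    funext x j
    simp [rho, Matrix.mulVec_diagonal, hD]
  rw [e, ← Measure.map_map (by fun_prop) hc]
  have h2 : Measure.map (Matrix.toLin' (Matrix.diagonal D)) (volume : Measure (Fin 3 → ℝ)) ≤ volume := by
    conv_rhs => rw [← h1]
    refine Measure.le_iff.2 fun s _ => ?_
    rw [Measure.smul_apply, smul_eq_mul]
    exact le_mul_of_one_le_left (by positivity) (by simpa using ENNReal.ofReal_le_ofReal hd)
  calc Measure.map (fun x => x + fun j => off (m j)) (Measure.map (Matrix.toLin' (Matrix.diagonal D)) volume)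
      ≤ Measure.map (fun x => x + fun j => off (m j)) volume := Measure.map_mono h2 (by fun_prop)
    _ = volume := (measurePreserving_add_right volume _).map_eq

lemma rho_norm (m : Fin 3 → Fin 5) {f : (Fin 3 → ℝ) → ℝ} (hf : Continuous f) (s : ℝ≥0∞) :
    eLpNorm (fun x => f (rho m x)) s (volume.restrict Q3) ≤ eLpNorm f s volume := by
  calc eLpNorm (fun x => f (rho m x)) s (volume.restrict Q3) ≤ eLpNorm (fun x => f (rho m x)) s volume :=
        eLpNorm_mono_measure _ Measure.restrict_le_self
    _ = eLpNorm f s (Measure.map (rho m) volume) :=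
        (eLpNorm_map_measure hf.aestronglyMeasurable (rho_cont m).measurable.aemeasurable).symm
    _ ≤ _ := eLpNorm_mono_measure _ (rho_map_le m)

lemma rho_sum_norm (c : (Fin 3 → Fin 5) → ℝ) {B : ℝ} (hB : 0 ≤ B) (hc : ∀ m, |c m| ≤ B) {f : (Fin 3 → ℝ) → ℝ} (hf : Continuous f)
    {s : ℝ≥0∞} (hs : 1 ≤ s) :
    eLpNorm (fun x => ∑ m, c m * f (rho m x)) s (volume.restrict Q3) ≤ ENNReal.ofReal (125 * B) * eLpNorm f s volume := by
  have e : (fun x => ∑ m, c m * f (rho m x)) = ∑ m, fun x => c m * f (rho m x) := by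
    funext x; simp
  rw [e]
  refine (eLpNorm_sum_le (fun m _ => (continuous_const.mul (hf.comp (rho_cont m))).aestronglyMeasurable) hs).trans ?_
  have h : ∀ m, eLpNorm (fun x => c m * f (rho m x)) s (volume.restrict Q3) ≤ ENNReal.ofReal B * eLpNorm f s volume := by
    intro m
    have := eLpNorm_const_smul (p := s) (μ := volume.restrict Q3) (c m) (fun x => f (rho m x))
    have h2 : (fun x => c m * f (rho m x)) = c m • (fun x => f (rho m x)) := by funext x; simp
    rw [h2, this]
    refine mul_le_mul' ?_ (rho_norm m hf s)
    rw [Real.enorm_eq_ofReal_abs]; exact ENNReal.ofReal_le_ofReal (hc m)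
  refine (Finset.sum_le_sum fun m _ => h m).trans (le_of_eq ?_)
  rw [Finset.sum_const, nsmul_eq_mul, ENNReal.ofReal_mul (by norm_num), ← mul_assoc]
  simp

/-- weights for the i-th component -/
noncomputable def be (i j : Fin 3) (c : Fin 5) : ℝ := if j = i then al c / sl c else al c

lemma be_bound (i j c) : |be i j c| ≤ 4 := by
  have h5 : c = 0 ∨ c = 1 ∨ c = 2 ∨ c = 3 ∨ c = 4 := by revert c; decide
  unfold be
  rcases h5 with rfl | rfl | rfl | rfl | rfl <;> split_ifs <;> simp [al, sl] <;> norm_num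

lemma be_prod (i : Fin 3) (m : Fin 3 → Fin 5) : |∏ j, be i j (m j)| ≤ 64 := by
  rw [Finset.abs_prod]
  calc ∏ j, |be i j (m j)| ≤ ∏ _j : Fin 3, (4:ℝ) := Finset.prod_le_prod (fun _ _ => abs_nonneg _) fun j _ => be_bound _ _ _
    _ = 64 := by norm_num

lemma sl_bound (c) : |sl c| ≤ 2 := by
  have h5 : c = 0 ∨ c = 1 ∨ c = 2 ∨ c = 3 ∨ c = 4 := by revert c; decide
  rcases h5 with rfl | rfl | rfl | rfl | rfl <;> simp [sl]

lemma be_sl (i : Fin 3) (m : Fin 3 → Fin 5) : (∏ j, be i j (m j)) * sl (m i) = ∏ j, al (m j) := by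
  have hsl : ∀ c, sl c ≠ 0 := by
    intro c
    have h5 : c = 0 ∨ c = 1 ∨ c = 2 ∨ c = 3 ∨ c = 4 := by revert c; decide
    rcases h5 with rfl | rfl | rfl | rfl | rfl <;> simp [sl]
  rw [← Finset.mul_prod_erase _ _ (Finset.mem_univ i), ← Finset.mul_prod_erase _ (fun j => al (m j)) (Finset.mem_univ i)]
  have h1 : ∏ j ∈ Finset.univ.erase i, be i j (m j) = ∏ j ∈ Finset.univ.erase i, al (m j) :=
    Finset.prod_congr rfl fun j hj => by simp [be, Finset.ne_of_mem_erase hj]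
  rw [h1]
  simp only [be, if_true]
  have := hsl (m i)
  field_simp

lemma be_z (i j) : be i j 0 + be i j 1 + be i j 2 = 0 ∧ be i j 0 + be i j 3 + be i j 4 = 0 := by
  unfold be; split_ifs <;> simp [al, sl] <;> norm_num

lemma TT_zero (i k : Fin 3) {w : (Fin 3 → ℝ) → ℝ} (hw : ∀ x, w x ≠ 0 → x ∈ bx) {x : Fin 3 → ℝ}
    (hx : x k = 0 ∨ x k = 1) : TT (be i) w x = 0 := by
  unfold TT
  rw [← (Fin.insertNthEquiv (fun _ => Fin 5) k).sum_comp, Fintype.sum_prod_type, Finset.sum_comm]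
  refine Finset.sum_eq_zero fun m' _ => ?_
  simp only [Fin.insertNthEquiv, Equiv.coe_fn_mk]
  have hp : ∀ c : Fin 5, ∏ j, be i j ((Fin.insertNth k c m' : Fin 3 → Fin 5) j) =
      be i k c * ∏ j, be i (k.succAbove j) (m' j) := by
    intro c; rw [Fin.prod_univ_succAbove _ k]; simp
  have hrk : ∀ c : Fin 5, rho (Fin.insertNth k c m') x k = sl c * x k + off c := by
    intro c; simp [rho]
  have hre : ∀ c c' : Fin 5, sl c * x k + off c = sl c' * x k + off c' →
      rho (Fin.insertNth k c m') x = rho (Fin.insertNth k c' m') x := by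
    intro c c' h
    funext j
    by_cases hj : j = k
    · subst hj; rw [hrk, hrk, h]
    · obtain ⟨j', rfl⟩ := Fin.exists_succAbove_eq hj
      simp [rho]
  have h0 : ∀ c : Fin 5, (sl c * x k + off c < -1/2 ∨ 3/2 < sl c * x k + off c) → w (rho (Fin.insertNth k c m') x) = 0 := by
    intro c hc
    by_contra hne
    have := bx_mem.1 (hw _ hne) k
    rw [hrk] at this
    rcases hc with h | h <;> linarith [this.1, this.2]
  simp only [hp]
  rw [Fin.sum_univ_five]
  obtain ⟨z1, z2⟩ := be_z i k
  rcases hx with hx | hx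
  · rw [h0 3 (by rw [hx]; simp [sl, off] <;> norm_num), h0 4 (by rw [hx]; simp [sl, off] <;> norm_num),
      hre 1 0 (by rw [hx]; simp [sl, off]), hre 2 0 (by rw [hx]; simp [sl, off])]
    linear_combination (∏ j, be i (k.succAbove j) (m' j)) * w (rho (Fin.insertNth k 0 m') x) * z1
  · rw [h0 1 (by rw [hx]; simp [sl, off] <;> norm_num), h0 2 (by rw [hx]; simp [sl, off] <;> norm_num),
      hre 3 0 (by rw [hx]; simp [sl, off] <;> norm_num), hre 4 0 (by rw [hx]; simp [sl, off] <;> norm_num)]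
    linear_combination (∏ j, be i (k.succAbove j) (m' j)) * w (rho (Fin.insertNth k 0 m') x) * z2

lemma rho_deriv (m : Fin 3 → Fin 5) (x) : HasFDerivAt (rho m)
    (ContinuousLinearMap.pi fun j => sl (m j) • ContinuousLinearMap.proj (R := ℝ) (φ := fun _ : Fin 3 => ℝ) j) x := by
  rw [hasFDerivAt_pi]
  intro j
  exact (((ContinuousLinearMap.proj (R := ℝ) (φ := fun _ : Fin 3 => ℝ) j).hasFDerivAt (x := x)).const_mul (sl (m j))).add_const _

lemma rho_smooth (m : Fin 3 → Fin 5) : ContDiff ℝ (⊤ : ℕ∞) (rho m) := by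
  unfold rho; fun_prop

lemma TT_smooth (β) {w : (Fin 3 → ℝ) → ℝ} (hw : ContDiff ℝ (⊤ : ℕ∞) w) : ContDiff ℝ (⊤ : ℕ∞) (TT β w) := by
  unfold TT
  exact ContDiff.sum fun m _ => contDiff_const.mul (hw.comp (rho_smooth m))

lemma TT_dj (β) {w : (Fin 3 → ℝ) → ℝ} (hw : ContDiff ℝ (⊤ : ℕ∞) w) (k : Fin 3) (x) :
    dj k (TT β w) x = ∑ m : Fin 3 → Fin 5, ((∏ j, β j (m j)) * sl (m k)) * dj k w (rho m x) := by
  have h : HasFDerivAt (TT β w) (∑ m : Fin 3 → Fin 5, (∏ j, β j (m j)) • (fderiv ℝ w (rho m x)).comp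
      (ContinuousLinearMap.pi fun j => sl (m j) • ContinuousLinearMap.proj (R := ℝ) (φ := fun _ : Fin 3 => ℝ) j)) x := by
    unfold TT
    refine HasFDerivAt.fun_sum fun m _ => HasFDerivAt.const_mul ?_ _
    exact (hw.differentiable (by simp) (rho m x)).hasFDerivAt.comp x (rho_deriv m x)
  unfold dj dd
  rw [h.fderiv, ContinuousLinearMap.sum_apply]
  refine Finset.sum_congr rfl fun m _ => ?_
  have : (ContinuousLinearMap.pi fun j => sl (m j) • ContinuousLinearMap.proj (R := ℝ) (φ := fun _ : Fin 3 => ℝ) j)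
      (Pi.single k 1) = sl (m k) • (Pi.single k 1 : Fin 3 → ℝ) := by
    funext j
    by_cases hj : j = k
    · subst hj; simp
    · simp [hj]
  rw [smul_apply, ContinuousLinearMap.comp_apply, this, map_smul]
  simp; ring

lemma TT_dj_self {w : (Fin 3 → ℝ) → ℝ} (hw : ContDiff ℝ (⊤ : ℕ∞) w) (i : Fin 3) (x) :
    dj i (TT (be i) w) x = TT (fun _ => al) (dj i w) x := by
  rw [TT_dj _ hw]
  unfold TT
  simp only [be_sl]

lemma TT_norm (i : Fin 3) {w : (Fin 3 → ℝ) → ℝ} (hw : ContDiff ℝ (⊤ : ℕ∞) w) {s : ℝ≥0∞} (hs : 1 ≤ s) :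
    eLpNorm (TT (be i) w) s (volume.restrict Q3) ≤ ENNReal.ofReal 16000 * eLpNorm w s volume := by
  have := rho_sum_norm (fun m => ∏ j, be i j (m j)) (B := 128) (by norm_num) (fun m => (be_prod i m).trans (by norm_num)) hw.continuous hs
  norm_num at this ⊢
  exact this

lemma TT_dj_norm (i k : Fin 3) {w : (Fin 3 → ℝ) → ℝ} (hw : ContDiff ℝ (⊤ : ℕ∞) w) {s : ℝ≥0∞} (hs : 1 ≤ s) :
    eLpNorm (dj k (TT (be i) w)) s (volume.restrict Q3) ≤ ENNReal.ofReal 16000 * eLpNorm (dj k w) s volume := by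
  have e : dj k (TT (be i) w) = fun x => ∑ m : Fin 3 → Fin 5, ((∏ j, be i j (m j)) * sl (m k)) * dj k w (rho m x) :=
    funext fun x => TT_dj _ hw k x
  rw [e]
  have := rho_sum_norm (fun m => (∏ j, be i j (m j)) * sl (m k)) (B := 128) (by norm_num) (fun m => by
    rw [abs_mul]
    have := be_prod i m; have := sl_bound (m k)
    nlinarith [abs_nonneg (∏ j, be i j (m j)), abs_nonneg (sl (m k))]) (f := dj k w) (dd_smooth hw _).continuous hs
  norm_num at this ⊢
  exact this

lemma fderiv_norm_le (w : (Fin 3 → ℝ) → ℝ) (x) : ‖fderiv ℝ w x‖ ≤ ∑ k, ‖dj k w x‖ := by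
  refine ContinuousLinearMap.opNorm_le_bound _ (Finset.sum_nonneg fun _ _ => norm_nonneg _) fun v => ?_
  have h := dd_sum v w x
  unfold dd at h
  rw [h, Finset.sum_mul]
  refine (norm_sum_le _ _).trans (Finset.sum_le_sum fun k _ => ?_)
  rw [norm_mul, mul_comm]
  exact mul_le_mul_of_nonneg_left (norm_le_pi_norm v k) (norm_nonneg _)

lemma exists_GNS {r s : ℝ} (hr : 1 ≤ r) (hs : 0 < s) (h : s⁻¹ = r⁻¹ - 3⁻¹) : ∃ C : ℝ, 0 ≤ C ∧ ∀ w : (Fin 3 → ℝ) → ℝ,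
    ContDiff ℝ (⊤ : ℕ∞) w → HasCompactSupport w →
    eLpNorm w (ENNReal.ofReal s) volume ≤ ENNReal.ofReal C * ∑ k, eLpNorm (dj k w) (ENNReal.ofReal r) volume := by
  refine ⟨SNormLESNormFDerivOfEqConst ℝ (volume : Measure (Fin 3 → ℝ)) r.toNNReal, NNReal.coe_nonneg _, fun w hw hc => ?_⟩
  have := eLpNorm_le_eLpNorm_fderiv_of_eq (volume : Measure (Fin 3 → ℝ)) (hw.of_le (by simp)) hc (p := r.toNNReal) (p' := s.toNNReal)
    (by simpa using Real.toNNReal_le_toNNReal hr) (by simp) (by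
      simp only [NNReal.coe_inv, Real.coe_toNNReal _ hs.le, Real.coe_toNNReal _ (show 0 ≤ r by linarith)]; simpa using h)
  refine this.trans ?_
  rw [ENNReal.ofReal_coe_nnreal]
  refine mul_le_mul_right ?_ _
  have e : (∑ k, fun x => ‖dj k w x‖) = fun x => ∑ k, ‖dj k w x‖ := by funext x; simp
  calc eLpNorm (fderiv ℝ w) (r.toNNReal) volume ≤ eLpNorm (∑ k, fun x => ‖dj k w x‖) (ENNReal.ofReal r) volume := by
        rw [e]
        refine eLpNorm_mono fun x => ?_
        rw [Real.norm_of_nonneg (Finset.sum_nonneg fun _ _ => norm_nonneg _)]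
        exact fderiv_norm_le w x
    _ ≤ ∑ k, eLpNorm (fun x => ‖dj k w x‖) (ENNReal.ofReal r) volume := by
        refine eLpNorm_sum_le (fun k _ => ?_) (by simpa using ENNReal.ofReal_le_ofReal hr)
        have : Continuous (dj k w) := (dd_smooth hw _).continuous
        exact this.norm.aestronglyMeasurable
    _ = _ := by simp only [eLpNorm_norm]

lemma holder {p s : ℝ} (h : p.HolderConjugate s) {f g : (Fin 3 → ℝ) → ℝ} {μ : Measure (Fin 3 → ℝ)}
    (hf : AEStronglyMeasurable f μ) (hg : AEStronglyMeasurable g μ) :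
    ‖∫ x, f x * g x ∂μ‖ₑ ≤ eLpNorm f (ENNReal.ofReal p) μ * eLpNorm g (ENNReal.ofReal s) μ := by
  haveI := h.ennrealOfReal
  refine (enorm_integral_le_lintegral_enorm _).trans ?_
  rw [← eLpNorm_one_eq_lintegral_enorm]
  exact eLpNorm_smul_le_mul_eLpNorm (φ := f) (f := g) hg hf

end KMS

namespace KMS

lemma Q3_nhds {x : Fin 3 → ℝ} (hx : x ∈ Q3) : Set.Icc (0 : Fin 3 → ℝ) 1 ∈ nhds x :=
  Filter.mem_of_superset (Q3_open.mem_nhds hx) Q3_sub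

lemma fw_eq {f : (Fin 3 → ℝ) → ℝ} {x : Fin 3 → ℝ} (hx : x ∈ Q3) :
    fderivWithin ℝ f (Set.Icc 0 1) x = fderiv ℝ f x := fderivWithin_of_mem_nhds (Q3_nhds hx)

lemma fw_cont {f : (Fin 3 → ℝ) → ℝ} (hf : ContDiffOn ℝ (⊤ : ℕ∞) f (Set.Icc 0 1)) (v : Fin 3 → ℝ) :
    ContinuousOn (fun x => fderivWithin ℝ f (Set.Icc 0 1) x v) (Set.Icc 0 1) := by
  have hu : UniqueDiffOn ℝ (Set.Icc (0 : Fin 3 → ℝ) 1) := by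
    rw [← Q3_closure]
    refine uniqueDiffOn_convex ?_ ?_
    · rw [Q3_closure]; exact convex_Icc _ _
    · refine Set.Nonempty.mono (interior_mono subset_closure) ?_
      rw [Q3_open.interior_eq]
      exact ⟨fun _ => 1/2, fun j => by constructor <;> norm_num⟩
  exact (hf.continuousOn_fderivWithin hu (by simp)).clm_apply continuousOn_const

lemma pd_meas {f : (Fin 3 → ℝ) → ℝ} (hf : ContDiffOn ℝ (⊤ : ℕ∞) f (Set.Icc 0 1)) (k : Fin 3) :
    AEStronglyMeasurable (fun x => pd k f x) (volume.restrict Q3) := by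
  have : ContinuousOn (fun x => pd k f x) Q3 :=
    ((fw_cont hf (Pi.single k 1)).mono Q3_sub).congr fun x hx => by simp [pd, fw_eq hx]
  exact this.aestronglyMeasurable Q3_meas

lemma intQ_on {f : (Fin 3 → ℝ) → ℝ} (hf : ContinuousOn f (Set.Icc 0 1)) : IntegrableOn f Q3 :=
  (hf.integrableOn_compact isCompact_Icc).mono_set Q3_sub

lemma pd_int {f : (Fin 3 → ℝ) → ℝ} (hf : ContDiffOn ℝ (⊤ : ℕ∞) f (Set.Icc 0 1)) (k : Fin 3)
    {V : (Fin 3 → ℝ) → ℝ} (hV : Continuous V) :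
    IntegrableOn (fun x => pd k f x * V x) Q3 := by
  refine (intQ_on ((fw_cont hf (Pi.single k 1)).mul hV.continuousOn)).congr_fun (fun x hx => ?_) Q3_meas
  simp [pd, fw_eq hx]

lemma ibp {f V : (Fin 3 → ℝ) → ℝ} (hf : ContDiffOn ℝ (⊤ : ℕ∞) f (Set.Icc 0 1))
    (hV : ContDiff ℝ (⊤ : ℕ∞) V) (k : Fin 3) (h0 : ∀ x, (x k = 0 ∨ x k = 1) → V x = 0) :
    ∫ x in Q3, f x * dj k V x = - ∫ x in Q3, pd k f x * V x := by
  have hdc : Continuous (dj k V) := (dd_smooth hV _).continuous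
  have hS : ∀ x, ∑ i, (if i = k then f x • fderiv ℝ V x + V x • fderivWithin ℝ f (Set.Icc 0 1) x
        else (0 : (Fin 3 → ℝ) →L[ℝ] ℝ)) (Pi.single i 1)
        = f x * dj k V x + fderivWithin ℝ f (Set.Icc 0 1) x (Pi.single k 1) * V x := by
    intro x
    rw [Finset.sum_eq_single k (fun b _ hb => by simp [hb]) (by simp)]
    simp [dj, dd, mul_comm]
  have hc1 : ContinuousOn (fun x => f x * dj k V x) (Set.Icc 0 1) := hf.continuousOn.mul hdc.continuousOn
  have hc2 : ContinuousOn (fun x => fderivWithin ℝ f (Set.Icc 0 1) x (Pi.single k 1) * V x) (Set.Icc 0 1) :=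
    (fw_cont hf _).mul hV.continuous.continuousOn
  have key := integral_divergence_of_hasFDerivAt_off_countable' (n := 2) (E := ℝ) (0 : Fin 3 → ℝ) 1
    (fun _ => zero_le_one) (fun i x => if i = k then f x * V x else 0)
    (fun i x => if i = k then f x • fderiv ℝ V x + V x • fderivWithin ℝ f (Set.Icc 0 1) x else 0)
    ∅ Set.countable_empty
    (by
      intro i
      by_cases hi : i = k
      · simp only [hi, if_true]; exact hf.continuousOn.mul hV.continuous.continuousOn
      · simp only [hi, if_false]; exact continuousOn_const)
    (by
      intro x hx i
      have hx' : x ∈ Q3 := by rw [Q3_eq]; exact hx.1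
      by_cases hi : i = k
      · simp only [hi, if_true]
        have h1 : HasFDerivAt f (fderivWithin ℝ f (Set.Icc 0 1) x) x :=
          ((hf.differentiableOn (by simp) x (Q3_sub hx')).hasFDerivWithinAt).hasFDerivAt (Q3_nhds hx')
        exact h1.fun_mul ((hV.differentiable (by simp)) x).hasFDerivAt
      · simp only [hi, if_false]; exact hasFDerivAt_const _ _)
    (by
      simp only [hS]
      exact (hc1.add hc2).integrableOn_compact isCompact_Icc)
  simp only [hS] at key
  have hz : ∀ (i : Fin 3) (t : ℝ), (t = 0 ∨ t = 1) → ∀ y : Fin 2 → ℝ,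
      (if i = k then f (i.insertNth t y) * V (i.insertNth t y) else 0) = 0 := by
    intro i t ht y
    split_ifs with hi
    · subst hi; rw [h0 _ (by simpa using ht), mul_zero]
    · rfl
  have hz1 : ∀ (i : Fin 3) (y : Fin 2 → ℝ),
      (if i = k then f (i.insertNth ((1 : Fin 3 → ℝ) i) y) * V (i.insertNth ((1 : Fin 3 → ℝ) i) y) else 0) = 0 :=
    fun i y => hz i _ (Or.inr rfl) y
  have hz0 : ∀ (i : Fin 3) (y : Fin 2 → ℝ),
      (if i = k then f (i.insertNth ((0 : Fin 3 → ℝ) i) y) * V (i.insertNth ((0 : Fin 3 → ℝ) i) y) else 0) = 0 :=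
    fun i y => hz i _ (Or.inl rfl) y
  simp only [hz1, hz0, integral_zero, sub_zero, Finset.sum_const_zero] at key
  rw [← setIntegral_congr_set Q3_ae, integral_add (intQ_on hc1) (intQ_on hc2)] at key
  have e : ∫ x in Q3, pd k f x * V x = ∫ x in Q3, fderivWithin ℝ f (Set.Icc 0 1) x (Pi.single k 1) * V x :=
    setIntegral_congr_fun Q3_meas fun x hx => by simp [pd, fw_eq hx]
  rw [e]; linarith

lemma mcurl_le (F : (Fin 3 → ℝ) → Fin 3 → Fin 3 → ℝ) (x) (i j k : Fin 3) :
    ‖pd k (fun y => F y i j) x - pd j (fun y => F y i k) x‖ ≤ ‖mcurl F x‖ := by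
  have h : ∀ l, ‖mcurl F x i l‖ ≤ ‖mcurl F x‖ := fun l => (norm_le_pi_norm _ l).trans (norm_le_pi_norm _ i)
  have h0 := h 0
  have h1 := h 1
  have h2 := h 2
  simp [mcurl] at h0 h1 h2
  have h3 : ∀ i : Fin 3, i = 0 ∨ i = 1 ∨ i = 2 := by decide
  rcases h3 j with rfl | rfl | rfl <;> rcases h3 k with rfl | rfl | rfl <;>
    simp only [sub_self, norm_zero, norm_nonneg, Real.norm_eq_abs] <;>
    first | assumption | (rw [abs_sub_comm]; assumption)

lemma T_bound {p s q r : ℝ} (h1 : p.HolderConjugate s) (h2 : q.HolderConjugate r)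
    {F : (Fin 3 → ℝ) → Fin 3 → Fin 3 → ℝ} (hF : ContDiffOn ℝ (⊤ : ℕ∞) F (Set.Icc 0 1))
    {V : (Fin 3 → ℝ) → ℝ} (hV : ContDiff ℝ (⊤ : ℕ∞) V) (h0 : ∀ k x, (x k = 0 ∨ x k = 1) → V x = 0)
    (i j k : Fin 3) :
    ‖∫ x in Q3, F x i j * dj k V x‖ₑ ≤
      3 * (eLpNorm (fun x => mcurl F x) (ENNReal.ofReal p) (volume.restrict Q3) *
          eLpNorm V (ENNReal.ofReal s) (volume.restrict Q3)) +
      3 * (eLpNorm (fun x => fun i j => (F x i j + F x j i) / 2) (ENNReal.ofReal q) (volume.restrict Q3) *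
          ∑ k, eLpNorm (dj k V) (ENNReal.ofReal r) (volume.restrict Q3)) := by
  have hc : ∀ i j, ContDiffOn ℝ (⊤ : ℕ∞) (fun x => F x i j) (Set.Icc 0 1) := fun i j =>
    contDiffOn_pi.1 (contDiffOn_pi.1 hF i) j
  have hdc : ∀ k, Continuous (dj k V) := fun k => (dd_smooth hV _).continuous
  set T : Fin 3 → Fin 3 → Fin 3 → ℝ := fun i j k => ∫ x in Q3, F x i j * dj k V x with hT
  set A := eLpNorm (fun x => mcurl F x) (ENNReal.ofReal p) (volume.restrict Q3) *
          eLpNorm V (ENNReal.ofReal s) (volume.restrict Q3) with hA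
  set B := eLpNorm (fun x => fun i j => (F x i j + F x j i) / 2) (ENNReal.ofReal q) (volume.restrict Q3) *
          ∑ k, eLpNorm (dj k V) (ENNReal.ofReal r) (volume.restrict Q3) with hB
  have hC : ∀ i j k, ‖T i j k - T i k j‖ₑ ≤ A := by
    intro i j k
    have e : T i j k - T i k j = - ∫ x in Q3, (pd k (fun y => F y i j) x - pd j (fun y => F y i k) x) * V x := by
      simp only [hT]
      rw [ibp (hc i j) hV k (h0 k), ibp (hc i k) hV j (h0 j)]
      simp only [sub_mul]
      rw [integral_sub (pd_int (hc i j) k hV.continuous) (pd_int (hc i k) j hV.continuous)]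
      ring
    rw [e, enorm_neg]
    refine (holder h1 ((pd_meas (hc i j) k).sub (pd_meas (hc i k) j)) hV.continuous.aestronglyMeasurable).trans ?_
    rw [hA]
    gcongr
    exact eLpNorm_mono fun x => mcurl_le F x i j k
  have hS : ∀ i j k, ‖(T i j k + T j i k) / 2‖ₑ ≤ B := by
    intro i j k
    have e : (T i j k + T j i k) / 2 = ∫ x in Q3, ((F x i j + F x j i) / 2) * dj k V x := by
      simp only [hT]
      rw [← integral_add (intQ_on (f := fun x => F x i j * dj k V x) ((hc i j).continuousOn.mul (hdc k).continuousOn))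
        (intQ_on (f := fun x => F x j i * dj k V x) ((hc j i).continuousOn.mul (hdc k).continuousOn)), ← integral_div]
      congr 1; funext x; ring
    rw [e]
    have hm : AEStronglyMeasurable (fun x => (F x i j + F x j i) / 2) (volume.restrict Q3) :=
      ((((hc i j).continuousOn.add (hc j i).continuousOn).div_const 2).mono Q3_sub).aestronglyMeasurable Q3_meas
    refine (holder h2 hm (hdc k).aestronglyMeasurable).trans ?_
    rw [hB]
    refine mul_le_mul' (eLpNorm_mono fun x => ?_)
      (Finset.single_le_sum (f := fun k => eLpNorm (dj k V) (ENNReal.ofReal r) (volume.restrict Q3))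
        (fun _ _ => zero_le) (Finset.mem_univ k))
    exact (norm_le_pi_norm (fun j => (F x i j + F x j i) / 2) j).trans
      (norm_le_pi_norm (fun i j => (F x i j + F x j i) / 2) i)
  have e : T i j k = ((T i j k - T i k j) - (T k i j - T k j i) + (T j k i - T j i k)) / 2
     + ((T i k j + T k i j) / 2 - (T k j i + T j k i) / 2 + (T j i k + T i j k) / 2) := by ring
  have half : ∀ y : ℝ, ‖y / 2‖ₑ ≤ ‖y‖ₑ := by
    intro y
    rw [enorm_le_iff_norm_le]
    rw [norm_div]; norm_num
  change ‖T i j k‖ₑ ≤ _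
  rw [e]
  refine (enorm_add_le _ _).trans (add_le_add ?_ ?_)
  · refine (half _).trans ?_
    refine (enorm_add_le _ _).trans ((add_le_add (enorm_sub_le.trans (add_le_add (hC _ _ _) (hC _ _ _))) (hC _ _ _)).trans (le_of_eq ?_))
    ring
  · refine (enorm_add_le _ _).trans ((add_le_add (enorm_sub_le.trans (add_le_add (hS _ _ _) (hS _ _ _))) (hS _ _ _)).trans (le_of_eq ?_))
    ring

end KMS

namespace KMS

noncomputable def clamp (x : Fin 3 → ℝ) : Fin 3 → ℝ := fun j => max 0 (min 1 (x j))

lemma clamp_cont : Continuous clamp := by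
  unfold clamp; fun_prop

lemma clamp_mem (x) : clamp x ∈ Set.Icc (0 : Fin 3 → ℝ) 1 :=
  ⟨fun j => le_max_left _ _, fun j => max_le zero_le_one (min_le_left _ _)⟩

lemma clamp_eq {x : Fin 3 → ℝ} (hx : x ∈ Q3) : clamp x = x := by
  funext j
  have := hx j
  simp [clamp, this.1.le, this.2.le]

lemma comp_bound {p s q r C1 CG : ℝ} (h1 : p.HolderConjugate s) (h2 : r.HolderConjugate q)
    (hCG : 0 ≤ CG)
    (hG : ∀ w : (Fin 3 → ℝ) → ℝ, ContDiff ℝ (⊤ : ℕ∞) w → HasCompactSupport w →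
      eLpNorm w (ENNReal.ofReal s) volume ≤ ENNReal.ofReal CG * ∑ k, eLpNorm (dj k w) (ENNReal.ofReal r) volume)
    (hY : ∀ a D, Continuous a → 0 ≤ D → XP r a D → ∫ x in Q3, a x = 0 →
      eLpNorm a (ENNReal.ofReal q) (volume.restrict Q3) ≤ ENNReal.ofReal (C1 * D))
    {F : (Fin 3 → ℝ) → Fin 3 → Fin 3 → ℝ} (hF : ContDiffOn ℝ (⊤ : ℕ∞) F (Set.Icc 0 1))
    (h0 : ∀ P : Fin 3 → Fin 3 → ℝ, (∀ i j, P j i = -P i j) →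
          ∫ x in Q3, (∑ i, ∑ j, F x i j * P i j) = 0)
    {D : ℝ≥0∞} (hD : D = eLpNorm (fun x => fun i j => (F x i j + F x j i) / 2)
                  (ENNReal.ofReal q) (volume.restrict Q3) +
                eLpNorm (fun x => mcurl F x) (ENNReal.ofReal p) (volume.restrict Q3))
    (hDt : D ≠ ⊤) (i j : Fin 3) :
    eLpNorm (fun x => (F x i j - F x j i) / 2) (ENNReal.ofReal q) (volume.restrict Q3) ≤
      ENNReal.ofReal (C1 * (48000 * (CG + 1) * D.toReal)) := by
  have hc : ∀ i j, ContinuousOn (fun x => F x i j) (Set.Icc 0 1) := fun i j =>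
    (contDiffOn_pi.1 (contDiffOn_pi.1 hF i) j).continuousOn
  set a : (Fin 3 → ℝ) → ℝ := fun x => (F (clamp x) i j - F (clamp x) j i) / 2 with ha
  have hac : Continuous a := by
    have : ContinuousOn (fun x => (F x i j - F x j i) / 2) (Set.Icc 0 1) :=
      ((hc i j).sub (hc j i)).div_const 2
    exact this.comp_continuous clamp_cont clamp_mem
  have e : eLpNorm (fun x => (F x i j - F x j i) / 2) (ENNReal.ofReal q) (volume.restrict Q3) =
      eLpNorm a (ENNReal.ofReal q) (volume.restrict Q3) := by
    refine eLpNorm_congr_ae ?_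
    filter_upwards [ae_restrict_mem Q3_meas] with x hx
    simp [ha, clamp_eq hx]
  rw [e]
  refine hY a _ hac (by positivity) ?_ ?_
  · intro k w hw hwb
    have hwc := cs_of_bx hwb
    set V := TT (be k) w with hV
    have hVs : ContDiff ℝ (⊤ : ℕ∞) V := TT_smooth _ hw
    have hdc : Continuous (dj k V) := (dd_smooth hVs _).continuous
    set W := ∑ l, eLpNorm (dj l w) (ENNReal.ofReal r) volume with hW
    have hr1 : (1 : ℝ≥0∞) ≤ ENNReal.ofReal r := by simpa using ENNReal.ofReal_le_ofReal h2.lt.le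
    have hs1 : (1 : ℝ≥0∞) ≤ ENNReal.ofReal s := by simpa using ENNReal.ofReal_le_ofReal h1.symm.lt.le
    have hfin : ∀ l, eLpNorm (dj l w) (ENNReal.ofReal r) volume ≠ ⊤ := fun l =>
      (memN (dd_smooth hw _).continuous (dd_cs hwc _)).2.ne
    have hWt : W ≠ ⊤ := by
      rw [hW]; exact ENNReal.sum_ne_top.2 fun l _ => hfin l
    have hWr : W.toReal = ∑ l, N r (dj l w) := by
      rw [hW, ENNReal.toReal_sum fun l _ => hfin l]; rfl
    have eL : LL a (dj k w) = ((∫ x in Q3, F x i j * dj k V x) - ∫ x in Q3, F x j i * dj k V x) / 2 := by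
      unfold LL
      rw [← integral_sub (intQ_on (f := fun x => F x i j * dj k V x) ((hc i j).mul hdc.continuousOn))
        (intQ_on (f := fun x => F x j i * dj k V x) ((hc j i).mul hdc.continuousOn)), ← integral_div]
      refine setIntegral_congr_fun Q3_meas fun x hx => ?_
      simp only [ha, clamp_eq hx, hV, TT_dj_self hw]
      ring
    have hV0 : ∀ l x, (x l = 0 ∨ x l = 1) → V x = 0 := fun l x h => TT_zero k l hwb h
    have hTB : ∀ i j, ‖∫ x in Q3, F x i j * dj k V x‖ₑ ≤ ENNReal.ofReal (48000 * (CG + 1)) * D * W := by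
      intro i j
      refine (T_bound h1 h2.symm hF hVs hV0 i j k).trans ?_
      have b1 : eLpNorm V (ENNReal.ofReal s) (volume.restrict Q3) ≤ ENNReal.ofReal 16000 * (ENNReal.ofReal (CG + 1) * W) := by
        refine (TT_norm k hw hs1).trans ?_
        gcongr
        refine (hG w hw hwc).trans ?_
        gcongr
        linarith
      have b2 : ∑ l, eLpNorm (dj l V) (ENNReal.ofReal r) (volume.restrict Q3) ≤ ENNReal.ofReal 16000 * (ENNReal.ofReal (CG + 1) * W) := by
        have : ∑ l, eLpNorm (dj l V) (ENNReal.ofReal r) (volume.restrict Q3) ≤ ENNReal.ofReal 16000 * W := by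
          rw [hW, Finset.mul_sum]
          exact Finset.sum_le_sum fun l _ => TT_dj_norm k l hw hr1
        refine this.trans ?_
        gcongr
        refine le_mul_of_one_le_left zero_le ?_
        simpa using ENNReal.ofReal_le_ofReal (show (1:ℝ) ≤ CG + 1 by linarith)
      have e3 : ENNReal.ofReal (48000 * (CG + 1)) = 3 * (ENNReal.ofReal 16000 * ENNReal.ofReal (CG + 1)) := by
        rw [show (3 : ℝ≥0∞) = ENNReal.ofReal 3 by simp, ← ENNReal.ofReal_mul (by norm_num), ← ENNReal.ofReal_mul (by norm_num)]
        congr 1; ring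
      rw [e3, hD]
      refine (add_le_add (mul_le_mul_right (mul_le_mul_right b1 _) _) (mul_le_mul_right (mul_le_mul_right b2 _) _)).trans (le_of_eq ?_)
      ring
    have hfinal : ‖LL a (dj k w)‖ₑ ≤ ENNReal.ofReal (48000 * (CG + 1)) * D * W := by
      set B := ENNReal.ofReal (48000 * (CG + 1)) * D * W
      rw [eL, div_eq_mul_inv, enorm_mul]
      have h2i : ‖(2:ℝ)⁻¹‖ₑ = 2⁻¹ := by
        rw [enorm_inv (by norm_num)]
        congr 1
        rw [← ofReal_norm]; simp
      rw [h2i]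
      calc _ ≤ (B + B) * 2⁻¹ := by
            gcongr
            exact enorm_sub_le.trans (add_le_add (hTB i j) (hTB j i))
        _ = B := by rw [← two_mul, mul_comm (2 : ℝ≥0∞), mul_assoc, ENNReal.mul_inv_cancel (by norm_num) (by norm_num), mul_one]
    have h := ENNReal.toReal_mono (ENNReal.mul_ne_top (ENNReal.mul_ne_top ENNReal.ofReal_ne_top hDt) hWt) hfinal
    rw [toReal_enorm, ENNReal.toReal_mul, ENNReal.toReal_mul, ENNReal.toReal_ofReal (by positivity), hWr] at h
    exact h
  · have hP := h0 (fun k l => ((if k = i ∧ l = j then 1 else 0) - (if k = j ∧ l = i then 1 else 0)) / 2) (by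
      intro k l
      simp only [and_comm]
      ring)
    rw [← hP]
    refine setIntegral_congr_fun Q3_meas fun x hx => ?_
    simp only [ha, clamp_eq hx, mul_div_assoc', mul_sub, ← Finset.sum_div, Finset.sum_sub_distrib]
    congr 1
    simp [ite_and]

theorem main_bound (p : ℝ) (hp1 : 1 < p) (hp3 : p < 3) :
    ∃ c : ℝ, 0 < c ∧
      ∀ F : (Fin 3 → ℝ) → Fin 3 → Fin 3 → ℝ,
        ContDiffOn ℝ (⊤ : ℕ∞) F (closure Q3) →
        (∀ P : Fin 3 → Fin 3 → ℝ, (∀ i j, P j i = -P i j) →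
          ∫ x in Q3, (∑ i, ∑ j, F x i j * P i j) = 0) →
          eLpNorm F (ENNReal.ofReal (3 * p / (3 - p))) (volume.restrict Q3) ≤
            ENNReal.ofReal c *
              (eLpNorm (fun x => fun i j => (F x i j + F x j i) / 2)
                  (ENNReal.ofReal (3 * p / (3 - p))) (volume.restrict Q3) +
                eLpNorm (fun x => mcurl F x) (ENNReal.ofReal p)
                  (volume.restrict Q3)) := by
  have a1 : 0 < 3 - p := by linarith
  have a2 : 0 < 4 * p - 3 := by linarith
  have a3 : 0 < p - 1 := by linarith
  have a4 : 0 < p := by linarith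
  set q := 3 * p / (3 - p) with hq
  have hq0 : 0 < q := by positivity
  set r := 3 * p / (4 * p - 3) with hr
  have hr1 : 1 < r := by rw [hr, lt_div_iff₀ a2]; linarith
  set s := p / (p - 1) with hs
  have h1 : p.HolderConjugate s := Real.holderConjugate_iff.2 ⟨hp1, by rw [hs]; field_simp; ring⟩
  have h2 : r.HolderConjugate q := Real.holderConjugate_iff.2 ⟨hr1, by rw [hr, hq]; field_simp; ring⟩
  have hs0 : 0 < s := by positivity
  obtain ⟨CG, hCG, hG⟩ := exists_GNS (r := r) (s := s) hr1.le hs0 (by rw [hr, hs]; field_simp; ring)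
  obtain ⟨C1, hC1, hY⟩ := thmY h2
  refine ⟨1 + 9 * (C1 * (48000 * (CG + 1))), by positivity, fun F hF h0 => ?_⟩
  rw [Q3_closure] at hF
  set S := eLpNorm (fun x => fun i j => (F x i j + F x j i) / 2) (ENNReal.ofReal q) (volume.restrict Q3) with hS
  set D := S + eLpNorm (fun x => mcurl F x) (ENNReal.ofReal p) (volume.restrict Q3) with hD
  by_cases hDt : D = ⊤
  · rw [hDt, ENNReal.mul_top]
    · exact le_top
    · exact (ENNReal.ofReal_pos.2 (by positivity)).ne'
  have hb := comp_bound h1 h2 hCG hG hY hF h0 hD hDt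
  have hc : ∀ i j, ContinuousOn (fun x => F x i j) (Set.Icc 0 1) := fun i j =>
    (contDiffOn_pi.1 (contDiffOn_pi.1 hF i) j).continuousOn
  have hq1 : (1 : ℝ≥0∞) ≤ ENNReal.ofReal q := by simpa using ENNReal.ofReal_le_ofReal h2.symm.lt.le
  have hm : ∀ i j, AEStronglyMeasurable (fun x => ‖(F x i j - F x j i) / 2‖) (volume.restrict Q3) := fun i j =>
    (((((hc i j).sub (hc j i)).div_const 2).norm).mono Q3_sub).aestronglyMeasurable Q3_meas
  have hmS : AEStronglyMeasurable (fun x => ‖(fun i j => (F x i j + F x j i) / 2 : Fin 3 → Fin 3 → ℝ)‖) (volume.restrict Q3) := by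
    have : ContinuousOn (fun x => (fun i j => (F x i j + F x j i) / 2 : Fin 3 → Fin 3 → ℝ)) (Set.Icc 0 1) :=
      continuousOn_pi.2 fun i => continuousOn_pi.2 fun j => ((hc i j).add (hc j i)).div_const 2
    exact (this.norm.mono Q3_sub).aestronglyMeasurable Q3_meas
  set A : (Fin 3 → ℝ) → ℝ := ∑ t : Fin 3 × Fin 3, fun x => ‖(F x t.1 t.2 - F x t.2 t.1) / 2‖ with hA
  have hmA : AEStronglyMeasurable A (volume.restrict Q3) :=
    Finset.aestronglyMeasurable_sum _ fun t _ => hm t.1 t.2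
  have hAx : ∀ x, A x = ∑ t : Fin 3 × Fin 3, ‖(F x t.1 t.2 - F x t.2 t.1) / 2‖ := fun x => by simp [hA]
  have hA0 : ∀ x, 0 ≤ A x := fun x => by rw [hAx]; exact Finset.sum_nonneg fun _ _ => norm_nonneg _
  calc eLpNorm F (ENNReal.ofReal q) (volume.restrict Q3)
      ≤ eLpNorm ((fun x => ‖(fun i j => (F x i j + F x j i) / 2 : Fin 3 → Fin 3 → ℝ)‖) + A) (ENNReal.ofReal q) (volume.restrict Q3) := by
        refine eLpNorm_mono_real fun x => ?_
        have hn : 0 ≤ ‖(fun i j => (F x i j + F x j i) / 2 : Fin 3 → Fin 3 → ℝ)‖ + A x := add_nonneg (norm_nonneg _) (hA0 x)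
        refine (pi_norm_le_iff_of_nonneg hn).2 fun i => (pi_norm_le_iff_of_nonneg hn).2 fun j => ?_
        have : F x i j = (F x i j + F x j i) / 2 + (F x i j - F x j i) / 2 := by ring
        rw [this]
        refine (norm_add_le _ _).trans (add_le_add ?_ ?_)
        · exact (norm_le_pi_norm (fun j => (F x i j + F x j i) / 2) j).trans
            (norm_le_pi_norm (fun i j => (F x i j + F x j i) / 2) i)
        · rw [hAx]
          exact Finset.single_le_sum (f := fun t : Fin 3 × Fin 3 => ‖(F x t.1 t.2 - F x t.2 t.1) / 2‖)
            (fun _ _ => norm_nonneg _) (Finset.mem_univ (i, j))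
    _ ≤ S + eLpNorm A (ENNReal.ofReal q) (volume.restrict Q3) := by
        refine (eLpNorm_add_le hmS hmA hq1).trans (le_of_eq ?_)
        rw [eLpNorm_norm]
    _ ≤ D + ∑ t : Fin 3 × Fin 3, ENNReal.ofReal (C1 * (48000 * (CG + 1) * D.toReal)) := by
        refine add_le_add le_self_add ((eLpNorm_sum_le (fun t _ => hm t.1 t.2) hq1).trans (Finset.sum_le_sum fun t _ => ?_))
        rw [eLpNorm_norm]
        exact hb t.1 t.2
    _ = ENNReal.ofReal (1 + 9 * (C1 * (48000 * (CG + 1)))) * D := by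
        rw [ENNReal.ofReal_add (by norm_num) (by positivity), add_mul, ENNReal.ofReal_one, one_mul]
        congr 1
        simp only [Finset.sum_const, Finset.card_univ, Fintype.card_prod, Fintype.card_fin, nsmul_eq_mul]
        rw [← mul_assoc C1, ENNReal.ofReal_mul (p := C1 * _) (by positivity), ENNReal.ofReal_toReal hDt,
          ENNReal.ofReal_mul (p := 9) (by norm_num), mul_assoc]
        norm_num

end KMS

/-- Korn–Maxwell–Sobolev inequality of the second kind (symmetric part, `1 < p < 3`):
there is `c = c(p) > 0` such that for all `F ∈ C^∞(closure Q; ℝ^{3×3})` whose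
Frobenius product with every skew-symmetric matrix integrates to zero over `Q`, one has
`‖F‖_{L^{3p/(3−p)}(Q)} ≤ c(‖F^sym‖_{L^{3p/(3−p)}(Q)} + ‖curl F‖_{Lᵖ(Q)})`. -/
theorem korn_maxwell_sobolev_second_kind (p : ℝ) (hp1 : 1 < p) (hp3 : p < 3) :
    ∃ c : ℝ, 0 < c ∧
      ∀ F : (Fin 3 → ℝ) → Fin 3 → Fin 3 → ℝ,
        ContDiffOn ℝ (⊤ : ℕ∞) F (closure Q3) →
        (∀ P : Fin 3 → Fin 3 → ℝ, (∀ i j, P j i = -P i j) →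
          ∫ x in Q3, (∑ i, ∑ j, F x i j * P i j) = 0) →
          eLpNorm F (ENNReal.ofReal (3 * p / (3 - p))) (volume.restrict Q3) ≤
            ENNReal.ofReal c *
              (eLpNorm (fun x => fun i j => (F x i j + F x j i) / 2)
                  (ENNReal.ofReal (3 * p / (3 - p))) (volume.restrict Q3) +
                eLpNorm (fun x => mcurl F x) (ENNReal.ofReal p)
                  (volume.restrict Q3)) := by
  exact KMS.main_bound p hp1 hp3
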